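/- For every nonnegative integer n and every k with 0 ≤ k ≤ 6, N(k,7,7n+5) = p(7n+5)/7. -/

import Mathlib

/-- The rank of a partition: its largest part minus its number of parts. -/
def Nat.Partition.rank {n : ℕ} (π : Nat.Partition n) : ℤ :=
  (π.parts.sup : ℤ) - (Multiset.card π.parts : ℤ)

namespace RankSeven

open Multiset

theorem map_succ_filter_pred_add_replicate (s : Multiset ℕ) (hs : ∀ i ∈ s, 0 < i) :
    (filter (0 < ·) (s.map Nat.pred)).map Nat.succ +
      replicate (card s - card (filter (0 < ·) (s.map Nat.pred))) 1 = s := by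
  induction s using Multiset.induction_on with
  | empty => simp
  | cons a s ih =>
    have ih := ih fun i hi => hs i (mem_cons_of_mem hi)
    have ha : 0 < a := hs a (mem_cons_self a s)
    have hle : card (filter (0 < ·) (s.map Nat.pred)) ≤ card s := by
      simpa using card_le_card (filter_le (0 < ·) (s.map Nat.pred))
    rw [map_cons, card_cons]
    rcases Nat.lt_or_ge 1 a with h | h
    · rw [filter_cons_of_pos _ (by simpa using (by omega : 0 < a - 1)), map_cons, card_cons, cons_add,
        Nat.add_sub_add_right, ih, Nat.succ_pred_eq_of_pos ha]
    · obtain rfl : a = 1 := by omega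
      rw [filter_cons_of_neg _ (by simp), Nat.succ_sub hle, replicate_succ, add_cons, ih]

theorem sum_map_pred_add_card (s : Multiset ℕ) (hs : ∀ i ∈ s, 0 < i) :
    (s.map Nat.pred).sum + card s = s.sum := by
  induction s using Multiset.induction_on with
  | empty => simp
  | cons a s ih =>
    have ih := ih fun i hi => hs i (mem_cons_of_mem hi)
    have ha : 0 < a := hs a (mem_cons_self a s)
    simp only [map_cons, sum_cons, card_cons, Nat.pred_eq_sub_one] at *
    omega

theorem sum_filter_pos (s : Multiset ℕ) : (filter (0 < ·) s).sum = s.sum := by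
  induction s using Multiset.induction_on with
  | empty => simp
  | cons a s ih =>
    rcases Nat.eq_zero_or_pos a with rfl | h
    · simp [ih]
    · rw [filter_cons_of_pos (p := (0 < ·)) _ h, sum_cons, sum_cons, ih]

/-- Remove the first column of a Ferrers diagram and add a new first row, `r` longer than
the removed column. -/
def columnToRow (r : ℤ) (s : Multiset ℕ) : Multiset ℕ :=
  filter (0 < ·) (((card s : ℤ) + r).toNat ::ₘ s.map Nat.pred)

/-- Remove the first row of a Ferrers diagram and add a new first column, `r` shorter than
the removed row. -/
def rowToColumn (r : ℤ) (u : Multiset ℕ) : Multiset ℕ :=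
  (u.erase u.sup).map Nat.succ +
    replicate (((u.sup : ℤ) - r).toNat - card (u.erase u.sup)) 1

theorem sup_mem_of_ne_zero {u : Multiset ℕ} (hu : u ≠ 0) : u.sup ∈ u := by
  induction u using Multiset.induction_on with
  | empty => exact absurd rfl hu
  | cons a s ih =>
    rcases eq_or_ne s 0 with rfl | hs
    · simp
    · rw [sup_cons]
      rcases le_total a s.sup with h | h
      · rw [sup_of_le_right h]
        exact mem_cons_of_mem (ih hs)
      · rw [sup_of_le_left h]
        exact mem_cons_self _ _

theorem card_add_nonneg {s : Multiset ℕ} {r : ℤ} (hs : ∀ i ∈ s, 0 < i)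
    (hsum : 0 ≤ (s.sum : ℤ) + r) (h : (s.sup : ℤ) - card s ≤ r + 1) :
    0 ≤ (card s : ℤ) + r := by
  rcases eq_or_ne s 0 with rfl | h0
  · simpa using hsum
  · have := hs _ (sup_mem_of_ne_zero h0)
    omega

theorem sum_columnToRow {s : Multiset ℕ} {r : ℤ} (hs : ∀ i ∈ s, 0 < i)
    (hsum : 0 ≤ (s.sum : ℤ) + r) (h : (s.sup : ℤ) - card s ≤ r + 1) :
    ((columnToRow r s).sum : ℤ) = s.sum + r := by
  have h1 := card_add_nonneg hs hsum h
  have h2 := sum_map_pred_add_card s hs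
  rw [columnToRow, sum_filter_pos, sum_cons]
  omega

theorem sup_columnToRow {s : Multiset ℕ} {r : ℤ} (h : (s.sup : ℤ) - card s ≤ r + 1) :
    (columnToRow r s).sup = ((card s : ℤ) + r).toNat := by
  apply le_antisymm
  · rw [Multiset.sup_le]
    intro b hb
    rw [columnToRow, mem_filter, mem_cons, mem_map] at hb
    rcases hb.1 with rfl | ⟨c, hc, rfl⟩
    · exact le_rfl
    · have := le_sup hc
      have h2 := hb.2
      simp only [Nat.pred_eq_sub_one] at *
      omega
  · rcases Nat.eq_zero_or_pos ((card s : ℤ) + r).toNat with h0 | h0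
    · simp [h0]
    · exact le_sup (by simp [columnToRow, h0])

theorem rank_columnToRow {s : Multiset ℕ} {r : ℤ} (hs : ∀ i ∈ s, 0 < i)
    (hsum : 0 ≤ (s.sum : ℤ) + r) (h : (s.sup : ℤ) - card s ≤ r + 1) :
    r - 1 ≤ ((columnToRow r s).sup : ℤ) - card (columnToRow r s) := by
  have h1 := card_add_nonneg hs hsum h
  rw [sup_columnToRow h]
  have h2 : card (columnToRow r s) ≤ card s + 1 := by
    refine (card_le_card (filter_le (0 < ·) _)).trans ?_
    simp
  omega

theorem rowToColumn_columnToRow {s : Multiset ℕ} {r : ℤ} (hs : ∀ i ∈ s, 0 < i)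
    (hsum : 0 ≤ (s.sum : ℤ) + r) (h : (s.sup : ℤ) - card s ≤ r + 1) :
    rowToColumn r (columnToRow r s) = s := by
  have h1 := card_add_nonneg hs hsum h
  have h2 : (columnToRow r s).erase (columnToRow r s).sup = filter (0 < ·) (s.map Nat.pred) := by
    rw [sup_columnToRow h, columnToRow]
    rcases Nat.eq_zero_or_pos ((card s : ℤ) + r).toNat with h0 | h0
    · rw [h0, filter_cons_of_neg _ (by simp), erase_of_notMem (by simp)]
    · rw [filter_cons_of_pos (p := (0 < ·)) _ h0, erase_cons_head]
  rw [rowToColumn, h2, sup_columnToRow h]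
  convert map_succ_filter_pred_add_replicate s hs using 4
  omega

theorem card_erase_sup_le {u : Multiset ℕ} {r : ℤ} (hsum : 0 ≤ (u.sum : ℤ) - r)
    (h : r - 1 ≤ (u.sup : ℤ) - card u) :
    (card (u.erase u.sup) : ℤ) ≤ u.sup - r := by
  rcases eq_or_ne u 0 with rfl | h0
  · simpa using hsum
  · have := card_erase_add_one (sup_mem_of_ne_zero h0)
    omega

theorem card_rowToColumn {u : Multiset ℕ} {r : ℤ} (hsum : 0 ≤ (u.sum : ℤ) - r)
    (h : r - 1 ≤ (u.sup : ℤ) - card u) :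
    (card (rowToColumn r u) : ℤ) = u.sup - r := by
  have h1 := card_erase_sup_le hsum h
  rw [rowToColumn, card_add, card_map, card_replicate]
  omega

theorem sum_map_succ (s : Multiset ℕ) : (s.map Nat.succ).sum = s.sum + card s := by
  induction s using Multiset.induction_on with
  | empty => simp
  | cons a s ih => simp [ih]; ring

theorem sum_rowToColumn {u : Multiset ℕ} {r : ℤ} (hsum : 0 ≤ (u.sum : ℤ) - r)
    (h : r - 1 ≤ (u.sup : ℤ) - card u) :
    ((rowToColumn r u).sum : ℤ) = u.sum - r := by
  have h1 := card_erase_sup_le hsum h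
  have h2 : u.sup + (u.erase u.sup).sum = u.sum := by
    rcases eq_or_ne u 0 with rfl | h0
    · simp
    · exact sum_erase (sup_mem_of_ne_zero h0)
  rw [rowToColumn, sum_add, sum_map_succ, sum_replicate, smul_eq_mul, mul_one]
  omega

theorem rank_rowToColumn {u : Multiset ℕ} {r : ℤ} (hsum : 0 ≤ (u.sum : ℤ) - r)
    (h : r - 1 ≤ (u.sup : ℤ) - card u) :
    ((rowToColumn r u).sup : ℤ) - card (rowToColumn r u) ≤ r + 1 := by
  rw [card_rowToColumn hsum h]
  have : (rowToColumn r u).sup ≤ u.sup + 1 := by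
    rw [Multiset.sup_le]
    intro b hb
    rw [rowToColumn, mem_add, mem_map, mem_replicate] at hb
    rcases hb with ⟨c, hc, rfl⟩ | ⟨-, rfl⟩
    · have := le_sup (mem_of_mem_erase hc)
      omega
    · omega
  omega

theorem columnToRow_rowToColumn {u : Multiset ℕ} {r : ℤ} (hu : ∀ i ∈ u, 0 < i)
    (hsum : 0 ≤ (u.sum : ℤ) - r) (h : r - 1 ≤ (u.sup : ℤ) - card u) :
    columnToRow r (rowToColumn r u) = u := by
  have h1 : (((card (rowToColumn r u) : ℤ)) + r).toNat = u.sup := by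
    rw [card_rowToColumn hsum h]
    omega
  have h2 : filter (0 < ·) ((rowToColumn r u).map Nat.pred) = u.erase u.sup := by
    rw [rowToColumn, Multiset.map_add, filter_add, Multiset.map_map, map_replicate]
    have h3 : filter (0 < ·) (replicate (((u.sup : ℤ) - r).toNat - card (u.erase u.sup))
        (Nat.pred 1)) = 0 := by
      rw [filter_eq_nil]
      intro a ha
      rw [eq_of_mem_replicate ha]
      simp
    rw [h3, add_zero]
    have h4 : (u.erase u.sup).map (Nat.pred ∘ Nat.succ) = u.erase u.sup := by
      simp
    rw [h4, filter_eq_self]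
    exact fun a ha => hu a (mem_of_mem_erase ha)
  rcases eq_or_ne u 0 with rfl | h0
  · rw [columnToRow, h1]
    rw [Multiset.sup_zero, filter_cons_of_neg _ (by simp), h2]
    simp
  · rw [columnToRow, h1, filter_cons_of_pos _ (hu _ (sup_mem_of_ne_zero h0)), h2,
      cons_erase (sup_mem_of_ne_zero h0)]

theorem pos_of_mem_columnToRow {s : Multiset ℕ} {r : ℤ} {i : ℕ} (hi : i ∈ columnToRow r s) :
    0 < i := (mem_filter.mp hi).2

theorem pos_of_mem_rowToColumn {u : Multiset ℕ} {r : ℤ} {i : ℕ} (hi : i ∈ rowToColumn r u) :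
    0 < i := by
  rw [rowToColumn, mem_add, mem_map, mem_replicate] at hi
  rcases hi with ⟨c, -, rfl⟩ | ⟨-, rfl⟩ <;> simp

theorem card_rank_le_eq_card_le_rank (r : ℤ) (n m : ℕ) (hnm : (m : ℤ) = n + r) :
    (Finset.univ.filter fun π : Nat.Partition n => π.rank ≤ r + 1).card =
      (Finset.univ.filter fun π : Nat.Partition m => r - 1 ≤ π.rank).card := by
  have hn (π : Nat.Partition n) : 0 ≤ (π.parts.sum : ℤ) + r := by
    rw [π.parts_sum]; omega
  have hm (π : Nat.Partition m) : 0 ≤ (π.parts.sum : ℤ) - r := by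
    rw [π.parts_sum]; omega
  refine Finset.card_bij'
    (fun π hπ => ⟨columnToRow r π.parts, pos_of_mem_columnToRow, ?_⟩)
    (fun π hπ => ⟨rowToColumn r π.parts, pos_of_mem_rowToColumn, ?_⟩) ?_ ?_ ?_ ?_
  · have := sum_columnToRow (fun i hi => π.parts_pos hi) (hn π) (Finset.mem_filter.mp hπ).2
    rw [π.parts_sum] at this
    omega
  · have := sum_rowToColumn (hm π) (Finset.mem_filter.mp hπ).2
    rw [π.parts_sum] at this
    omega
  · intro π hπ
    exact Finset.mem_filter.mpr ⟨Finset.mem_univ _,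
      rank_columnToRow (fun i hi => π.parts_pos hi) (hn π) (Finset.mem_filter.mp hπ).2⟩
  · intro π hπ
    exact Finset.mem_filter.mpr ⟨Finset.mem_univ _,
      rank_rowToColumn (hm π) (Finset.mem_filter.mp hπ).2⟩
  · intro π hπ
    ext1
    exact rowToColumn_columnToRow (fun i hi => π.parts_pos hi) (hn π) (Finset.mem_filter.mp hπ).2
  · intro π hπ
    ext1
    exact columnToRow_rowToColumn (fun i hi => π.parts_pos hi) (hm π) (Finset.mem_filter.mp hπ).2

/-- The number of partitions of `n` with rank at least `m`. -/
def countRankGe (m : ℤ) (n : ℕ) : ℕ :=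
  (Finset.univ.filter fun π : Nat.Partition n => m ≤ π.rank).card

/-- The number of partitions of `n` with rank at most `m`. -/
def countRankLe (m : ℤ) (n : ℕ) : ℕ :=
  (Finset.univ.filter fun π : Nat.Partition n => π.rank ≤ m).card

theorem countRankLe_add_countRankGe (m : ℤ) (n : ℕ) :
    countRankLe m n + countRankGe (m + 1) n = Fintype.card (Nat.Partition n) := by
  rw [countRankLe, countRankGe, ← Finset.card_univ,
    ← Finset.card_filter_add_card_filter_not (s := Finset.univ)
      (fun π : Nat.Partition n => π.rank ≤ m)]
  simp only [not_le, Int.add_one_le_iff]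

theorem sup_le_sum (s : Multiset ℕ) : s.sup ≤ s.sum :=
  Multiset.sup_le.mpr fun _ hb => le_sum_of_mem hb

theorem card_le_sum {s : Multiset ℕ} (hs : ∀ i ∈ s, 0 < i) : card s ≤ s.sum := by
  have := sum_map_pred_add_card s hs
  omega

theorem abs_rank_le {n : ℕ} (π : Nat.Partition n) : |π.rank| ≤ n ∧ (0 < n → |π.rank| < n) := by
  have h1 := sup_le_sum π.parts
  have h2 := card_le_sum fun i hi => π.parts_pos hi
  rw [π.parts_sum] at h1 h2
  unfold Nat.Partition.rank
  rw [abs_le, abs_lt]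
  refine ⟨by omega, fun hn => ?_⟩
  have h0 : π.parts ≠ 0 := by
    intro h
    have := π.parts_sum
    rw [h] at this
    simp at this
    omega
  have h3 := π.parts_pos (sup_mem_of_ne_zero h0)
  have h4 := card_pos.mpr h0
  omega

theorem countRankGe_eq_zero {m : ℤ} {n : ℕ} (hm : 1 ≤ m) (hn : n ≤ m) : countRankGe m n = 0 := by
  rw [countRankGe, Finset.card_eq_zero, Finset.filter_eq_empty_iff]
  intro π _ h
  have h1 := abs_rank_le π
  rw [abs_le, abs_lt] at h1
  omega

theorem countRankLe_eq_zero {m : ℤ} {n : ℕ} (hm : 1 ≤ m) (hn : n ≤ m) :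
    countRankLe (-m) n = 0 := by
  rw [countRankLe, Finset.card_eq_zero, Finset.filter_eq_empty_iff]
  intro π _ h
  have h1 := abs_rank_le π
  rw [abs_le, abs_lt] at h1
  omega

theorem countRankGe_recurrence (m : ℤ) (n k : ℕ) (hk : (n : ℤ) = k + (m + 1)) :
    countRankGe m n + countRankGe (m + 3) k = Fintype.card (Nat.Partition k) := by
  have h := card_rank_le_eq_card_le_rank (m + 1) k n hk
  rw [← countRankLe_add_countRankGe (m + 2) k, countRankLe, countRankGe]
  rw [add_sub_cancel_right, add_assoc] at h
  rw [← h, add_assoc m]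
  norm_num

theorem countRankLe_recurrence (m : ℤ) (n k : ℕ) (hk : (n : ℤ) = k + (m + 1)) :
    countRankLe (-m) n + countRankLe (-(m + 3)) k = Fintype.card (Nat.Partition k) := by
  have h := card_rank_le_eq_card_le_rank (-m - 1) n k (by omega)
  rw [← countRankLe_add_countRankGe (-(m + 3)) k, countRankLe, countRankGe]
  rw [sub_add_cancel] at h
  rw [h, add_comm, show -(m + 3) + 1 = -m - 1 - 1 by ring]

theorem countRankLe_neg (n : ℕ) : ∀ m : ℤ, 1 ≤ m → countRankLe (-m) n = countRankGe m n := by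
  induction n using Nat.strong_induction_on with
  | _ n ih =>
    intro m hm
    rcases le_or_gt (n : ℤ) m with h | h
    · rw [countRankGe_eq_zero hm h, countRankLe_eq_zero hm h]
    · obtain ⟨k, hk⟩ : ∃ k : ℕ, (n : ℤ) = k + (m + 1) := ⟨(n - (m + 1)).toNat, by omega⟩
      have h1 := countRankGe_recurrence m n k hk
      have h2 := countRankLe_recurrence m n k hk
      have h3 := ih k (by omega) (m + 3) (by omega)
      omega

theorem countRankGe_one_add (n : ℕ) :
    Fintype.card (Nat.Partition (n + 1)) + countRankGe 3 n =
      countRankGe 1 (n + 1) + Fintype.card (Nat.Partition n) := by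
  have h1 := countRankLe_add_countRankGe 0 (n + 1)
  have h2 := countRankLe_recurrence 0 (n + 1) n (by simp)
  have h3 := countRankLe_neg n 3 (by norm_num)
  norm_num at h1 h2 h3
  omega

theorem card_partition_le (n : ℕ) : Fintype.card (Nat.Partition n) ≤ 2 ^ n := by
  refine (Fintype.card_le_of_surjective _ Nat.Partition.ofComposition_surj).trans ?_
  rw [composition_card]
  exact Nat.pow_le_pow_right (by norm_num) (Nat.sub_le _ _)

theorem countRankGe_le (m : ℤ) (n : ℕ) : countRankGe m n ≤ 2 ^ n :=
  (Finset.card_filter_le _ _).trans (card_partition_le n)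

/-- The sum of the numbers of partitions of `n` with rank at least `c`, `c + 7`, `c + 14`, …. -/
def sumRankGe (c n : ℕ) : ℕ := ∑ j ∈ Finset.range (n + 1), countRankGe (c + 7 * j) n

theorem sum_ite_add_mul_le (c ρ : ℤ) (J : ℕ) :
    ∑ j ∈ Finset.range J, (if c + 7 * (j : ℤ) ≤ ρ then 1 else 0 : ℤ) =
      min (J : ℤ) (max ((ρ - c) / 7 + 1) 0) := by
  induction J with
  | zero => simp
  | succ J ih =>
    rw [Finset.sum_range_succ, ih]
    split_ifs <;> push_cast <;> omega

theorem sum_ite_add_mul_le_of_le {c ρ : ℤ} {n : ℕ} (hc : 0 ≤ c) (hρ : ρ ≤ n) :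
    ∑ j ∈ Finset.range (n + 1), (if c + 7 * (j : ℤ) ≤ ρ then 1 else 0 : ℤ) =
      max ((ρ - c) / 7 + 1) 0 := by
  rw [sum_ite_add_mul_le]
  push_cast
  omega

theorem cast_sumRankGe (c n : ℕ) :
    (sumRankGe c n : ℤ) = ∑ π : Nat.Partition n, ∑ j ∈ Finset.range (n + 1),
      (if (c : ℤ) + 7 * (j : ℤ) ≤ π.rank then 1 else 0 : ℤ) := by
  rw [sumRankGe, Finset.sum_comm]
  push_cast
  refine Finset.sum_congr rfl fun j _ => ?_
  rw [countRankGe, Finset.card_filter]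
  push_cast
  rfl

theorem cast_sumRankGe_eq_neg (c n : ℕ) (hc : 1 ≤ c) :
    (sumRankGe c n : ℤ) = ∑ π : Nat.Partition n, ∑ j ∈ Finset.range (n + 1),
      (if (c : ℤ) + 7 * (j : ℤ) ≤ -π.rank then 1 else 0 : ℤ) := by
  rw [sumRankGe, Finset.sum_comm]
  push_cast
  refine Finset.sum_congr rfl fun j _ => ?_
  rw [← countRankLe_neg _ _ (by omega), countRankLe, Finset.card_filter]
  push_cast
  refine Finset.sum_congr rfl fun π _ => ?_
  simp only [le_neg]

theorem card_rank_modEq_eq (n k : ℕ) (hk : 1 ≤ k) (hk6 : k ≤ 6) :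
    ((Finset.univ.filter fun π : Nat.Partition n => π.rank ≡ k [ZMOD 7]).card : ℤ) =
      sumRankGe k n - sumRankGe (k + 1) n + (sumRankGe (7 - k) n - sumRankGe (8 - k) n) := by
  rw [cast_sumRankGe, cast_sumRankGe, cast_sumRankGe_eq_neg _ _ (by omega),
    cast_sumRankGe_eq_neg _ _ (by omega), ← Finset.sum_sub_distrib, ← Finset.sum_sub_distrib,
    ← Finset.sum_add_distrib, Finset.card_filter]
  push_cast
  refine Finset.sum_congr rfl fun π _ => ?_
  have h1 := (abs_rank_le π).1
  rw [abs_le] at h1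
  rw [sum_ite_add_mul_le_of_le (by omega) h1.2, sum_ite_add_mul_le_of_le (by omega) h1.2,
    sum_ite_add_mul_le_of_le (by omega) (by omega), sum_ite_add_mul_le_of_le (by omega) (by omega)]
  clear h1
  unfold Int.ModEq
  generalize π.rank = ρ at *
  push_cast [hk6, show k ≤ 7 by omega, show k ≤ 8 by omega]
  interval_cases k <;> norm_num <;> split_ifs <;> omega

theorem sum_card_rank_modEq (n : ℕ) :
    ∑ k ∈ Finset.range 7,
      (Finset.univ.filter fun π : Nat.Partition n => π.rank ≡ k [ZMOD 7]).card =
      Fintype.card (Nat.Partition n) := by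
  rw [← Finset.card_univ, Finset.card_eq_sum_card_fiberwise
    (f := fun π : Nat.Partition n => (π.rank % 7).toNat) (t := Finset.range 7)]
  · refine Finset.sum_congr rfl fun k hk => ?_
    congr 1
    refine Finset.filter_congr fun π _ => ?_
    rw [Finset.mem_range] at hk
    unfold Int.ModEq
    omega
  · intro π _
    simp
    omega

theorem card_rank_modEq_of_sumRankGe {n : ℕ}
    (h : ∀ i : ℕ, i < 3 → (3 - i : ℤ) * Fintype.card (Nat.Partition n) =
      7 * (sumRankGe (i + 1) n - sumRankGe (7 - i) n)) {k : ℕ} (hk : k < 7) :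
    7 * (Finset.univ.filter fun π : Nat.Partition n => π.rank ≡ k [ZMOD 7]).card =
      Fintype.card (Nat.Partition n) := by
  have h0 := h 0 (by norm_num)
  have h1 := h 1 (by norm_num)
  have h2 := h 2 (by norm_num)
  have hs := sum_card_rank_modEq n
  have e1 := card_rank_modEq_eq n 1 (by norm_num) (by norm_num)
  have e2 := card_rank_modEq_eq n 2 (by norm_num) (by norm_num)
  have e3 := card_rank_modEq_eq n 3 (by norm_num) (by norm_num)
  have e4 := card_rank_modEq_eq n 4 (by norm_num) (by norm_num)
  have e5 := card_rank_modEq_eq n 5 (by norm_num) (by norm_num)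
  have e6 := card_rank_modEq_eq n 6 (by norm_num) (by norm_num)
  simp only [Finset.sum_range_succ, Finset.sum_range_zero] at hs
  norm_num at h0 h1 h2 hs e1 e2 e3 e4 e5 e6
  interval_cases k <;> norm_num <;> omega

/-- The generating function of the partition numbers, evaluated at `x`. -/
noncomputable def partitionGF (x : ℂ) : ℂ := ∑' n : ℕ, (Fintype.card (Nat.Partition n) : ℂ) * x ^ n

/-- The generating function of the numbers of partitions with rank at least `m`, at `x`. -/
noncomputable def rankGeGF (m : ℤ) (x : ℂ) : ℂ := ∑' n : ℕ, (countRankGe m n : ℂ) * x ^ n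

theorem summable_mul_pow_of_le {b : ℕ → ℕ} (hb : ∀ n, b n ≤ 2 ^ n) {x : ℂ} (hx : ‖x‖ < 1 / 4) :
    Summable fun n => (b n : ℂ) * x ^ n := by
  refine Summable.of_norm_bounded (g := fun n => (2 * ‖x‖) ^ n)
    (summable_geometric_of_lt_one (by positivity) (by linarith)) fun n => ?_
  rw [norm_mul, norm_pow, mul_pow, Complex.norm_natCast]
  gcongr
  exact_mod_cast hb n

theorem summable_partitionGF {x : ℂ} (hx : ‖x‖ < 1 / 4) :
    Summable fun n => (Fintype.card (Nat.Partition n) : ℂ) * x ^ n :=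
  summable_mul_pow_of_le card_partition_le hx

theorem summable_rankGeGF (m : ℤ) {x : ℂ} (hx : ‖x‖ < 1 / 4) :
    Summable fun n => (countRankGe m n : ℂ) * x ^ n :=
  summable_mul_pow_of_le (countRankGe_le m) hx

theorem norm_rankGeGF_le (m : ℤ) {x : ℂ} (hx : ‖x‖ < 1 / 4) : ‖rankGeGF m x‖ ≤ 2 := by
  have h := tsum_of_norm_bounded (f := fun n => (countRankGe m n : ℂ) * x ^ n)
    (hasSum_geometric_of_lt_one (r := 2 * ‖x‖) (by positivity) (by linarith)) fun n => by
      rw [norm_mul, norm_pow, mul_pow, Complex.norm_natCast]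
      gcongr
      exact_mod_cast countRankGe_le m n
  refine h.trans ?_
  rw [inv_le_comm₀ (by linarith) (by norm_num)]
  linarith

theorem rankGeGF_recurrence {m : ℕ} (hm : 1 ≤ m) {x : ℂ} (hx : ‖x‖ < 1 / 4) :
    rankGeGF m x = x ^ (m + 1) * (partitionGF x - rankGeGF (m + 3 : ℕ) x) := by
  rw [rankGeGF, ← (summable_rankGeGF m hx).sum_add_tsum_nat_add (m + 1), Finset.sum_eq_zero,
    zero_add, partitionGF, rankGeGF, ← (summable_partitionGF hx).tsum_sub (summable_rankGeGF _ hx),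
    ← tsum_mul_left]
  · refine tsum_congr fun k => ?_
    have h := countRankGe_recurrence m (k + (m + 1)) k (by push_cast; ring)
    rw [← h]
    push_cast
    ring
  · intro n hn
    rw [Finset.mem_range] at hn
    rw [countRankGe_eq_zero (by omega) (by omega)]
    simp

/-- The terms of the signed series giving the proportion of partitions with rank at least `c`. -/
noncomputable def rankTerm (c : ℕ) (x : ℂ) (k : ℕ) : ℂ :=
  (-1) ^ k * x ^ ((k + 1) * c + 3 * (k + 1).choose 2 + (k + 1))

theorem norm_rankTerm_le (c : ℕ) {x : ℂ} (hx : ‖x‖ < 1) (k : ℕ) :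
    ‖rankTerm c x k‖ ≤ ‖x‖ ^ c * ‖x‖ ^ k := by
  rw [rankTerm, norm_mul, norm_pow, norm_pow, norm_neg, norm_one, one_pow, one_mul, ← pow_add]
  refine pow_le_pow_of_le_one (norm_nonneg x) hx.le ?_
  nlinarith

theorem summable_rankTerm (c : ℕ) {x : ℂ} (hx : ‖x‖ < 1) : Summable (rankTerm c x) :=
  Summable.of_norm_bounded ((summable_geometric_of_lt_one (norm_nonneg x) hx).mul_left _)
    (norm_rankTerm_le c hx)

theorem rankTerm_succ (c : ℕ) (x : ℂ) (k : ℕ) :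
    rankTerm c x (k + 1) = -(x ^ (c + 1) * rankTerm (c + 3) x k) := by
  rw [rankTerm, rankTerm, Nat.choose_succ_succ' (k + 1) 1, Nat.choose_one_right]
  ring

theorem tsum_rankTerm_recurrence (c : ℕ) {x : ℂ} (hx : ‖x‖ < 1) :
    ∑' k, rankTerm c x k = x ^ (c + 1) * (1 - ∑' k, rankTerm (c + 3) x k) := by
  rw [(summable_rankTerm c hx).tsum_eq_zero_add]
  simp only [rankTerm_succ]
  rw [tsum_neg, tsum_mul_left]
  simp [rankTerm]
  ring

theorem rankGeGF_eq {m : ℕ} (hm : 1 ≤ m) {x : ℂ} (hx : ‖x‖ < 1 / 4) :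
    rankGeGF m x = partitionGF x * ∑' k, rankTerm m x k := by
  set δ : ℕ → ℂ := fun c => rankGeGF c x - partitionGF x * ∑' k, rankTerm c x k with hδ
  have hrec (c : ℕ) (hc : 1 ≤ c) : δ c = -(x ^ (c + 1) * δ (c + 3)) := by
    simp only [hδ]
    rw [rankGeGF_recurrence hc hx, tsum_rankTerm_recurrence c (by linarith)]
    ring
  have hbound (c : ℕ) : ‖δ c‖ ≤ 2 + ‖partitionGF x‖ * (1 - ‖x‖)⁻¹ := by
    refine (norm_sub_le _ _).trans (add_le_add (norm_rankGeGF_le _ hx) ?_)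
    rw [norm_mul]
    gcongr
    refine tsum_of_norm_bounded (hasSum_geometric_of_lt_one (norm_nonneg x) (by linarith))
      fun k => (norm_rankTerm_le c (by linarith) k).trans ?_
    exact mul_le_of_le_one_left (by positivity) (pow_le_one₀ (norm_nonneg x) (by linarith))
  have hiter (K : ℕ) : ∀ c, 1 ≤ c → ‖δ c‖ ≤ ‖x‖ ^ K * (2 + ‖partitionGF x‖ * (1 - ‖x‖)⁻¹) := by
    induction K with
    | zero => intro c _; simpa using hbound c
    | succ K ih =>
      intro c hc
      rw [hrec c hc, norm_neg, norm_mul, norm_pow, pow_succ' _ K, mul_assoc]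
      refine mul_le_mul ?_ (ih (c + 3) (by omega)) (norm_nonneg _) (norm_nonneg _)
      rw [pow_succ]
      exact mul_le_of_le_one_left (norm_nonneg x) (pow_le_one₀ (norm_nonneg x) (by linarith))
  have hlim : Filter.Tendsto (fun K : ℕ => ‖x‖ ^ K * (2 + ‖partitionGF x‖ * (1 - ‖x‖)⁻¹))
      Filter.atTop (nhds 0) := by
    simpa using (tendsto_pow_atTop_nhds_zero_of_lt_one (norm_nonneg x)
      (by linarith)).mul_const (2 + ‖partitionGF x‖ * (1 - ‖x‖)⁻¹)
  have h0 : ‖δ m‖ ≤ 0 := ge_of_tendsto' hlim fun K => hiter K m hm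
  exact sub_eq_zero.mp (norm_le_zero_iff.mp h0)

theorem partitionGF_mul_one_sub {x : ℂ} (hx : ‖x‖ < 1 / 4) :
    partitionGF x * (1 - ∑' k, rankTerm 1 x k - ∑' k, rankTerm 0 x k) = 1 := by
  have h1 : partitionGF x = 1 + ∑' n : ℕ, (Fintype.card (Nat.Partition (n + 1)) : ℂ) * x ^ (n + 1) := by
    rw [partitionGF, (summable_partitionGF hx).tsum_eq_zero_add]
    simp
  have h2 : rankGeGF 1 x = ∑' n : ℕ, (countRankGe 1 (n + 1) : ℂ) * x ^ (n + 1) := by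
    rw [rankGeGF, (summable_rankGeGF 1 hx).tsum_eq_zero_add,
      countRankGe_eq_zero (by norm_num) (by norm_num)]
    simp
  have h3 : partitionGF x = 1 + x * partitionGF x + rankGeGF 1 x - x * rankGeGF 3 x := by
    have s1 := (summable_nat_add_iff 1).mpr (summable_partitionGF hx)
    have s2 := (summable_nat_add_iff 1).mpr (summable_rankGeGF 1 hx)
    have s3 := (summable_rankGeGF 3 hx).mul_left x
    have s4 := (summable_partitionGF hx).mul_left x
    have h4 : ∑' n : ℕ, (Fintype.card (Nat.Partition (n + 1)) : ℂ) * x ^ (n + 1) +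
        x * rankGeGF 3 x = rankGeGF 1 x + x * partitionGF x := by
      rw [h2, rankGeGF, partitionGF, ← tsum_mul_left, ← tsum_mul_left, ← s1.tsum_add s3,
        ← s2.tsum_add s4]
      refine tsum_congr fun n => ?_
      have : (Fintype.card (Nat.Partition (n + 1)) : ℂ) + countRankGe 3 n =
          countRankGe 1 (n + 1) + Fintype.card (Nat.Partition n) := by
        exact_mod_cast countRankGe_one_add n
      linear_combination x ^ (n + 1) * this
    linear_combination h1 + h4
  have h4 := rankGeGF_eq (m := 1) le_rfl hx
  have h5 := rankGeGF_eq (m := 3) (by norm_num) hx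
  have h6 := tsum_rankTerm_recurrence 0 (x := x) (by linarith)
  norm_num at h4 h5 h6
  rw [h4, h5] at h3
  rw [h6]
  linear_combination h3

/-- The Lambert type series obtained by summing the series of `rankTerm (c + 7 * j)` over `j`. -/
noncomputable def lambertSeries (c : ℕ) (x : ℂ) : ℂ :=
  ∑' k, rankTerm c x k / (1 - x ^ (7 * (k + 1)))

theorem hasSum_rankTerm_lambertSeries (c : ℕ) {x : ℂ} (hx : ‖x‖ < 1) :
    HasSum (fun j : ℕ => ∑' k, rankTerm (c + 7 * j) x k) (lambertSeries c x) := by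
  have hs : Summable fun jk : ℕ × ℕ => rankTerm (c + 7 * jk.1) x jk.2 := by
    have hg := summable_geometric_of_lt_one (norm_nonneg x) hx
    refine Summable.of_norm_bounded (hg.mul_of_nonneg hg (fun _ => by positivity)
      (fun _ => by positivity)) fun jk => (norm_rankTerm_le _ hx _).trans ?_
    gcongr ?_ * _
    exact pow_le_pow_of_le_one (norm_nonneg x) hx.le (by omega)
  have h2 (k : ℕ) : ∑' j, rankTerm (c + 7 * j) x k = rankTerm c x k / (1 - x ^ (7 * (k + 1))) := by
    have hy : ‖x ^ (7 * (k + 1))‖ < 1 := by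
      rw [norm_pow]
      exact pow_lt_one₀ (norm_nonneg x) hx (by omega)
    rw [div_eq_mul_inv, ← tsum_geometric_of_norm_lt_one hy, ← tsum_mul_left]
    refine tsum_congr fun j => ?_
    rw [rankTerm, rankTerm]
    ring
  rw [lambertSeries]
  simp only [← h2]
  rw [Summable.tsum_comm (f := fun j k => rankTerm (c + 7 * j) x k) hs]
  exact hs.prod.hasSum

theorem hasSum_sumRankGe {c : ℕ} (hc : 1 ≤ c) {x : ℂ} (hx : ‖x‖ < 1 / 4) :
    HasSum (fun n => (sumRankGe c n : ℂ) * x ^ n) (partitionGF x * lambertSeries c x) := by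
  have hs : Summable fun nj : ℕ × ℕ => (countRankGe (c + 7 * nj.2) nj.1 : ℂ) * x ^ nj.1 := by
    refine Summable.of_norm_bounded ((summable_geometric_of_lt_one (r := 4 * ‖x‖) (by positivity)
      (by linarith)).mul_of_nonneg summable_geometric_two (fun _ => by positivity)
      (fun _ => by positivity)) fun nj => ?_
    rcases lt_or_ge nj.1 nj.2 with h | h
    · rw [countRankGe_eq_zero (by omega) (by omega)]
      rw [Nat.cast_zero, zero_mul, norm_zero]
      positivity
    · rw [norm_mul, norm_pow, Complex.norm_natCast, mul_pow, mul_right_comm]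
      gcongr
      have h1 : (countRankGe (c + 7 * nj.2) nj.1 : ℝ) ≤ 2 ^ nj.1 := by
        exact_mod_cast countRankGe_le _ _
      refine h1.trans ?_
      have h2 : (2 : ℝ) ^ nj.2 ≤ 2 ^ nj.1 := pow_le_pow_right₀ (by norm_num) h
      rw [one_div, inv_pow, ← div_eq_mul_inv, le_div_iff₀ (by positivity)]
      calc (2 : ℝ) ^ nj.1 * 2 ^ nj.2 ≤ 2 ^ nj.1 * 2 ^ nj.1 := by gcongr
        _ = 4 ^ nj.1 := by rw [← mul_pow]; norm_num
  have h1 (n : ℕ) : (sumRankGe c n : ℂ) * x ^ n =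
      ∑' j : ℕ, (countRankGe (c + 7 * j) n : ℂ) * x ^ n := by
    rw [tsum_eq_sum (s := Finset.range (n + 1)), sumRankGe, Nat.cast_sum, Finset.sum_mul]
    intro j hj
    rw [Finset.mem_range] at hj
    rw [countRankGe_eq_zero (by omega) (by omega)]
    simp
  have h2 : partitionGF x * lambertSeries c x =
      ∑' (n : ℕ) (j : ℕ), (countRankGe (c + 7 * j) n : ℂ) * x ^ n := by
    rw [← (hasSum_rankTerm_lambertSeries c (by linarith : ‖x‖ < 1)).tsum_eq, ← tsum_mul_left,
      ← Summable.tsum_comm (f := fun n (j : ℕ) => (countRankGe (c + 7 * j) n : ℂ) * x ^ n) hs]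
    refine tsum_congr fun j => ?_
    rw [← rankGeGF_eq (by omega) hx]
    push_cast
    rfl
  simp only [h1]
  rw [h2]
  exact hs.prod.hasSum

open Set Metric

/-- The open annulus of radii `p` and `p⁻¹` around the origin. -/
def annulus (p : ℝ) : Set ℂ := {z | p < ‖z‖ ∧ ‖z‖ < p⁻¹}

theorem isOpen_annulus (p : ℝ) : IsOpen (annulus p) :=
  (isOpen_lt continuous_const continuous_norm).inter (isOpen_lt continuous_norm continuous_const)

/-- Holomorphic functions on an annulus satisfying `F (p z) = χ z⁻ᵈ F z`. -/
structure IsQuasiPeriodic (p : ℝ) (d : ℕ) (χ : ℂ) (F : ℂ → ℂ) : Prop where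
  differentiableOn : DifferentiableOn ℂ F (annulus p)
  map_mul : ∀ z : ℂ, 1 < ‖z‖ → ‖z‖ < p⁻¹ → F (p * z) = χ * z ^ (-(d : ℤ)) * F z

/-- The `k`-th Laurent coefficient of `F`, up to a factor `2πi`, computed on the circle of
radius `r`. -/
noncomputable def laurentCoeff (F : ℂ → ℂ) (r : ℝ) (k : ℤ) : ℂ :=
  ∮ z in C(0, r), F z * z ^ (-k - 1)

theorem eq_zero_of_laurentCoeff_eq_zero {F : ℂ → ℂ} {r : ℝ} (hr : 0 < r)
    (hF : ContinuousOn F (sphere 0 r)) (h : ∀ k, laurentCoeff F r k = 0) {z : ℂ} (hz : ‖z‖ = r) :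
    F z = 0 := by
  have : Fact (0 < 2 * Real.pi) := ⟨Real.two_pi_pos⟩
  have hper : Function.Periodic (fun θ : ℝ => F (circleMap 0 r θ)) (2 * Real.pi) := fun θ => by
    simp only [periodic_circleMap 0 r θ]
  have hcont : Continuous (fun θ : ℝ => F (circleMap 0 r θ)) :=
    hF.comp_continuous (continuous_circleMap 0 r) fun θ => circleMap_mem_sphere 0 hr.le θ
  let f : C(AddCircle (2 * Real.pi), ℂ) := ⟨hper.lift, continuous_coinduced_dom.mpr hcont⟩
  have hcoef : fourierCoeff f = 0 := by
    funext k
    rw [fourierCoeff_eq_intervalIntegral _ _ 0, zero_add]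
    have hk := h k
    rw [laurentCoeff, circleIntegral] at hk
    have e : (fun θ : ℝ => deriv (circleMap 0 r) θ • (F (circleMap 0 r θ) *
        circleMap 0 r θ ^ (-k - 1))) = fun θ : ℝ => (Complex.I * (r : ℂ) ^ (-k)) *
        ((fourier (-k) (θ : AddCircle (2 * Real.pi)) : ℂ) • f (θ : AddCircle (2 * Real.pi))) := by
      funext θ
      have hf : f (θ : AddCircle (2 * Real.pi)) = F (circleMap 0 r θ) := rfl
      have h0 : circleMap 0 r θ ≠ 0 := circleMap_ne_center hr.ne'
      rw [hf, deriv_circleMap, fourier_coe_apply, smul_eq_mul, smul_eq_mul, zpow_sub_one₀ h0]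
      have h1 : circleMap 0 r θ ^ (-k) = (r : ℂ) ^ (-k) *
          Complex.exp (2 * Real.pi * Complex.I * (-k : ℤ) * θ / (2 * Real.pi : ℝ)) := by
        rw [circleMap, zero_add, mul_zpow, ← Complex.exp_int_mul]
        congr 2
        push_cast
        have : (Real.pi : ℂ) ≠ 0 := by exact_mod_cast Real.pi_ne_zero
        field_simp
      rw [h1]
      field_simp
    rw [e, intervalIntegral.integral_const_mul] at hk
    have h2 : (Complex.I * (r : ℂ) ^ (-k)) ≠ 0 :=
      mul_ne_zero Complex.I_ne_zero (zpow_ne_zero _ (by exact_mod_cast hr.ne'))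
    rw [(mul_eq_zero.mp hk).resolve_left h2]
    simp
  have hsum := hasSum_fourier_series_of_summable (f := f) (by rw [hcoef]; exact summable_zero)
  rw [hcoef] at hsum
  have hf0 : f = 0 := by
    refine hsum.unique ?_
    simp
  obtain ⟨θ, rfl⟩ : ∃ θ, circleMap 0 r θ = z :=
    ⟨z.arg, by rw [circleMap, zero_add, ← hz]; exact Complex.norm_mul_exp_arg_mul_I z⟩
  exact congrArg (fun g : C(AddCircle (2 * Real.pi), ℂ) => g (θ : AddCircle (2 * Real.pi))) hf0

theorem laurentCoeff_congr_radius {p : ℝ} (hp : 0 < p) {F : ℂ → ℂ}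
    (hF : DifferentiableOn ℂ F (annulus p)) {r s : ℝ} (hr : p < r) (hrs : r ≤ s) (hs : s < p⁻¹)
    (k : ℤ) : laurentCoeff F s k = laurentCoeff F r k := by
  have hG : DifferentiableOn ℂ (fun z => F z * z ^ (-k - 1)) (annulus p) := by
    refine hF.mul fun z hz => ?_
    have h0 : z ≠ 0 := norm_pos_iff.mp (hp.trans hz.1)
    exact (differentiableAt_zpow.mpr (Or.inl h0)).differentiableWithinAt
  refine Complex.circleIntegral_eq_of_differentiable_on_annulus_off_countable (hp.trans hr) hrs
    countable_empty (hG.continuousOn.mono ?_) ?_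
  · rintro z ⟨h1, h2⟩
    rw [mem_closedBall_zero_iff] at h1
    rw [mem_ball_zero_iff, not_lt] at h2
    exact ⟨hr.trans_le h2, h1.trans_lt hs⟩
  · rintro z ⟨⟨h1, h2⟩, -⟩
    rw [mem_ball_zero_iff] at h1
    rw [mem_closedBall_zero_iff, not_le] at h2
    exact hG.differentiableAt ((isOpen_annulus p).mem_nhds ⟨hr.trans h2, h1.trans hs⟩)

theorem laurentCoeff_mul_radius {p : ℝ} (hp : 0 < p) {d : ℕ} {χ : ℂ} {F : ℂ → ℂ}
    (hF : IsQuasiPeriodic p d χ F) {r : ℝ} (hr : 1 < r) (hr' : r < p⁻¹) (k : ℤ) :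
    laurentCoeff F (p * r) k = χ * (p : ℂ) ^ (-k) * laurentCoeff F r (k + d) := by
  rw [laurentCoeff, laurentCoeff, circleIntegral, circleIntegral,
    ← intervalIntegral.integral_const_mul]
  congr 1
  funext θ
  have hc : circleMap 0 (p * r) θ = p * circleMap 0 r θ := by
    simp [circleMap, mul_assoc]
  have h0 : circleMap 0 r θ ≠ 0 := circleMap_ne_center (by linarith)
  have hp0 : (p : ℂ) ≠ 0 := by exact_mod_cast hp.ne'
  have hn : ‖circleMap 0 r θ‖ = r := by rw [norm_circleMap_zero, abs_of_pos (by linarith)]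
  rw [deriv_circleMap, deriv_circleMap, hc, hF.map_mul _ (by rw [hn]; exact hr)
    (by rw [hn]; exact hr'), mul_zpow]
  have e1 : (p : ℂ) ^ (-k - 1) = p ^ (-k) * (p : ℂ)⁻¹ := zpow_sub_one₀ hp0 _
  have e2 : circleMap 0 r θ ^ (-(k + (d : ℤ)) - 1) =
      circleMap 0 r θ ^ (-(d : ℤ)) * circleMap 0 r θ ^ (-k - 1) := by
    rw [← zpow_add₀ h0]
    congr 1
    ring
  rw [e1, e2]
  simp only [smul_eq_mul]
  field_simp

theorem laurentCoeff_eq_mul {p : ℝ} (hp : 0 < p) {d : ℕ} {χ : ℂ} {F : ℂ → ℂ}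
    (hF : IsQuasiPeriodic p d χ F) {r : ℝ} (hr : 1 < r) (hr' : r < p⁻¹) (k : ℤ) :
    laurentCoeff F r k = χ * (p : ℂ) ^ (-k) * laurentCoeff F r (k + d) := by
  rw [← laurentCoeff_mul_radius hp hF hr hr']
  refine laurentCoeff_congr_radius hp hF.differentiableOn ?_ ?_ hr' k
  · nlinarith
  · have : p < 1 := by
      rw [← one_lt_inv₀ hp]
      exact hr.trans hr'
    nlinarith

theorem IsQuasiPeriodic.eq_zero {p : ℝ} (hp : 0 < p) {d : ℕ} {χ : ℂ} (hχ : χ ≠ 0)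
    {F : ℂ → ℂ} (hF : IsQuasiPeriodic p d χ F) {r : ℝ} (hr : 1 < r) (hr' : r < p⁻¹)
    (hd : 0 < d) (l : ℤ) (h : ∀ k : ℤ, l ≤ k → k < l + d → laurentCoeff F r k = 0)
    {z : ℂ} (hz : z ∈ annulus p) : F z = 0 := by
  have hp0 : (p : ℂ) ≠ 0 := by exact_mod_cast hp.ne'
  have hstep (k : ℤ) : laurentCoeff F r k = 0 ↔ laurentCoeff F r (k + d) = 0 := by
    rw [laurentCoeff_eq_mul hp hF hr hr' k]
    simp [hχ, zpow_ne_zero _ hp0]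
  have hall (k : ℤ) : laurentCoeff F r k = 0 := by
    have key (m : ℤ) : ∀ j : ℤ, laurentCoeff F r j = 0 ↔ laurentCoeff F r (j + m * d) = 0 := by
      induction m using Int.induction_on with
      | zero => simp
      | succ m ih => intro j; rw [ih, hstep, add_mul, one_mul, add_assoc]
      | pred m ih =>
        intro j
        rw [ih, hstep (j + (-(m : ℤ) - 1) * d)]
        ring_nf
    have hd' : (0 : ℤ) < d := by exact_mod_cast hd
    rw [key (-((k - l) / d))]
    have h1 := Int.emod_nonneg (k - l) hd'.ne'
    have h2 := Int.emod_lt_of_pos (k - l) hd'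
    have h3 := Int.emod_add_mul_ediv (k - l) d
    apply h <;> nlinarith
  have hz0 : 0 < ‖z‖ := hp.trans hz.1
  refine eq_zero_of_laurentCoeff_eq_zero hz0 (hF.differentiableOn.continuousOn.mono ?_) ?_ rfl
  · intro w hw
    rw [mem_sphere_zero_iff_norm] at hw
    exact ⟨hw ▸ hz.1, hw ▸ hz.2⟩
  · have hpr : p < r := by
      have : p < 1 := by
        rw [← one_lt_inv₀ hp]
        exact hr.trans hr'
      linarith
    intro k
    rcases le_total ‖z‖ r with h1 | h1
    · rw [← laurentCoeff_congr_radius hp hF.differentiableOn hz.1 h1 hr', hall]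
    · rw [laurentCoeff_congr_radius hp hF.differentiableOn hpr h1 hz.2, hall]

theorem circleIntegrable_laurentCoeff {p : ℝ} (hp : 0 < p) {F : ℂ → ℂ}
    (hF : DifferentiableOn ℂ F (annulus p)) {r : ℝ} (hr : p < r) (hr' : r < p⁻¹) (k : ℤ) :
    CircleIntegrable (fun z => F z * z ^ (-k - 1)) 0 r := by
  have h (z : ℂ) (hz : z ∈ sphere (0 : ℂ) r) : z ∈ annulus p := by
    rw [mem_sphere_zero_iff_norm] at hz
    exact ⟨hz ▸ hr, hz ▸ hr'⟩
  refine ContinuousOn.circleIntegrable (hp.trans hr).le ((hF.continuousOn.mono h).mul ?_)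
  intro z hz
  have h0 : z ≠ 0 := norm_pos_iff.mp (hp.trans (h z hz).1)
  exact (continuousAt_zpow₀ z _ (Or.inl h0)).continuousWithinAt

theorem laurentCoeff_sum {p : ℝ} (hp : 0 < p) {ι : Type*} (s : Finset ι) (c : ι → ℂ)
    {F : ι → ℂ → ℂ} (hF : ∀ i, DifferentiableOn ℂ (F i) (annulus p)) {r : ℝ} (hr : p < r)
    (hr' : r < p⁻¹) (k : ℤ) :
    laurentCoeff (fun z => ∑ i ∈ s, c i * F i z) r k = ∑ i ∈ s, c i * laurentCoeff (F i) r k := by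
  simp only [laurentCoeff, Finset.sum_mul]
  have hi (i : ι) : CircleIntegrable (fun z => c i * F i z * z ^ (-k - 1)) 0 r := by
    simp only [mul_assoc]
    exact (circleIntegrable_laurentCoeff hp (hF i) hr hr' k).const_mul (c i)
  rw [circleIntegral.integral_fun_sum fun i _ => hi i]
  refine Finset.sum_congr rfl fun i _ => ?_
  simp only [mul_assoc, circleIntegral.integral_const_mul]

theorem IsQuasiPeriodic.sum {p : ℝ} {d : ℕ} {χ : ℂ} {ι : Type*} (s : Finset ι) (c : ι → ℂ)
    {F : ι → ℂ → ℂ} (hF : ∀ i, IsQuasiPeriodic p d χ (F i)) :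
    IsQuasiPeriodic p d χ (fun z => ∑ i ∈ s, c i * F i z) where
  differentiableOn := DifferentiableOn.fun_sum fun i _ =>
    (hF i).differentiableOn.const_mul (c i)
  map_mul z hz hz' := by
    rw [Finset.mul_sum]
    refine Finset.sum_congr rfl fun i _ => ?_
    rw [(hF i).map_mul z hz hz']
    ring

theorem exists_linear_relation {p : ℝ} (hp : 0 < p) (hp1 : p < 1) {d : ℕ} (hd : 0 < d) {χ : ℂ}
    (hχ : χ ≠ 0) {F : Fin (d + 1) → ℂ → ℂ} (hF : ∀ i, IsQuasiPeriodic p d χ (F i)) :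
    ∃ c : Fin (d + 1) → ℂ, c ≠ 0 ∧ ∀ z ∈ annulus p, ∑ i, c i * F i z = 0 := by
  obtain ⟨r, hr, hr'⟩ := exists_between ((one_lt_inv₀ hp).mpr hp1)
  have hdep : ¬ LinearIndependent ℂ
      (fun (i : Fin (d + 1)) (k : Fin d) => laurentCoeff (F i) r (k : ℕ)) := by
    intro h
    have := h.fintype_card_le_finrank
    simp at this
  rw [Fintype.not_linearIndependent_iff] at hdep
  obtain ⟨c, hc, i, hi⟩ := hdep
  refine ⟨c, fun h => hi (congrFun h i), fun z hz => ?_⟩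
  refine (IsQuasiPeriodic.sum Finset.univ c hF).eq_zero hp hχ hr hr' hd 0 (fun k hk hk' => ?_) hz
  rw [laurentCoeff_sum hp _ _ (fun i => (hF i).differentiableOn) (hp1.trans hr) hr']
  lift k to ℕ using hk
  simpa using congrFun hc ⟨k, by omega⟩

theorem laurentCoeff_neg_of_odd {F : ℂ → ℂ} (hF : ∀ z : ℂ, ‖z‖ = 1 → F z⁻¹ = -F z) (k : ℤ) :
    laurentCoeff F 1 (-k) = -laurentCoeff F 1 k := by
  rw [laurentCoeff, laurentCoeff, circleIntegral, circleIntegral]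
  set g : ℝ → ℂ := fun θ => deriv (circleMap 0 1) θ • (F (circleMap 0 1 θ) *
    circleMap 0 1 θ ^ (-k - 1)) with hg
  have hper : Function.Periodic g (2 * Real.pi) := fun θ => by
    simp only [hg, deriv_circleMap, periodic_circleMap 0 1 θ]
  have e : (fun θ => deriv (circleMap 0 1) θ • (F (circleMap 0 1 θ) *
      circleMap 0 1 θ ^ (-(-k) - 1))) = fun θ => -g (-θ) := by
    funext θ
    have h1 : circleMap 0 1 (-θ) = (circleMap 0 1 θ)⁻¹ := by
      simp [circleMap, Complex.exp_neg]
    have h0 : circleMap 0 1 θ ≠ 0 := circleMap_ne_center one_ne_zero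
    simp only [hg, deriv_circleMap, h1, smul_eq_mul]
    rw [hF _ (by simp [norm_circleMap_zero]), zpow_sub_one₀ h0,
      zpow_sub_one₀ (inv_ne_zero h0), inv_zpow', neg_neg]
    field_simp
  rw [e, intervalIntegral.integral_neg, intervalIntegral.integral_comp_neg]
  have := hper.intervalIntegral_add_eq (-(2 * Real.pi)) 0
  rw [neg_add_cancel, zero_add] at this
  rw [neg_zero, this]

theorem odd_quasiPeriodic_eq_zero {p : ℝ} (hp : 0 < p) (hp1 : p < 1) {F : ℂ → ℂ}
    (hF : IsQuasiPeriodic p 4 ((p : ℂ) ^ (-2 : ℤ)) F) (hodd : ∀ z : ℂ, ‖z‖ = 1 → F z⁻¹ = -F z)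
    (h1 : laurentCoeff F 1 1 = 0) {z : ℂ} (hz : z ∈ annulus p) : F z = 0 := by
  obtain ⟨r, hr, hr'⟩ := exists_between ((one_lt_inv₀ hp).mpr hp1)
  have hp0 : (p : ℂ) ≠ 0 := by exact_mod_cast hp.ne'
  refine hF.eq_zero hp (zpow_ne_zero _ hp0) hr hr' (by norm_num) (-1) (fun k hk hk' => ?_) hz
  rw [laurentCoeff_congr_radius hp hF.differentiableOn hp1 hr.le hr']
  norm_num at hk'
  have h2 : laurentCoeff F 1 (-2) = laurentCoeff F 1 2 := by
    have := laurentCoeff_eq_mul hp hF hr hr' (-2)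
    rw [← laurentCoeff_congr_radius hp hF.differentiableOn hp1 hr.le hr', this,
      ← zpow_add₀ hp0, ← laurentCoeff_congr_radius hp hF.differentiableOn hp1 hr.le hr']
    norm_num
  have ho (j : ℤ) := laurentCoeff_neg_of_odd hodd j
  obtain rfl | rfl | rfl | rfl : k = -1 ∨ k = 0 ∨ k = 1 ∨ k = 2 := by omega
  · rw [ho, h1, neg_zero]
  · exact self_eq_neg.mp (by simpa using ho 0)
  · exact h1
  · rw [ho] at h2
    exact neg_eq_self.mp h2

theorem odd_quasiPeriodic_proportional {p : ℝ} (hp : 0 < p) (hp1 : p < 1) {F G : ℂ → ℂ}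
    (hF : IsQuasiPeriodic p 4 ((p : ℂ) ^ (-2 : ℤ)) F)
    (hG : IsQuasiPeriodic p 4 ((p : ℂ) ^ (-2 : ℤ)) G)
    (hFodd : ∀ z : ℂ, ‖z‖ = 1 → F z⁻¹ = -F z) (hGodd : ∀ z : ℂ, ‖z‖ = 1 → G z⁻¹ = -G z)
    {z b : ℂ} (hz : z ∈ annulus p) (hb : b ∈ annulus p) : F z * G b = G z * F b := by
  have hFG : ∀ i, IsQuasiPeriodic p 4 ((p : ℂ) ^ (-2 : ℤ)) (![F, G] i) := by
    intro i
    fin_cases i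
    exacts [hF, hG]
  have key {w : ℂ} (hw : w ∈ annulus p) :
      laurentCoeff G 1 1 * F w = laurentCoeff F 1 1 * G w := by
    have hpinv : 1 < p⁻¹ := (one_lt_inv₀ hp).mpr hp1
    have h1 := laurentCoeff_sum hp Finset.univ ![laurentCoeff G 1 1, -laurentCoeff F 1 1]
      (fun i => (hFG i).differentiableOn) hp1 hpinv 1
    have h := odd_quasiPeriodic_eq_zero hp hp1
      (IsQuasiPeriodic.sum Finset.univ ![laurentCoeff G 1 1, -laurentCoeff F 1 1] hFG)
      (fun w hw => by simp [hFodd w hw, hGodd w hw]; ring) (by rw [h1]; simp; ring) hw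
    simp at h
    linear_combination h
  rcases eq_or_ne (laurentCoeff G 1 1) 0 with h0 | h0
  · rw [odd_quasiPeriodic_eq_zero hp hp1 hG hGodd h0 hz,
      odd_quasiPeriodic_eq_zero hp hp1 hG hGodd h0 hb]
    ring
  · apply mul_left_cancel₀ h0
    linear_combination G b * key hz - G z * key hb

/-- The triangular number `n (n - 1) / 2`. -/
def tri (n : ℤ) : ℤ := n * (n - 1) / 2

theorem two_mul_tri (n : ℤ) : 2 * tri n = n * (n - 1) :=
  Int.mul_ediv_cancel' (Int.even_mul_pred_self n).two_dvd

theorem tri_add_one (n : ℤ) : tri (n + 1) = tri n + n := by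
  have h1 := two_mul_tri n
  have h2 := two_mul_tri (n + 1)
  linarith

theorem tri_one_sub (n : ℤ) : tri (1 - n) = tri n := by
  have h1 := two_mul_tri n
  have h2 := two_mul_tri (1 - n)
  linarith

/-- The general term of the theta series. -/
noncomputable def thetaTerm (p z : ℂ) (n : ℤ) : ℂ := (-1) ^ n * p ^ tri n * z ^ n

/-- The theta function `∑ (-1)ⁿ p ^ (n (n - 1) / 2) zⁿ`. -/
noncomputable def theta (p z : ℂ) : ℂ := ∑' n : ℤ, thetaTerm p z n

theorem norm_thetaTerm (p z : ℂ) (n : ℤ) : ‖thetaTerm p z n‖ = ‖p‖ ^ tri n * ‖z‖ ^ n := by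
  simp [thetaTerm, norm_zpow]

theorem summable_zpow_tri {ρ r : ℝ} (hρ : 0 < ρ) (hρ1 : ρ < 1) (hr : 0 < r) :
    Summable fun n : ℤ => ρ ^ tri n * r ^ n := by
  have hlim := tendsto_pow_atTop_nhds_zero_of_lt_one hρ.le hρ1
  refine Summable.of_nat_of_neg_add_one ?_ ?_
  · refine summable_of_ratio_test_tendsto_lt_one (l := 0) one_pos
      (Filter.Eventually.of_forall fun n => by positivity) ?_
    have : (fun n : ℕ => ‖ρ ^ tri ((n + 1 : ℕ) : ℤ) * r ^ ((n + 1 : ℕ) : ℤ)‖ /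
        ‖ρ ^ tri (n : ℤ) * r ^ (n : ℤ)‖) = fun n => ρ ^ n * r := by
      funext n
      rw [Real.norm_of_nonneg (by positivity), Real.norm_of_nonneg (by positivity), Nat.cast_succ,
        tri_add_one, zpow_add₀ hρ.ne', zpow_add_one₀ hr.ne', zpow_natCast ρ n]
      field_simp
    rw [this]
    simpa using hlim.mul_const r
  · refine summable_of_ratio_test_tendsto_lt_one (l := 0) one_pos
      (Filter.Eventually.of_forall fun n => by positivity) ?_
    have : (fun n : ℕ => ‖ρ ^ tri (-(((n + 1 : ℕ) : ℤ) + 1)) * r ^ (-(((n + 1 : ℕ) : ℤ) + 1))‖ /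
        ‖ρ ^ tri (-((n : ℤ) + 1)) * r ^ (-((n : ℤ) + 1))‖) = fun n => ρ ^ n * (ρ ^ 2 / r) := by
      funext n
      rw [Real.norm_of_nonneg (by positivity), Real.norm_of_nonneg (by positivity), Nat.cast_succ]
      have h : tri (-((n : ℤ) + 1 + 1)) = tri (-((n : ℤ) + 1)) + n + 2 := by
        have h1 := two_mul_tri (-((n : ℤ) + 1 + 1))
        have h2 := two_mul_tri (-((n : ℤ) + 1))
        linarith
      rw [h, zpow_add₀ hρ.ne', zpow_add₀ hρ.ne',
        show -((n : ℤ) + 1 + 1) = -((n : ℤ) + 1) - 1 by ring, zpow_sub_one₀ hr.ne',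
        zpow_natCast ρ n]
      norm_cast
      field_simp
    rw [this]
    simpa using hlim.mul_const (ρ ^ 2 / r)

theorem summable_thetaTerm {p z : ℂ} (hp : p ≠ 0) (hp1 : ‖p‖ < 1) (hz : z ≠ 0) :
    Summable (thetaTerm p z) := by
  refine Summable.of_norm ?_
  simp only [norm_thetaTerm]
  exact summable_zpow_tri (norm_pos_iff.mpr hp) hp1 (norm_pos_iff.mpr hz)

theorem thetaTerm_mul_left {p z : ℂ} (hp : p ≠ 0) (hz : z ≠ 0) (n : ℤ) :
    thetaTerm p (p * z) n = -z⁻¹ * thetaTerm p z (n + 1) := by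
  rw [thetaTerm, thetaTerm, tri_add_one, zpow_add₀ hp, mul_zpow, zpow_add_one₀ hz,
    zpow_add_one₀ (by norm_num : (-1 : ℂ) ≠ 0)]
  field_simp

theorem theta_mul_left {p z : ℂ} (hp : p ≠ 0) (hz : z ≠ 0) :
    theta p (p * z) = -z⁻¹ * theta p z := by
  rw [theta, theta, ← tsum_mul_left,
    ← (Equiv.addRight (1 : ℤ)).tsum_eq fun n => -z⁻¹ * thetaTerm p z n]
  exact tsum_congr fun n => thetaTerm_mul_left hp hz n

theorem neg_one_zpow_neg (n : ℤ) : (-1 : ℂ) ^ (-n) = (-1) ^ n := by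
  rw [← inv_zpow', inv_neg_one]

theorem thetaTerm_inv {p z : ℂ} (hz : z ≠ 0) (n : ℤ) :
    thetaTerm p z⁻¹ n = -z⁻¹ * thetaTerm p z (1 - n) := by
  rw [thetaTerm, thetaTerm, tri_one_sub, sub_eq_add_neg, zpow_add₀ hz, zpow_one,
    zpow_add₀ (by norm_num : (-1 : ℂ) ≠ 0), neg_one_zpow_neg, inv_zpow']
  field_simp

theorem theta_inv {p z : ℂ} (hz : z ≠ 0) : theta p z⁻¹ = -z⁻¹ * theta p z := by
  rw [theta, theta, ← tsum_mul_left,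
    ← (Equiv.subLeft (1 : ℤ)).tsum_eq fun n => -z⁻¹ * thetaTerm p z n]
  exact tsum_congr fun n => thetaTerm_inv hz n

theorem theta_one (p : ℂ) : theta p 1 = 0 := by
  have := theta_inv (p := p) one_ne_zero
  rw [inv_one] at this
  exact self_eq_neg.mp (by simpa using this)

theorem differentiableOn_tsum_thetaTerm_mul {p : ℂ} (hp : p ≠ 0) (hp1 : ‖p‖ < 1) {U : Set ℂ}
    (hU : IsOpen U) {y : ℂ → ℂ} (hy : DifferentiableOn ℂ y U) {lo hi : ℝ} (hlo : 0 < lo)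
    (hy_lo : ∀ z ∈ U, lo ≤ ‖y z‖) (hy_hi : ∀ z ∈ U, ‖y z‖ ≤ hi) {h : ℤ → ℂ → ℂ}
    (hh : ∀ n, DifferentiableOn ℂ (h n) U) {C : ℝ} (hC : ∀ n, ∀ z ∈ U, ‖h n z‖ ≤ C) :
    DifferentiableOn ℂ (fun z => ∑' n, thetaTerm p (y z) n * h n z) U := by
  rcases U.eq_empty_or_nonempty with rfl | ⟨w, hw⟩
  · exact differentiableOn_empty
  have hhi : 0 < hi := hlo.trans_le ((hy_lo w hw).trans (hy_hi w hw))
  have hρ := norm_pos_iff.mpr hp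
  refine Complex.differentiableOn_tsum_of_summable_norm
    (u := fun n => (‖p‖ ^ tri n * lo ^ n + ‖p‖ ^ tri n * hi ^ n) * C)
    (((summable_zpow_tri hρ hp1 hlo).add (summable_zpow_tri hρ hp1 hhi)).mul_right C) ?_ hU ?_
  · intro n
    refine DifferentiableOn.mul ?_ (hh n)
    simp only [thetaTerm]
    refine DifferentiableOn.const_mul ?_ _
    intro z hz
    have h0 : y z ≠ 0 := norm_pos_iff.mp (hlo.trans_le (hy_lo z hz))
    exact (hy z hz).zpow (Or.inl h0)
  · intro n z hz
    rw [norm_mul, norm_thetaTerm, ← mul_add]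
    have h0 := hlo.trans_le (hy_lo z hz)
    have hCpos : 0 ≤ C := (norm_nonneg _).trans (hC n z hz)
    gcongr
    · have e1 : 0 ≤ lo ^ n := by positivity
      have e2 : 0 ≤ hi ^ n := by positivity
      rcases le_total 0 n with hn | hn
      · exact (zpow_le_zpow_left₀ hn h0.le (hy_hi z hz)).trans (by linarith)
      · have : ‖y z‖ ^ n ≤ lo ^ n := by
          obtain ⟨m, rfl⟩ : ∃ m, n = -m := ⟨-n, by ring⟩
          rw [zpow_neg, zpow_neg]
          exact inv_anti₀ (by positivity) (zpow_le_zpow_left₀ (by omega) hlo.le (hy_lo z hz))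
        linarith
    · exact hC n z hz

theorem exists_norm_nhds {z : ℂ} (hz : z ≠ 0) :
    ∃ U : Set ℂ, IsOpen U ∧ z ∈ U ∧ ∃ lo hi : ℝ, 0 < lo ∧ ∀ w ∈ U, lo ≤ ‖w‖ ∧ ‖w‖ ≤ hi := by
  have h := norm_pos_iff.mpr hz
  refine ⟨{w | ‖z‖ / 2 < ‖w‖ ∧ ‖w‖ < 2 * ‖z‖}, ?_, ⟨by linarith, by linarith⟩,
    ‖z‖ / 2, 2 * ‖z‖, by linarith, fun w hw => ⟨hw.1.le, hw.2.le⟩⟩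
  exact (isOpen_lt continuous_const continuous_norm).inter
    (isOpen_lt continuous_norm continuous_const)

theorem differentiableAt_theta {p z : ℂ} (hp : p ≠ 0) (hp1 : ‖p‖ < 1) (hz : z ≠ 0) :
    DifferentiableAt ℂ (theta p) z := by
  obtain ⟨U, hU, hzU, lo, hi, hlo, h⟩ := exists_norm_nhds hz
  have := differentiableOn_tsum_thetaTerm_mul hp hp1 hU differentiableOn_id hlo
    (fun w hw => (h w hw).1) (fun w hw => (h w hw).2) (h := fun _ _ => 1)
    (fun _ => differentiableOn_const 1) (C := 1) (fun _ _ _ => by simp)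
  simp only [mul_one, id] at this
  exact this.differentiableAt (hU.mem_nhds hzU)

theorem ne_zero_of_mem_annulus {p : ℝ} (hp : 0 < p) {z : ℂ} (hz : z ∈ annulus p) : z ≠ 0 :=
  norm_pos_iff.mp (hp.trans hz.1)

theorem ofReal_ne_zero_of_pos {p : ℝ} (hp : 0 < p) : (p : ℂ) ≠ 0 := by exact_mod_cast hp.ne'

theorem norm_ofReal_lt_one {p : ℝ} (hp : 0 < p) (hp1 : p < 1) : ‖(p : ℂ)‖ < 1 := by
  rwa [Complex.norm_real, Real.norm_of_nonneg hp.le]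

theorem isQuasiPeriodic_of_forall {p : ℝ} (hp : 0 < p) {d : ℕ} {χ : ℂ} {F : ℂ → ℂ}
    (hd : ∀ z, z ≠ 0 → DifferentiableAt ℂ F z)
    (hF : ∀ z : ℂ, z ≠ 0 → F (p * z) = χ * z ^ (-(d : ℤ)) * F z) : IsQuasiPeriodic p d χ F where
  differentiableOn z hz := (hd z (ne_zero_of_mem_annulus hp hz)).differentiableWithinAt
  map_mul z hz _ := hF z (norm_pos_iff.mp (by linarith))

/-- The odd function `z⁻¹ θ(z²)`. -/
noncomputable def oddTheta (p z : ℂ) : ℂ := z⁻¹ * theta p (z ^ 2)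

theorem theta_mul_mul {p z : ℂ} (hp : p ≠ 0) (hz : z ≠ 0) :
    theta p (p * (p * z)) = p⁻¹ * z⁻¹ ^ 2 * theta p z := by
  rw [theta_mul_left hp (mul_ne_zero hp hz), theta_mul_left hp hz]
  field_simp

theorem oddTheta_isQuasiPeriodic {p : ℝ} (hp : 0 < p) (hp1 : p < 1) :
    IsQuasiPeriodic p 4 ((p : ℂ) ^ (-2 : ℤ)) (oddTheta p) := by
  have hp0 := ofReal_ne_zero_of_pos hp
  refine isQuasiPeriodic_of_forall hp (fun z hz => ?_) fun z hz => ?_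
  · exact (differentiableAt_inv hz).mul ((differentiableAt_theta hp0 (norm_ofReal_lt_one hp hp1)
      (pow_ne_zero 2 hz)).comp z (differentiableAt_pow 2))
  · rw [oddTheta, oddTheta, show ((p : ℂ) * z) ^ 2 = p * (p * z ^ 2) by ring,
      theta_mul_mul hp0 (pow_ne_zero 2 hz)]
    simp only [zpow_neg, Nat.cast_ofNat, zpow_ofNat]
    field_simp

theorem oddTheta_inv (p : ℂ) {z : ℂ} (hz : z ≠ 0) : oddTheta p z⁻¹ = -oddTheta p z := by
  rw [oddTheta, oddTheta, inv_pow, theta_inv (pow_ne_zero 2 hz)]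
  field_simp

/-- The theta function with cubic argument occurring in the quintuple product identity. -/
noncomputable def cubicTheta (p z : ℂ) : ℂ := theta (p ^ 3) (p ^ 2 * z ^ 3)

theorem cubicTheta_mul_left {p z : ℂ} (hp : p ≠ 0) (hz : z ≠ 0) :
    cubicTheta p (p * z) = -(p⁻¹ ^ 2 * z⁻¹ ^ 3) * cubicTheta p z := by
  rw [cubicTheta, cubicTheta, show p ^ 2 * (p * z) ^ 3 = p ^ 3 * (p ^ 2 * z ^ 3) by ring,
    theta_mul_left (pow_ne_zero 3 hp) (by positivity)]
  field_simp

theorem cubicTheta_inv_mul {p z : ℂ} (hp : p ≠ 0) (hz : z ≠ 0) :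
    cubicTheta p (p * z)⁻¹ = -(p⁻¹ * z⁻¹ ^ 3) * cubicTheta p z⁻¹ := by
  have h := cubicTheta_mul_left hp (inv_ne_zero (mul_ne_zero hp hz))
  rw [show p * (p * z)⁻¹ = z⁻¹ by field_simp] at h
  rw [h]
  field_simp

theorem differentiableAt_cubicTheta {p z : ℂ} (hp : p ≠ 0) (hp1 : ‖p‖ < 1) (hz : z ≠ 0) :
    DifferentiableAt ℂ (cubicTheta p) z := by
  refine DifferentiableAt.comp z (g := theta (p ^ 3)) (differentiableAt_theta (pow_ne_zero 3 hp) ?_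
    (by positivity)) ((differentiableAt_pow 3).const_mul _)
  rw [norm_pow]
  exact pow_lt_one₀ (norm_nonneg p) hp1 (by norm_num)

/-- The quintuple product identity. -/
theorem quintuple {p : ℝ} (hp : 0 < p) (hp1 : p < 1) {ω : ℂ} (hω : ω ^ 2 + ω + 1 = 0)
    (hθ : theta p ω ≠ 0) {z : ℂ} (hz : z ∈ annulus p) :
    (cubicTheta p z + z⁻¹ * cubicTheta p z⁻¹) * theta p z = cubicTheta p 1 * oddTheta p z := by
  have hp0 := ofReal_ne_zero_of_pos hp
  have hpn := norm_ofReal_lt_one hp hp1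
  have hω3 : ω ^ 3 = 1 := by linear_combination (ω - 1) * hω
  have hω0 : ω ≠ 0 := by rintro rfl; simp at hω
  have hωinv : ω⁻¹ = ω ^ 2 := inv_eq_of_mul_eq_one_right (by linear_combination hω3)
  have hωn : ‖ω‖ = 1 := by
    have := congrArg norm hω3
    rw [norm_pow, norm_one] at this
    exact (pow_eq_one_iff_of_nonneg (norm_nonneg ω) (by norm_num)).mp this
  have hωmem : ω ∈ annulus p := ⟨hωn ▸ hp1, hωn ▸ (one_lt_inv₀ hp).mpr hp1⟩
  have hqp : IsQuasiPeriodic p 4 ((p : ℂ) ^ (-2 : ℤ))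
      fun z => (cubicTheta p z + z⁻¹ * cubicTheta p z⁻¹) * theta p z := by
    refine isQuasiPeriodic_of_forall hp (fun z hz => ?_) fun z hz => ?_
    · refine ((differentiableAt_cubicTheta hp0 hpn hz).add ((differentiableAt_inv hz).mul ?_)).mul
        (differentiableAt_theta hp0 hpn hz)
      exact (differentiableAt_cubicTheta hp0 hpn (inv_ne_zero hz)).comp z (differentiableAt_inv hz)
    · rw [cubicTheta_mul_left hp0 hz, cubicTheta_inv_mul hp0 hz, theta_mul_left hp0 hz]
      simp only [zpow_neg, Nat.cast_ofNat, zpow_ofNat]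
      field_simp
      ring
  have h := odd_quasiPeriodic_proportional hp hp1 hqp (oddTheta_isQuasiPeriodic hp hp1)
    (fun z hz => by
      have hz0 : z ≠ 0 := norm_pos_iff.mp (by rw [hz]; exact one_pos)
      rw [theta_inv hz0, inv_inv]
      field_simp
      ring)
    (fun z hz => oddTheta_inv _ (norm_pos_iff.mp (by rw [hz]; exact one_pos))) hz hωmem
  have e1 : cubicTheta p ω = cubicTheta p 1 := by rw [cubicTheta, cubicTheta, hω3, one_pow]
  have e2 : cubicTheta p ω⁻¹ = cubicTheta p 1 := by
    rw [cubicTheta, cubicTheta, inv_pow, hω3, inv_one, one_pow]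
  have e3 : oddTheta p ω = -ω * theta p ω := by
    rw [oddTheta, ← hωinv, theta_inv hω0, hωinv]
    linear_combination (-ω * theta p ω) * hω3
  rw [e1, e2, e3, hωinv] at h
  apply mul_right_cancel₀ (mul_ne_zero (neg_ne_zero.mpr hω0) hθ)
  linear_combination h + oddTheta p z * cubicTheta p 1 * theta p ω * hω

/-- The logarithmic derivative `z θ'(z) / θ(z)` of the theta function. -/
noncomputable def thetaLogDeriv (p z : ℂ) : ℂ := z * deriv (theta p) z / theta p z

theorem thetaLogDeriv_mul_left {p z : ℂ} (hp : p ≠ 0) (hp1 : ‖p‖ < 1) (hz : z ≠ 0)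
    (hθ : theta p z ≠ 0) : thetaLogDeriv p (p * z) = thetaLogDeriv p z - 1 := by
  have h1 : HasDerivAt (fun w => theta p (p * w)) (deriv (theta p) (p * z) * p) z := by
    have := (differentiableAt_theta hp hp1 (mul_ne_zero hp hz)).hasDerivAt
    exact this.comp z (by simpa using (hasDerivAt_id z).const_mul p)
  have h2 : HasDerivAt (fun w => -w⁻¹ * theta p w)
      (-(-(z ^ 2)⁻¹) * theta p z + -z⁻¹ * deriv (theta p) z) z :=
    (hasDerivAt_inv hz).neg.mul (differentiableAt_theta hp hp1 hz).hasDerivAt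
  have h3 := h1.unique (h2.congr_of_eventuallyEq ((isOpen_ne.eventually_mem hz).mono
    fun w hw => theta_mul_left hp hw))
  rw [thetaLogDeriv, thetaLogDeriv, theta_mul_left hp hz]
  have h4 : deriv (theta p) (p * z) = p⁻¹ * ((z ^ 2)⁻¹ * theta p z - z⁻¹ * deriv (theta p) z) := by
    field_simp
    field_simp at h3
    linear_combination h3
  rw [h4]
  field_simp
  ring

theorem thetaLogDeriv_inv {p z : ℂ} (hp : p ≠ 0) (hp1 : ‖p‖ < 1) (hz : z ≠ 0)
    (hθ : theta p z ≠ 0) : thetaLogDeriv p z⁻¹ = 1 - thetaLogDeriv p z := by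
  have h1 : HasDerivAt (fun w => theta p w⁻¹) (deriv (theta p) z⁻¹ * (-(z ^ 2)⁻¹)) z := by
    have := (differentiableAt_theta hp hp1 (inv_ne_zero hz)).hasDerivAt
    exact this.comp z (hasDerivAt_inv hz)
  have h2 : HasDerivAt (fun w => -w⁻¹ * theta p w)
      (-(-(z ^ 2)⁻¹) * theta p z + -z⁻¹ * deriv (theta p) z) z :=
    (hasDerivAt_inv hz).neg.mul (differentiableAt_theta hp hp1 hz).hasDerivAt
  have h3 := h1.unique (h2.congr_of_eventuallyEq ((isOpen_ne.eventually_mem hz).mono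
    fun w hw => theta_inv hw))
  have h4 : deriv (theta p) z⁻¹ = z * deriv (theta p) z - theta p z := by
    field_simp at h3
    rw [one_div] at h3
    linear_combination -h3
  rw [thetaLogDeriv, thetaLogDeriv, theta_inv hz, h4]
  field_simp
  ring

theorem isQuasiPeriodic_sub_comp_inv {p : ℝ} (hp : 0 < p) {g : ℂ → ℂ}
    (hd : ∀ z, z ≠ 0 → DifferentiableAt ℂ g z)
    (hg : ∀ z : ℂ, z ≠ 0 → g (p * z) = ((p : ℂ) ^ 2)⁻¹ * (z ^ 4)⁻¹ * g z) :
    IsQuasiPeriodic p 4 ((p : ℂ) ^ (-2 : ℤ)) fun z => g z - g z⁻¹ := by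
  have hp0 := ofReal_ne_zero_of_pos hp
  refine isQuasiPeriodic_of_forall hp (fun z hz => ?_) fun z hz => ?_
  · exact (hd z hz).sub ((hd _ (inv_ne_zero hz)).comp z (differentiableAt_inv hz))
  · have h := hg (p * z)⁻¹ (inv_ne_zero (mul_ne_zero hp0 hz))
    rw [show (p : ℂ) * (p * z)⁻¹ = z⁻¹ by field_simp] at h
    simp only [zpow_neg, Nat.cast_ofNat, zpow_ofNat]
    rw [hg z hz, h]
    field_simp

/-- A product of four shifted theta functions whose shifts multiply to one. -/
noncomputable def thetaProd (p b₁ b₂ b₃ z : ℂ) : ℂ :=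
  (z ^ 2)⁻¹ * (theta p (b₁ * z) * theta p (b₂ * z) * theta p (b₃ * z) *
    theta p ((b₁ * b₂ * b₃)⁻¹ * z))

theorem hasDerivAt_theta_mul {p b z : ℂ} (hp : p ≠ 0) (hp1 : ‖p‖ < 1) (hb : b ≠ 0) (hz : z ≠ 0) :
    HasDerivAt (fun w => theta p (b * w)) (deriv (theta p) (b * z) * b) z :=
  ((differentiableAt_theta hp hp1 (mul_ne_zero hb hz)).hasDerivAt).comp z
    (by simpa using (hasDerivAt_id z).const_mul b)

theorem theta_mul_mul_left {p b z : ℂ} (hp : p ≠ 0) (hb : b ≠ 0) (hz : z ≠ 0) :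
    theta p (b * (p * z)) = -(b⁻¹ * z⁻¹) * theta p (b * z) := by
  rw [show b * (p * z) = p * (b * z) by ring, theta_mul_left hp (mul_ne_zero hb hz), mul_inv]

theorem deriv_theta_mul_self {p b : ℂ} (hb : theta p b ≠ 0) :
    deriv (theta p) b * b = thetaLogDeriv p b * theta p b := by
  rw [thetaLogDeriv]
  field_simp

theorem thetaLogDeriv_identity {p : ℝ} (hp : 0 < p) (hp1 : p < 1) {b₁ b₂ b₃ : ℂ}
    (hb₁ : b₁ ∈ annulus p) (hb₂ : b₂ ≠ 0) (hb₃ : b₃ ≠ 0) (h₁ : theta p b₁ ≠ 0)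
    (h₂ : theta p b₂ ≠ 0) (h₃ : theta p b₃ ≠ 0) (h₄ : theta p (b₁ * b₂ * b₃) ≠ 0)
    (h₅ : theta p (b₁ ^ 2) ≠ 0) :
    (thetaLogDeriv p b₁ + thetaLogDeriv p b₂ + thetaLogDeriv p b₃
        - thetaLogDeriv p (b₁ * b₂ * b₃) - 1) *
      (theta p b₁ * theta p b₂ * theta p b₃ * theta p (b₁ * b₂ * b₃)) =
    deriv (theta p) 1 * (theta p (b₁ * b₂) * theta p (b₁ * b₃) * theta p (b₂ * b₃)) := by
  have hp0 := ofReal_ne_zero_of_pos hp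
  have hpn := norm_ofReal_lt_one hp hp1
  have hb₁0 := ne_zero_of_mem_annulus hp hb₁
  set B := b₁ * b₂ * b₃ with hB
  have hB0 : B ≠ 0 := by positivity
  have hder : ∀ z : ℂ, z ≠ 0 → HasDerivAt (thetaProd p b₁ b₂ b₃) _ z := fun z hz =>
    ((hasDerivAt_pow 2 z).inv (pow_ne_zero 2 hz)).mul
      ((((hasDerivAt_theta_mul hp0 hpn hb₁0 hz).mul (hasDerivAt_theta_mul hp0 hpn hb₂ hz)).mul
        (hasDerivAt_theta_mul hp0 hpn hb₃ hz)).mul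
        (hasDerivAt_theta_mul hp0 hpn (inv_ne_zero hB0) hz))
  have hqp := isQuasiPeriodic_sub_comp_inv hp (g := thetaProd p b₁ b₂ b₃)
    (fun z hz => (hder z hz).differentiableAt) fun z hz => by
      simp only [thetaProd]
      rw [theta_mul_mul_left hp0 hb₁0 hz, theta_mul_mul_left hp0 hb₂ hz,
        theta_mul_mul_left hp0 hb₃ hz, theta_mul_mul_left hp0 (inv_ne_zero hB0) hz, hB]
      field_simp
  have hGb : thetaProd p b₁ b₂ b₃ b₁ - thetaProd p b₁ b₂ b₃ b₁⁻¹ =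
      oddTheta p b₁ * (-B⁻¹ * (theta p (b₁ * b₂) * theta p (b₁ * b₃) * theta p (b₂ * b₃))) := by
    simp only [thetaProd, oddTheta]
    rw [mul_inv_cancel₀ hb₁0, theta_one,
      show (b₁ * b₂ * b₃)⁻¹ * b₁ = (b₂ * b₃)⁻¹ by field_simp,
      theta_inv (mul_ne_zero hb₂ hb₃), ← sq, mul_comm b₂ b₁, mul_comm b₃ b₁, hB]
    field_simp
    ring
  have hH : oddTheta p b₁ ≠ 0 := mul_ne_zero (inv_ne_zero hb₁0) h₅
  have hprop : ∀ z ∈ annulus p, thetaProd p b₁ b₂ b₃ z - thetaProd p b₁ b₂ b₃ z⁻¹ =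
      -B⁻¹ * (theta p (b₁ * b₂) * theta p (b₁ * b₃) * theta p (b₂ * b₃)) * oddTheta p z := by
    intro z hz
    have h := odd_quasiPeriodic_proportional hp hp1 hqp (oddTheta_isQuasiPeriodic hp hp1)
      (fun z hz => by simp)
      (fun z hz => oddTheta_inv _ (norm_pos_iff.mp (by rw [hz]; exact one_pos))) hz hb₁
    rw [hGb] at h
    apply mul_right_cancel₀ hH
    linear_combination h
  have h1 : (1 : ℂ) ∈ annulus p := ⟨by simpa using hp1, by simpa using (one_lt_inv₀ hp).mpr hp1⟩
  have hinv : HasDerivAt (fun z : ℂ => z⁻¹) (-1) 1 := by simpa using hasDerivAt_inv (𝕜 := ℂ) one_ne_zero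
  have d1 := (hder 1 one_ne_zero).sub (HasDerivAt.comp (1 : ℂ) (h₂ := thetaProd p b₁ b₂ b₃)
    (by simpa only [inv_one] using hder 1 one_ne_zero) hinv)
  have hsq : HasDerivAt (fun z : ℂ => theta p (z ^ 2)) (deriv (theta p) 1 * 2) 1 := by
    refine HasDerivAt.comp (1 : ℂ) (h₂ := theta p) ?_ (by simpa using hasDerivAt_pow 2 (1 : ℂ))
    simpa using (differentiableAt_theta hp0 hpn one_ne_zero).hasDerivAt
  have d2 := (hinv.mul hsq).const_mul
    (-B⁻¹ * (theta p (b₁ * b₂) * theta p (b₁ * b₃) * theta p (b₂ * b₃)))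
  have key := d1.unique (d2.congr_of_eventuallyEq (((isOpen_annulus p).eventually_mem h1).mono
    fun z hz => hprop z hz))
  simp only [mul_one, one_pow, theta_one, inv_one, Pi.mul_apply, Pi.inv_apply] at key
  have hDB := thetaLogDeriv_inv hp0 hpn hB0 h₄
  have hθB := theta_inv (p := p) hB0
  have hθB0 : theta p B⁻¹ ≠ 0 := by
    rw [hθB]; exact mul_ne_zero (neg_ne_zero.mpr (inv_ne_zero hB0)) h₄
  rw [deriv_theta_mul_self h₁, deriv_theta_mul_self h₂, deriv_theta_mul_self h₃,
    deriv_theta_mul_self hθB0, hDB, hθB] at key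
  norm_num at key
  field_simp at key
  linear_combination (-1 / 2) * key

/-- The normalised theta value at `q ^ (7 k)`, for the nome `q ^ 49`. -/
noncomputable def chi (q : ℂ) (k : ℤ) : ℂ := q ^ tri (k - 3) * theta (q ^ 49) (q ^ (7 * k))

theorem theta_zpow_eq {q : ℂ} (hq : q ≠ 0) (k : ℤ) :
    theta (q ^ 49) (q ^ (7 * k)) = q ^ (-tri (k - 3)) * chi q k := by
  rw [chi, zpow_neg, inv_mul_cancel_left₀ (zpow_ne_zero _ hq)]

theorem tri_add_four (k : ℤ) : tri (k + 4) = tri (k - 3) + 7 * k := by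
  have h1 := two_mul_tri (k + 4)
  have h2 := two_mul_tri (k - 3)
  linarith

theorem chi_add_seven {q : ℂ} (hq : q ≠ 0) (k : ℤ) : chi q (k + 7) = -chi q k := by
  rw [chi, chi, show 7 * (k + 7) = 49 + 7 * k by ring, zpow_add₀ hq,
    show q ^ (49 : ℤ) = q ^ 49 by norm_cast, theta_mul_left (pow_ne_zero _ hq) (zpow_ne_zero _ hq),
    show k + 7 - 3 = k + 4 by ring, tri_add_four, zpow_add₀ hq]
  field_simp

theorem chi_neg {q : ℂ} (hq : q ≠ 0) (k : ℤ) : chi q (-k) = -chi q k := by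
  rw [chi, chi, show 7 * -k = -(7 * k) by ring, zpow_neg, theta_inv (zpow_ne_zero _ hq),
    show -k - 3 = 1 - (k + 4) by ring, tri_one_sub, tri_add_four, zpow_add₀ hq]
  field_simp

theorem chi_add_seven_mul {q : ℂ} (hq : q ≠ 0) (k m : ℤ) :
    chi q (k + 7 * m) = (-1) ^ m * chi q k := by
  induction m using Int.induction_on with
  | zero => simp
  | succ n ih =>
    rw [show k + 7 * ((n : ℤ) + 1) = k + 7 * n + 7 by ring, chi_add_seven hq, ih,
      zpow_add_one₀ (by norm_num)]
    ring
  | pred n ih =>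
    have h := chi_add_seven hq (k + 7 * (-(n : ℤ) - 1))
    rw [show k + 7 * (-(n : ℤ) - 1) + 7 = k + 7 * -n by ring, ih] at h
    rw [zpow_sub_one₀ (by norm_num), inv_neg_one]
    linear_combination h

theorem chi_zero {q : ℂ} (hq : q ≠ 0) : chi q 0 = 0 := by
  have := chi_neg hq 0
  rw [neg_zero] at this
  exact self_eq_neg.mp this

theorem theta_zpow_ne_zero {q : ℂ} {k : ℤ} (h : chi q k ≠ 0) :
    theta (q ^ 49) (q ^ (7 * k)) ≠ 0 := right_ne_zero_of_mul h

/-- The logarithmic derivative of the theta function at `q ^ (7 r)`, made odd and periodic. -/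
noncomputable def chiLogDeriv (q : ℂ) (r : ℤ) : ℂ :=
  14 * thetaLogDeriv (q ^ 49) (q ^ (7 * r)) + 2 * r - 7

theorem norm_pow_lt_one {q : ℂ} (hq1 : ‖q‖ < 1) {n : ℕ} (hn : n ≠ 0) : ‖q ^ n‖ < 1 := by
  rw [norm_pow]
  exact pow_lt_one₀ (norm_nonneg q) hq1 hn

theorem chiLogDeriv_add_seven {q : ℂ} (hq : q ≠ 0) (hq1 : ‖q‖ < 1) {r : ℤ} (h : chi q r ≠ 0) :
    chiLogDeriv q (r + 7) = chiLogDeriv q r := by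
  rw [chiLogDeriv, chiLogDeriv, show 7 * (r + 7) = 49 + 7 * r by ring, zpow_add₀ hq,
    show q ^ (49 : ℤ) = q ^ 49 by norm_cast, thetaLogDeriv_mul_left (pow_ne_zero _ hq)
    (norm_pow_lt_one hq1 (by norm_num)) (zpow_ne_zero _ hq) (theta_zpow_ne_zero h)]
  push_cast
  ring

theorem zpow_mem_annulus {q : ℝ} (hq : 0 < q) (hq1 : q < 1) {k : ℤ} (hk : -7 < k) (hk' : k < 7) :
    (q : ℂ) ^ (7 * k) ∈ annulus (q ^ 49) := by
  have hn : ‖(q : ℂ) ^ (7 * k)‖ = q ^ (7 * k) := by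
    rw [norm_zpow, Complex.norm_real, Real.norm_of_nonneg hq.le]
  refine ⟨?_, ?_⟩
  · rw [hn, ← zpow_natCast]
    exact zpow_lt_zpow_right_of_lt_one₀ hq hq1 (by push_cast; omega)
  · rw [hn, ← zpow_natCast, ← zpow_neg]
    exact zpow_lt_zpow_right_of_lt_one₀ hq hq1 (by push_cast; omega)

theorem chiLogDeriv_relation {q : ℝ} (hq : 0 < q) (hq1 : q < 1)
    (hχ : ∀ k : ℤ, ¬ 7 ∣ k → chi q k ≠ 0) {k : ℤ} (hk : 0 < k) (hk' : k < 7) :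
    (2 * chiLogDeriv q k + chiLogDeriv q (2 * k) - chiLogDeriv q (4 * k)) *
      (chi q k ^ 2 * chi q (4 * k)) = 14 * q ^ 6 * deriv (theta (q ^ 49)) 1 * chi q (3 * k) ^ 2 := by
  have hq0 := ofReal_ne_zero_of_pos hq
  have h := thetaLogDeriv_identity (p := q ^ 49) (by positivity)
    (pow_lt_one₀ hq.le hq1 (by norm_num)) (b₁ := (q : ℂ) ^ (7 * k)) (b₂ := (q : ℂ) ^ (7 * k))
    (b₃ := (q : ℂ) ^ (7 * (2 * k))) (zpow_mem_annulus hq hq1 (by omega) hk')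
    (zpow_ne_zero _ hq0) (zpow_ne_zero _ hq0)
  rw [← zpow_natCast (_ ^ _) 2, ← zpow_mul, ← zpow_add₀ hq0, ← zpow_add₀ hq0, ← zpow_add₀ hq0,
    Complex.ofReal_pow, show 7 * k + 7 * k + 7 * (2 * k) = 7 * (4 * k) by ring,
    show 7 * k + 7 * (2 * k) = 7 * (3 * k) by ring, show 7 * k + 7 * k = 7 * (2 * k) by ring,
    show 7 * k * ((2 : ℕ) : ℤ) = 7 * (2 * k) by push_cast; ring] at h
  have h1 := hχ k (by omega)
  have h2 := hχ (2 * k) (by omega)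
  have h4 := hχ (4 * k) (by omega)
  specialize h (theta_zpow_ne_zero h1) (theta_zpow_ne_zero h1) (theta_zpow_ne_zero h2)
    (theta_zpow_ne_zero h4) (theta_zpow_ne_zero h2)
  simp only [theta_zpow_eq hq0] at h
  have e : (q : ℂ) ^ (-tri (3 * k - 3)) * q ^ (-tri (3 * k - 3)) =
      q ^ 6 * (q ^ (-tri (k - 3)) * q ^ (-tri (k - 3)) * q ^ (-tri (4 * k - 3))) := by
    rw [← zpow_natCast _ 6]
    simp only [← zpow_add₀ hq0]
    congr 1
    have h1 := two_mul_tri (k - 3)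
    have h2 := two_mul_tri (3 * k - 3)
    have h3 := two_mul_tri (4 * k - 3)
    push_cast
    linarith
  have hne : (q : ℂ) ^ (-tri (k - 3)) * q ^ (-tri (k - 3)) * q ^ (-tri (4 * k - 3)) *
      q ^ (-tri (2 * k - 3)) * chi q (2 * k) ≠ 0 := by
    simp only [mul_ne_zero_iff, ne_eq, zpow_ne_zero _ hq0, not_false_eq_true, true_and]
    exact h2
  apply mul_left_cancel₀ hne
  simp only [chiLogDeriv]
  push_cast
  linear_combination 14 * h +
    14 * deriv (theta (q ^ 49)) 1 * chi q (3 * k) ^ 2 * chi q (2 * k) * q ^ (-tri (2 * k - 3)) * e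

theorem chiLogDeriv_add_seven_mul {q : ℂ} (hq : q ≠ 0) (hq1 : ‖q‖ < 1)
    (hχ : ∀ k : ℤ, ¬ 7 ∣ k → chi q k ≠ 0) {r : ℤ} (hr : ¬ 7 ∣ r) (m : ℤ) :
    chiLogDeriv q (r + 7 * m) = chiLogDeriv q r := by
  induction m using Int.induction_on with
  | zero => simp
  | succ n ih =>
    rw [← ih, ← chiLogDeriv_add_seven hq hq1 (hχ (r + 7 * n) (by omega))]
    ring_nf
  | pred n ih =>
    rw [← ih, ← chiLogDeriv_add_seven hq hq1 (hχ (r + 7 * (-n - 1)) (by omega))]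
    ring_nf

theorem neg_one_zpow_sq (m : ℤ) : ((-1 : ℂ) ^ m) ^ 2 = 1 := by
  rw [← zpow_natCast, ← zpow_mul, mul_comm, zpow_mul]
  simp

theorem chiLogDeriv_relation_of_not_dvd {q : ℝ} (hq : 0 < q) (hq1 : q < 1)
    (hχ : ∀ k : ℤ, ¬ 7 ∣ k → chi q k ≠ 0) {k : ℤ} (hk : ¬ 7 ∣ k) :
    (2 * chiLogDeriv q k + chiLogDeriv q (2 * k) - chiLogDeriv q (4 * k)) *
      (chi q k ^ 2 * chi q (4 * k)) = 14 * q ^ 6 * deriv (theta (q ^ 49)) 1 * chi q (3 * k) ^ 2 := by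
  have hq0 := ofReal_ne_zero_of_pos hq
  have hqn := norm_ofReal_lt_one hq hq1
  obtain ⟨r, m, hr, hr', rfl⟩ : ∃ r m : ℤ, 0 < r ∧ r < 7 ∧ k = r + 7 * m :=
    ⟨k % 7, k / 7, by omega, by omega, by omega⟩
  rw [show 2 * (r + 7 * m) = 2 * r + 7 * (2 * m) by ring,
    show 4 * (r + 7 * m) = 4 * r + 7 * (4 * m) by ring,
    show 3 * (r + 7 * m) = 3 * r + 7 * (3 * m) by ring,
    chiLogDeriv_add_seven_mul hq0 hqn hχ (by omega), chiLogDeriv_add_seven_mul hq0 hqn hχ (by omega),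
    chiLogDeriv_add_seven_mul hq0 hqn hχ (by omega), chi_add_seven_mul hq0, chi_add_seven_mul hq0,
    chi_add_seven_mul hq0, mul_pow, mul_pow, neg_one_zpow_sq, neg_one_zpow_sq,
    show 4 * m = 2 * m * (2 : ℕ) by push_cast; ring, zpow_mul, zpow_natCast, neg_one_zpow_sq,
    one_mul, one_mul, one_mul]
  exact chiLogDeriv_relation hq hq1 hχ hr hr'

theorem chi_mul_four {q : ℂ} (hq : q ≠ 0) {a : ℤ} (ha : Odd a) : chi q (4 * a) = chi q (3 * a) := by
  rw [show 4 * a = -(3 * a) + 7 * a by ring, chi_add_seven_mul hq, chi_neg hq, ha.neg_one_zpow]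
  ring

theorem chi_mul_five {q : ℂ} (hq : q ≠ 0) {a : ℤ} (ha : Odd a) : chi q (5 * a) = chi q (2 * a) := by
  rw [show 5 * a = -(2 * a) + 7 * a by ring, chi_add_seven_mul hq, chi_neg hq, ha.neg_one_zpow]
  ring

theorem chi_mul_six {q : ℂ} (hq : q ≠ 0) {a : ℤ} (ha : Odd a) : chi q (6 * a) = chi q a := by
  rw [show 6 * a = -a + 7 * a by ring, chi_add_seven_mul hq, chi_neg hq, ha.neg_one_zpow]
  ring

theorem chi_add_seven_mul_odd {q : ℂ} (hq : q ≠ 0) {a : ℤ} (ha : Odd a) (k : ℤ) :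
    chi q (k + 7 * a) = -chi q k := by
  rw [chi_add_seven_mul hq, ha.neg_one_zpow, neg_one_mul]

theorem chiLogDeriv_two_mul {q : ℝ} (hq : 0 < q) (hq1 : q < 1)
    (hχ : ∀ k : ℤ, ¬ 7 ∣ k → chi q k ≠ 0) {a : ℤ} (ha : ¬ 7 ∣ a) (ha' : Odd a) :
    chiLogDeriv q (2 * a) = q ^ 6 * deriv (theta (q ^ 49)) 1 *
      (3 * (chi q (3 * a) / chi q a ^ 2) - 5 * (chi q a / chi q (2 * a) ^ 2)
        - chi q (2 * a) / chi q (3 * a) ^ 2) := by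
  have hq0 := ofReal_ne_zero_of_pos hq
  have hqn := norm_ofReal_lt_one hq hq1
  have h1 := chiLogDeriv_relation_of_not_dvd hq hq1 hχ ha
  have h2 := chiLogDeriv_relation_of_not_dvd hq hq1 hχ (k := 2 * a) (by omega)
  have h4 := chiLogDeriv_relation_of_not_dvd hq hq1 hχ (k := 4 * a) (by omega)
  rw [show 2 * (2 * a) = 4 * a by ring, show 4 * (2 * a) = a + 7 * a by ring,
    show 3 * (2 * a) = 6 * a by ring, chi_mul_six hq0 ha', chi_add_seven_mul_odd hq0 ha',
    chiLogDeriv_add_seven_mul hq0 hqn hχ ha] at h2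
  rw [show 2 * (4 * a) = a + 7 * a by ring, show 4 * (4 * a) = 2 * a + 7 * a + 7 * a by ring,
    show 3 * (4 * a) = 5 * a + 7 * a by ring, chi_add_seven_mul_odd hq0 ha',
    chi_add_seven_mul_odd hq0 ha', chi_add_seven_mul_odd hq0 ha', chi_mul_four hq0 ha',
    chi_mul_five hq0 ha', chiLogDeriv_add_seven_mul hq0 hqn hχ ha,
    chiLogDeriv_add_seven_mul hq0 hqn hχ (by omega),
    chiLogDeriv_add_seven_mul hq0 hqn hχ (by omega)] at h4
  rw [chi_mul_four hq0 ha'] at h1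
  have n1 := hχ a ha
  have n2 := hχ (2 * a) (by omega)
  have n3 := hχ (3 * a) (by omega)
  rw [← eq_div_iff (by positivity)] at h1
  rw [← eq_div_iff (mul_ne_zero (pow_ne_zero 2 n2) (neg_ne_zero.mpr n1))] at h2
  rw [← eq_div_iff (mul_ne_zero (pow_ne_zero 2 n3) (by simpa using n2))] at h4
  have e : chiLogDeriv q (2 * a) = (3 * (2 * chiLogDeriv q a + chiLogDeriv q (2 * a)
      - chiLogDeriv q (4 * a)) + 5 * (2 * chiLogDeriv q (2 * a) + chiLogDeriv q (4 * a)
      - chiLogDeriv q a) - (2 * chiLogDeriv q (4 * a) + chiLogDeriv q a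
      - chiLogDeriv q (2 * a))) / 14 := by ring
  rw [e, h1, h2, h4]
  field_simp
  ring

/-- The product `θ(b z) θ(z / b)`. -/
noncomputable def thetaPair (p b z : ℂ) : ℂ := theta p (b * z) * theta p (b⁻¹ * z)

theorem thetaPair_isQuasiPeriodic {p : ℝ} (hp : 0 < p) (hp1 : p < 1) {b : ℂ} (hb : b ≠ 0) :
    IsQuasiPeriodic p 2 1 (thetaPair p b) := by
  have hp0 := ofReal_ne_zero_of_pos hp
  have hpn := norm_ofReal_lt_one hp hp1
  refine isQuasiPeriodic_of_forall hp (fun z hz => ?_) fun z hz => ?_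
  · exact (hasDerivAt_theta_mul hp0 hpn hb hz).differentiableAt.mul
      (hasDerivAt_theta_mul hp0 hpn (inv_ne_zero hb) hz).differentiableAt
  · rw [thetaPair, thetaPair, theta_mul_mul_left hp0 hb hz,
      theta_mul_mul_left hp0 (inv_ne_zero hb) hz]
    simp only [zpow_neg, Nat.cast_ofNat, zpow_ofNat]
    field_simp

theorem thetaPair_zpow {q : ℂ} (hq : q ≠ 0) (k j : ℤ) :
    thetaPair (q ^ 49) (q ^ (7 * k)) (q ^ (7 * j)) =
      q ^ (-(j ^ 2 - 7 * j + 12)) * (q ^ (-k ^ 2) * (chi q (j + k) * chi q (j - k))) := by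
  rw [thetaPair, ← zpow_neg, ← zpow_add₀ hq, ← zpow_add₀ hq,
    show 7 * k + 7 * j = 7 * (j + k) by ring, show -(7 * k) + 7 * j = 7 * (j - k) by ring,
    theta_zpow_eq hq, theta_zpow_eq hq, ← mul_assoc (q ^ (-(j ^ 2 - 7 * j + 12))), ← zpow_add₀ hq,
    show -(j ^ 2 - 7 * j + 12) + -k ^ 2 = -tri (j + k - 3) + -tri (j - k - 3) by
      have h1 := two_mul_tri (j + k - 3)
      have h2 := two_mul_tri (j - k - 3)
      linarith, zpow_add₀ hq]
  ring

/-- The quartic relation of Klein satisfied by the theta values. -/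
theorem chi_klein {q : ℝ} (hq : 0 < q) (hq1 : q < 1) (hχ : ∀ k : ℤ, ¬ 7 ∣ k → chi q k ≠ 0) :
    chi q 3 ^ 3 * chi q 1 - chi q 2 ^ 3 * chi q 3 + chi q 1 ^ 3 * chi q 2 = 0 := by
  have hq0 := ofReal_ne_zero_of_pos hq
  have hp1 := pow_lt_one₀ hq.le hq1 (show 49 ≠ 0 by norm_num)
  obtain ⟨c, hc, h⟩ := exists_linear_relation (p := q ^ 49) (by positivity) hp1 (d := 2) (χ := 1)
    (by norm_num) one_ne_zero (F := fun i => thetaPair (q ^ 49 : ℝ) ((q : ℂ) ^ (7 * ((i : ℤ) + 1))))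
    fun i => thetaPair_isQuasiPeriodic (by positivity) hp1 (zpow_ne_zero _ hq0)
  have key : ∀ j : ℤ, -7 < j → j < 7 → ∑ i : Fin 3, c i * q ^ (-((i : ℤ) + 1) ^ 2) *
      (chi q (j + ((i : ℤ) + 1)) * chi q (j - ((i : ℤ) + 1))) = 0 := by
    intro j hj hj'
    have := h _ (zpow_mem_annulus hq hq1 hj hj')
    simp only [Complex.ofReal_pow, thetaPair_zpow hq0] at this
    apply mul_left_cancel₀ (zpow_ne_zero (-(j ^ 2 - 7 * j + 12)) hq0)
    rw [mul_zero, ← this, Finset.mul_sum]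
    exact Finset.sum_congr rfl fun i _ => by ring
  have k0 := key 0 (by norm_num) (by norm_num)
  have k1 := key 1 (by norm_num) (by norm_num)
  have k2 := key 2 (by norm_num) (by norm_num)
  simp only [Fin.sum_univ_three, Fin.val_zero, Fin.val_one, Fin.val_two] at k0 k1 k2
  norm_num [chi_neg hq0, chi_zero hq0] at k0 k1 k2
  have e4 : chi q 4 = chi q 3 := chi_mul_four hq0 (a := 1) odd_one
  have e5 : chi q 5 = chi q 2 := chi_mul_five hq0 (a := 1) odd_one
  rw [e4] at k1
  rw [e5] at k2
  have n1 := hχ 1 (by norm_num)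
  have n3 := hχ 3 (by norm_num)
  have r1 : c 1 * (q ^ 4 : ℂ)⁻¹ * chi q 1 = -(c 2 * (q ^ 9 : ℂ)⁻¹ * chi q 2) := by
    apply mul_left_cancel₀ n3
    linear_combination -k1
  have r0 : c 0 * (q : ℂ)⁻¹ * chi q 3 = c 2 * (q ^ 9 : ℂ)⁻¹ * chi q 2 := by
    apply mul_left_cancel₀ n1
    linear_combination k2
  have hc2 : c 2 ≠ 0 := by
    intro hc2
    rw [hc2] at r0 r1
    have h0 : c 0 = 0 := by simpa [hq0, n3] using r0
    have h1 : c 1 = 0 := by simpa [hq0, n1] using r1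
    apply hc
    funext i
    fin_cases i
    · exact h0
    · exact h1
    · exact hc2
  have hne : c 2 * (q ^ 9 : ℂ)⁻¹ ≠ 0 := mul_ne_zero hc2 (inv_ne_zero (pow_ne_zero 9 hq0))
  apply mul_left_cancel₀ hne
  linear_combination -(chi q 1 * chi q 3) * k0 - chi q 1 ^ 3 * r0 - chi q 2 ^ 2 * chi q 3 * r1

theorem chi_klein_mul {q : ℝ} (hq : 0 < q) (hq1 : q < 1) (hχ : ∀ k : ℤ, ¬ 7 ∣ k → chi q k ≠ 0)
    {a : ℤ} (ha : a = 1 ∨ a = 3 ∨ a = 5) :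
    chi q (3 * a) ^ 3 * chi q a - chi q (2 * a) ^ 3 * chi q (3 * a) + chi q a ^ 3 * chi q (2 * a)
      = 0 := by
  have hq0 := ofReal_ne_zero_of_pos hq
  have h := chi_klein hq hq1 hχ
  have e (k : ℤ) : chi q (k + 7) = -chi q k := chi_add_seven hq0 k
  have e5 : chi q 5 = chi q 2 := chi_mul_five hq0 (a := 1) odd_one
  have e6 : chi q 6 = chi q 1 := chi_mul_six hq0 (a := 1) odd_one
  rcases ha with rfl | rfl | rfl
  · exact h
  · rw [show (3 : ℤ) * 3 = 2 + 7 by norm_num, show (2 : ℤ) * 3 = 6 by norm_num, e, e6]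
    linear_combination h
  · rw [show (3 : ℤ) * 5 = 1 + 7 + 7 by norm_num, show (2 : ℤ) * 5 = 3 + 7 by norm_num, e, e, e, e5]
    linear_combination h

/-- The Appell sum `∑ (-1)ᵐ p ^ (3 m (m - 1) / 2) (w z³)ᵐ / (1 - z pᵐ)`; a term with vanishing
denominator is counted as zero. -/
noncomputable def appell (p w z : ℂ) : ℂ :=
  ∑' m : ℤ, thetaTerm (p ^ 3) (w * z ^ 3) m * (1 - z * p ^ m)⁻¹

/-- The Appell sum without its central term. -/
noncomputable def appellReg (p w z : ℂ) : ℂ :=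
  ∑' m : ℤ, thetaTerm (p ^ 3) (w * z ^ 3) m * if m = 0 then 0 else (1 - z * p ^ m)⁻¹

theorem appell_mul_left {p w z : ℂ} (hp : p ≠ 0) (hw : w ≠ 0) (hz : z ≠ 0) :
    appell p w (p * z) = -(w * z ^ 3)⁻¹ * appell p w z := by
  rw [appell, appell, ← tsum_mul_left, ← (Equiv.addRight (1 : ℤ)).tsum_eq
    fun m => -(w * z ^ 3)⁻¹ * (thetaTerm (p ^ 3) (w * z ^ 3) m * (1 - z * p ^ m)⁻¹)]
  refine tsum_congr fun m => ?_
  rw [show w * (p * z) ^ 3 = p ^ 3 * (w * z ^ 3) by ring,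
    thetaTerm_mul_left (pow_ne_zero 3 hp) (by positivity), Equiv.coe_addRight, zpow_add_one₀ hp,
    show p * z * p ^ m = z * (p ^ m * p) by ring, mul_assoc]

theorem norm_inv_one_sub_le {p : ℝ} (hp : 0 < p) (hp1 : p < 1) {lo hi : ℝ} (hlo : p < lo)
    (hhi : hi < p⁻¹) {z : ℂ} (hz : lo ≤ ‖z‖) (hz' : ‖z‖ ≤ hi) {m : ℤ} (hm : m ≠ 0) :
    ‖(1 - z * (p : ℂ) ^ m)⁻¹‖ ≤ (1 - hi * p)⁻¹ + (lo / p - 1)⁻¹ := by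
  have h1 : 0 < 1 - hi * p := by
    have := mul_lt_mul_of_pos_right hhi hp
    rw [inv_mul_cancel₀ hp.ne'] at this
    linarith
  have h2 : 0 < lo / p - 1 := by rw [sub_pos, lt_div_iff₀ hp]; linarith
  have hn : ‖z * (p : ℂ) ^ m‖ = ‖z‖ * p ^ m := by
    rw [norm_mul, norm_zpow, Complex.norm_real, Real.norm_of_nonneg hp.le]
  rw [norm_inv]
  rcases hm.lt_or_gt with hm | hm
  · have hpm : p⁻¹ ≤ p ^ m := by
      rw [← zpow_neg_one]
      exact zpow_le_zpow_right_of_le_one₀ hp hp1.le (by omega)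
    have : lo / p - 1 ≤ ‖1 - z * (p : ℂ) ^ m‖ := by
      have e := norm_sub_norm_le (z * (p : ℂ) ^ m) 1
      rw [norm_sub_rev, hn, norm_one] at e
      refine le_trans ?_ e
      have : lo * p⁻¹ ≤ ‖z‖ * p ^ m := by gcongr
      rw [div_eq_mul_inv]
      linarith
    exact (inv_anti₀ h2 this).trans (le_add_of_nonneg_left (inv_pos.mpr h1).le)
  · have hpm : p ^ m ≤ p := by
      conv_rhs => rw [← zpow_one p]
      exact zpow_le_zpow_right_of_le_one₀ hp hp1.le (by omega)
    have : 1 - hi * p ≤ ‖1 - z * (p : ℂ) ^ m‖ := by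
      have e := norm_sub_norm_le 1 (z * (p : ℂ) ^ m)
      rw [hn, norm_one] at e
      refine le_trans ?_ e
      have : ‖z‖ * p ^ m ≤ hi * p := by
        have := norm_nonneg z
        gcongr
        linarith
      linarith
    exact (inv_anti₀ h1 this).trans (le_add_of_nonneg_right (inv_pos.mpr h2).le)

theorem one_sub_mul_zpow_ne_zero {p : ℝ} (hp : 0 < p) (hp1 : p < 1) {z : ℂ} (hz : z ∈ annulus p)
    {m : ℤ} (hm : m ≠ 0) : 1 - z * (p : ℂ) ^ m ≠ 0 := by
  intro h
  have h' : ‖z‖ * p ^ m = 1 := by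
    have := congrArg norm (sub_eq_zero.mp h).symm
    rwa [norm_mul, norm_zpow, Complex.norm_real, Real.norm_of_nonneg hp.le, norm_one] at this
  rcases hm.lt_or_gt with hm | hm
  · have hpm : p⁻¹ ≤ p ^ m := by
      rw [← zpow_neg_one]
      exact zpow_le_zpow_right_of_le_one₀ hp hp1.le (by omega)
    have : p * p⁻¹ < ‖z‖ * p ^ m := mul_lt_mul hz.1 hpm (by positivity) (norm_nonneg z)
    rw [h', mul_inv_cancel₀ hp.ne'] at this
    exact lt_irrefl _ this
  · have hpm : p ^ m ≤ p := by
      conv_rhs => rw [← zpow_one p]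
      exact zpow_le_zpow_right_of_le_one₀ hp hp1.le (by omega)
    have : ‖z‖ * p ^ m < p⁻¹ * p := mul_lt_mul hz.2 hpm (by positivity) (by positivity)
    rw [h', inv_mul_cancel₀ hp.ne'] at this
    exact lt_irrefl _ this

theorem norm_appellReg_factor_le {p : ℝ} (hp : 0 < p) (hp1 : p < 1) {lo hi : ℝ} (hlo : p < lo)
    (hhi : hi < p⁻¹) {z : ℂ} (hz : lo ≤ ‖z‖) (hz' : ‖z‖ ≤ hi) (m : ℤ) :
    ‖if m = 0 then 0 else (1 - z * (p : ℂ) ^ m)⁻¹‖ ≤ (1 - hi * p)⁻¹ + (lo / p - 1)⁻¹ := by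
  split_ifs with hm
  · have := norm_inv_one_sub_le hp hp1 hlo hhi hz hz' one_ne_zero
    rw [norm_zero]
    exact (norm_nonneg _).trans this
  · exact norm_inv_one_sub_le hp hp1 hlo hhi hz hz' hm

theorem summable_appellReg {p : ℝ} (hp : 0 < p) (hp1 : p < 1) {w z : ℂ} (hw : w ≠ 0)
    (hz : z ∈ annulus p) : Summable fun m : ℤ =>
      thetaTerm ((p : ℂ) ^ 3) (w * z ^ 3) m * if m = 0 then 0 else (1 - z * (p : ℂ) ^ m)⁻¹ := by
  have hz0 := ne_zero_of_mem_annulus hp hz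
  refine ((summable_thetaTerm (pow_ne_zero 3 (ofReal_ne_zero_of_pos hp))
    (norm_pow_lt_one (norm_ofReal_lt_one hp hp1) (by norm_num)) (z := w * z ^ 3) (by positivity)).norm.mul_right
    ((1 - ‖z‖ * p)⁻¹ + (‖z‖ / p - 1)⁻¹)).of_norm_bounded fun m => ?_
  rw [norm_mul]
  gcongr
  exact norm_appellReg_factor_le hp hp1 hz.1 hz.2 le_rfl le_rfl m

theorem appell_eq_add {p : ℝ} (hp : 0 < p) (hp1 : p < 1) {w z : ℂ} (hw : w ≠ 0)
    (hz : z ∈ annulus p) : appell p w z = (1 - z)⁻¹ + appellReg p w z := by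
  have h : HasSum (fun m : ℤ => if m = 0 then (1 - z)⁻¹ else 0) ((1 - z)⁻¹) := by
    simpa using hasSum_ite_eq (0 : ℤ) ((1 - z)⁻¹)
  rw [appell, appellReg, ← (h.add (summable_appellReg hp hp1 hw hz).hasSum).tsum_eq]
  refine tsum_congr fun m => ?_
  split_ifs with hm
  · subst hm
    simp [thetaTerm, tri]
  · simp

theorem differentiableOn_appellReg {p : ℝ} (hp : 0 < p) (hp1 : p < 1) {w : ℂ} (hw : w ≠ 0) :
    DifferentiableOn ℂ (appellReg p w) (annulus p) := by
  intro z hz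
  obtain ⟨lo, hlo, hlo'⟩ := exists_between hz.1
  obtain ⟨hi, hhi, hhi'⟩ := exists_between hz.2
  let U : Set ℂ := {x | lo < ‖x‖ ∧ ‖x‖ < hi}
  have hU : IsOpen U := (isOpen_lt continuous_const continuous_norm).inter
    (isOpen_lt continuous_norm continuous_const)
  have hUp : U ⊆ annulus p := fun x hx => ⟨hlo.trans hx.1, hx.2.trans hhi'⟩
  have hlo0 : 0 < lo := hp.trans hlo
  have hy (x : ℂ) : ‖w * x ^ 3‖ = ‖w‖ * ‖x‖ ^ 3 := by rw [norm_mul, norm_pow]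
  have key := differentiableOn_tsum_thetaTerm_mul (p := (p : ℂ) ^ 3)
    (pow_ne_zero 3 (ofReal_ne_zero_of_pos hp))
    (norm_pow_lt_one (norm_ofReal_lt_one hp hp1) (by norm_num)) hU (y := fun x => w * x ^ 3)
    ((differentiableOn_pow 3).const_mul w) (lo := ‖w‖ * lo ^ 3) (hi := ‖w‖ * hi ^ 3)
    (by have := norm_pos_iff.mpr hw; positivity)
    (fun x hx => by rw [hy]; gcongr; exact hx.1.le)
    (fun x hx => by rw [hy]; gcongr; exact hx.2.le)
    (h := fun m x => if m = 0 then 0 else (1 - x * (p : ℂ) ^ m)⁻¹) (fun m => ?_)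
    (C := (1 - hi * p)⁻¹ + (lo / p - 1)⁻¹)
    (fun m x hx => norm_appellReg_factor_le hp hp1 hlo hhi' hx.1.le hx.2.le m)
  · exact (key.differentiableAt (hU.mem_nhds ⟨hlo', hhi⟩)).differentiableWithinAt
  · by_cases hm : m = 0
    · simp only [hm, if_true]
      exact differentiableOn_const 0
    · simp only [hm, if_false]
      exact ((differentiableOn_const 1).sub (differentiableOn_id.mul_const _)).inv
        fun x hx => one_sub_mul_zpow_ne_zero hp hp1 (hUp hx) hm

/-- The product of the theta function and the Appell sum, with its singularity removed. -/
noncomputable def appellProd (p w z : ℂ) : ℂ :=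
  theta p z * appellReg p w z - dslope (theta p) 1 z

theorem dslope_theta_one_of_ne {p z : ℂ} (hz : z ≠ 1) :
    dslope (theta p) 1 z = -(theta p z * (1 - z)⁻¹) := by
  rw [dslope_of_ne _ hz, slope_def_field, theta_one, sub_zero, div_eq_mul_inv,
    ← neg_sub 1 z, inv_neg]
  ring

theorem appellProd_of_ne {p : ℝ} (hp : 0 < p) (hp1 : p < 1) {w z : ℂ} (hw : w ≠ 0)
    (hz : z ∈ annulus p) (hz1 : z ≠ 1) : appellProd p w z = theta p z * appell p w z := by
  rw [appellProd, dslope_theta_one_of_ne hz1, appell_eq_add hp hp1 hw hz]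
  ring

theorem appellProd_one (p w : ℂ) : appellProd p w 1 = -deriv (theta p) 1 := by
  rw [appellProd, theta_one, dslope_same]
  ring

theorem differentiableOn_dslope_theta {p : ℝ} (hp : 0 < p) (hp1 : p < 1) :
    DifferentiableOn ℂ (dslope (theta p) 1) (annulus p) := by
  have h1 : (1 : ℂ) ∈ annulus p := ⟨by simpa using hp1, by simpa using (one_lt_inv₀ hp).mpr hp1⟩
  refine (Complex.differentiableOn_dslope ((isOpen_annulus p).mem_nhds h1)).mpr fun z hz => ?_
  exact (differentiableAt_theta (ofReal_ne_zero_of_pos hp) (norm_ofReal_lt_one hp hp1)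
    (ne_zero_of_mem_annulus hp hz)).differentiableWithinAt

theorem appellProd_isQuasiPeriodic {p : ℝ} (hp : 0 < p) (hp1 : p < 1) {w : ℂ} (hw : w ≠ 0) :
    IsQuasiPeriodic p 4 w⁻¹ (appellProd p w) where
  differentiableOn := by
    refine DifferentiableOn.sub (DifferentiableOn.mul (fun z hz => ?_)
      (differentiableOn_appellReg hp hp1 hw)) (differentiableOn_dslope_theta hp hp1)
    exact (differentiableAt_theta (ofReal_ne_zero_of_pos hp) (norm_ofReal_lt_one hp hp1)
      (ne_zero_of_mem_annulus hp hz)).differentiableWithinAt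
  map_mul z hz hz' := by
    have hp0 := ofReal_ne_zero_of_pos hp
    have hz0 : z ≠ 0 := norm_pos_iff.mp (by linarith)
    have hnorm : ‖(p : ℂ) * z‖ = p * ‖z‖ := by
      rw [norm_mul, Complex.norm_real, Real.norm_of_nonneg hp.le]
    have hpz : p * ‖z‖ < 1 := by
      have := mul_lt_mul_of_pos_left hz' hp
      rwa [mul_inv_cancel₀ hp.ne'] at this
    have h1 : z ∈ annulus p := ⟨by linarith, hz'⟩
    have h2 : (p : ℂ) * z ∈ annulus p := by
      refine ⟨?_, ?_⟩
      · rw [hnorm]; nlinarith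
      · rw [hnorm]; exact hpz.trans ((one_lt_inv₀ hp).mpr hp1)
    rw [appellProd_of_ne hp hp1 hw h2 (fun h => by rw [h, norm_one] at hnorm; linarith),
      appellProd_of_ne hp hp1 hw h1 (fun h => by rw [h, norm_one] at hz; exact lt_irrefl _ hz),
      theta_mul_left hp0 hz0, appell_mul_left hp0 hw hz0]
    simp only [zpow_neg, Nat.cast_ofNat, zpow_ofNat]
    field_simp

theorem deriv_dslope_theta_one {p : ℝ} (hp : 0 < p) (hp1 : p < 1) :
    deriv (dslope (theta p) 1) 1 = 0 := by
  have h1 : (1 : ℂ) ∈ annulus p := ⟨by simpa using hp1, by simpa using (one_lt_inv₀ hp).mpr hp1⟩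
  have hd := ((differentiableOn_dslope_theta hp hp1).differentiableAt
    ((isOpen_annulus p).mem_nhds h1)).hasDerivAt
  have hinv : HasDerivAt (fun z : ℂ => z⁻¹) (-1) 1 := by
    simpa using hasDerivAt_inv (𝕜 := ℂ) one_ne_zero
  have h := HasDerivAt.comp (1 : ℂ) (h₂ := dslope (theta p) 1) (by simpa only [inv_one] using hd) hinv
  have hsymm : dslope (theta p) 1 ∘ (fun z : ℂ => z⁻¹) =ᶠ[nhds 1] dslope (theta p) 1 := by
    filter_upwards [isOpen_ne.eventually_mem (one_ne_zero (α := ℂ))] with z hz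
    by_cases hz1 : z = 1
    · simp [hz1]
    · have hz1' : z⁻¹ ≠ 1 := by simpa using hz1
      have e1 : z - 1 ≠ 0 := sub_ne_zero.mpr hz1
      have e2 : 1 - z ≠ 0 := sub_ne_zero.mpr (Ne.symm hz1)
      have hz0 : z ≠ 0 := hz
      rw [Function.comp_apply, dslope_theta_one_of_ne hz1, dslope_theta_one_of_ne hz1',
        theta_inv hz, show 1 - z⁻¹ = -(1 - z) * z⁻¹ by field_simp; ring]
      field_simp
  have := (h.congr_of_eventuallyEq hsymm.symm).unique hd
  exact neg_eq_self.mp (by simpa using this)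

theorem hasDerivAt_appellProd_one {p : ℝ} (hp : 0 < p) (hp1 : p < 1) {w : ℂ} (hw : w ≠ 0) :
    HasDerivAt (appellProd p w) (deriv (theta p) 1 * appell p w 1) 1 := by
  have h1 : (1 : ℂ) ∈ annulus p := ⟨by simpa using hp1, by simpa using (one_lt_inv₀ hp).mpr hp1⟩
  have hmem := (isOpen_annulus p).mem_nhds h1
  have h := (((differentiableAt_theta (ofReal_ne_zero_of_pos hp) (norm_ofReal_lt_one hp hp1)
    one_ne_zero).hasDerivAt).mul ((differentiableOn_appellReg hp hp1 hw).differentiableAt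
      hmem).hasDerivAt).sub
    ((differentiableOn_dslope_theta hp hp1).differentiableAt hmem).hasDerivAt
  rw [theta_one, zero_mul, deriv_dslope_theta_one hp hp1, add_zero, sub_zero] at h
  rw [appell_eq_add hp hp1 hw h1, sub_self, inv_zero, zero_add]
  exact h

/-- The exponent `n (3 n + 2 i + 1) / 2`. -/
def appellExp (i n : ℤ) : ℤ := 3 * tri n + (i + 2) * n

theorem two_mul_appellExp (i n : ℤ) : 2 * appellExp i n = n * (3 * n + 2 * i + 1) := by
  have := two_mul_tri n
  rw [appellExp]
  linear_combination 3 * this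

theorem zpow_eq_zpow_of_modEq {t : ℂ} (ht : t ^ 7 = 1) {m n : ℤ} (h : m ≡ n [ZMOD 7]) :
    t ^ m = t ^ n := by
  have ht0 : t ≠ 0 := by rintro rfl; norm_num at ht
  obtain ⟨c, hc⟩ := h.dvd
  rw [show n = m + 7 * c by linarith, zpow_add₀ ht0, zpow_mul,
    show t ^ (7 : ℤ) = 1 by exact_mod_cast ht, one_zpow, mul_one]

theorem zpow_appellExp_add_seven {t : ℂ} (ht : t ^ 7 = 1) (i n : ℤ) :
    t ^ appellExp i (n + 7) = t ^ appellExp i n := by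
  refine zpow_eq_zpow_of_modEq ht (Int.modEq_iff_dvd.mpr ⟨-(3 * n + i + 11), ?_⟩)
  have h1 := two_mul_appellExp i n
  have h2 := two_mul_appellExp i (n + 7)
  linarith

theorem sum_range_seven_eq {g : ℤ → ℂ} (hg : ∀ k, g (k + 7) = g k) {a : ℤ}
    (ha : a = 1 ∨ a = 3 ∨ a = 5) :
    ∑ r ∈ Finset.range 7, g r =
      g 0 + g a + g (2 * a) + g (3 * a) + g (-a) + g (-(2 * a)) + g (-(3 * a)) := by
  have h4 : g (-3) = g 4 := (hg (-3)).symm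
  have h5 : g (-2) = g 5 := (hg (-2)).symm
  have h6 : g (-1) = g 6 := (hg (-1)).symm
  have h9 : g 9 = g 2 := hg 2
  have h10 : g 10 = g 3 := hg 3
  have h15 : g 15 = g 1 := (hg 8).trans (hg 1)
  have k6 : g (-6) = g 1 := (hg (-6)).symm
  have k9 : g (-9) = g 5 := Eq.trans (b := g (-2)) (hg (-9)).symm (hg (-2)).symm
  have k5 : g (-5) = g 2 := (hg (-5)).symm
  have k10 : g (-10) = g 4 := Eq.trans (b := g (-3)) (hg (-10)).symm (hg (-3)).symm
  have k8 : g (-8) = g 6 := Eq.trans (b := g (-1)) (hg (-8)).symm (hg (-1)).symm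
  have k15 : g (-15) = g 6 := Eq.trans (b := g (-8)) (hg (-15)).symm k8
  simp only [Finset.sum_range_succ, Finset.sum_range_zero, Nat.cast_zero, Nat.cast_one,
    Nat.cast_ofNat]
  rcases ha with rfl | rfl | rfl <;> norm_num <;>
    simp only [h4, h5, h6, h9, h10, h15, k6, k9, k5, k10, k15] <;> ring

/-- The linear functional which evaluates the dissected Appell sum. -/
noncomputable def rankFunctional (q t : ℂ) (i : ℤ) (Φ : ℂ → ℂ) : ℂ :=
  7 * deriv Φ 1 - (3 - i) * Φ 1 + 7 * deriv (theta (q ^ 49)) 1 * ∑ r ∈ Finset.range 7,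
    t ^ appellExp i r * ((-1) ^ r * q ^ appellExp i r *
      (Φ (q ^ (7 * (r : ℤ))) / theta (q ^ 49) (q ^ (7 * (r : ℤ)))))

theorem one_mem_annulus {p : ℝ} (hp : 0 < p) (hp1 : p < 1) : (1 : ℂ) ∈ annulus p :=
  ⟨by simpa using hp1, by simpa using (one_lt_inv₀ hp).mpr hp1⟩

theorem sum_mul_rankFunctional {q : ℝ} (hq : 0 < q) (hq1 : q < 1) (t : ℂ) (i : ℤ)
    {ι : Type*} [Fintype ι] {c : ι → ℂ} {F : ι → ℂ → ℂ} (hF : ∀ j, DifferentiableAt ℂ (F j) 1)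
    (h : ∀ z ∈ annulus (q ^ 49), ∑ j, c j * F j z = 0) :
    ∑ j, c j * rankFunctional q t i (F j) = 0 := by
  have h1 := one_mem_annulus (p := q ^ 49) (by positivity) (pow_lt_one₀ hq.le hq1 (by norm_num))
  have hd : ∑ j, c j * deriv (F j) 1 = 0 := by
    have := HasDerivAt.fun_sum (u := Finset.univ) (A := fun j z => c j * F j z)
      (A' := fun j => c j * deriv (F j) 1) (x := 1)
      fun j _ => (hF j).hasDerivAt.const_mul (c j)
    refine this.unique ((hasDerivAt_const (1 : ℂ) (0 : ℂ)).congr_of_eventuallyEq ?_)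
    exact ((isOpen_annulus _).eventually_mem h1).mono h
  have hv := h 1 h1
  have hr : ∀ r ∈ Finset.range 7, ∑ j, c j * F j ((q : ℂ) ^ (7 * (r : ℤ))) = 0 := fun r hr =>
    h _ (zpow_mem_annulus hq hq1 (by omega) (by have := Finset.mem_range.mp hr; omega))
  have e : ∑ j, c j * rankFunctional q t i (F j) = 7 * ∑ j, c j * deriv (F j) 1
      - (3 - i) * ∑ j, c j * F j 1 + 7 * deriv (theta (q ^ 49)) 1 * ∑ r ∈ Finset.range 7,
      t ^ appellExp i r * ((-1) ^ r * q ^ appellExp i r *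
      ((∑ j, c j * F j (q ^ (7 * (r : ℤ)))) / theta (q ^ 49) (q ^ (7 * (r : ℤ))))) := by
    simp only [rankFunctional, Finset.mul_sum, Finset.sum_div, mul_add, mul_sub,
      Finset.sum_add_distrib, Finset.sum_sub_distrib]
    rw [Finset.sum_comm]
    congr 1
    · congr 1 <;> exact Finset.sum_congr rfl fun j _ => by ring
    · exact Finset.sum_congr rfl fun r _ => Finset.sum_congr rfl fun j _ => by ring
  rw [e, hd, hv, Finset.sum_eq_zero fun r hr' => by rw [hr r hr', zero_div, mul_zero, mul_zero]]
  ring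

theorem appellExp_zero (i : ℤ) : appellExp i 0 = 0 := by simp [appellExp, tri]

theorem rankFunctional_appellProd {q : ℝ} (hq : 0 < q) (hq1 : q < 1)
    (hχ : ∀ k : ℤ, ¬ 7 ∣ k → chi q k ≠ 0) (t : ℂ) (i : ℤ) {w : ℂ} (hw : w ≠ 0) :
    rankFunctional q t i (appellProd (q ^ 49) w) = deriv (theta (q ^ 49)) 1 * (3 - i +
      7 * ∑ r ∈ Finset.range 7, t ^ appellExp i r * ((-1) ^ r * q ^ appellExp i r *
        appell (q ^ 49) w (q ^ (7 * (r : ℤ))))) := by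
  have hp : 0 < q ^ 49 := by positivity
  have hp1 : q ^ 49 < 1 := pow_lt_one₀ hq.le hq1 (by norm_num)
  have hd := (hasDerivAt_appellProd_one hp hp1 hw).deriv
  rw [Complex.ofReal_pow] at hd
  rw [rankFunctional, hd, appellProd_one, Finset.sum_range_succ' _ 6, Finset.sum_range_succ' _ 6]
  have : ∀ r ∈ Finset.range 6, appellProd (q ^ 49) w ((q : ℂ) ^ (7 * ((r + 1 : ℕ) : ℤ))) /
      theta (q ^ 49) ((q : ℂ) ^ (7 * ((r + 1 : ℕ) : ℤ))) =
      appell (q ^ 49) w ((q : ℂ) ^ (7 * ((r + 1 : ℕ) : ℤ))) := by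
    intro r hr
    have hr := Finset.mem_range.mp hr
    have hmem := zpow_mem_annulus hq hq1 (k := ((r + 1 : ℕ) : ℤ)) (by omega) (by omega)
    have hθ := theta_zpow_ne_zero (hχ ((r + 1 : ℕ) : ℤ) (by omega))
    have h := appellProd_of_ne hp hp1 hw hmem fun h => hθ (by rw [h, theta_one])
    rw [Complex.ofReal_pow] at h
    rw [h, mul_div_cancel_left₀ _ hθ]
  rw [Finset.sum_congr rfl fun r hr => by rw [this r hr]]
  simp only [Nat.cast_zero, appellExp_zero, mul_zero, zpow_zero, theta_one, div_zero, pow_zero]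
  ring

/-- A product of three theta functions and a monomial. -/
noncomputable def thetaTriple (q : ℂ) (s b c d : ℤ) (z : ℂ) : ℂ :=
  z ^ s * (theta (q ^ 49) (q ^ (-(7 * b)) * z) * theta (q ^ 49) (q ^ (-(7 * c)) * z) *
    theta (q ^ 49) (q ^ (-(7 * d)) * z))

theorem differentiableAt_thetaTriple {q : ℂ} (hq : q ≠ 0) (hq1 : ‖q‖ < 1)
    (s b c d : ℤ) {z : ℂ} (hz : z ≠ 0) : DifferentiableAt ℂ (thetaTriple q s b c d) z := by
  have h (k : ℤ) := (hasDerivAt_theta_mul (pow_ne_zero 49 hq) (norm_pow_lt_one hq1 (by norm_num))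
    (zpow_ne_zero k hq) hz).differentiableAt
  exact (differentiableAt_zpow.mpr (Or.inl hz)).mul (((h _).mul (h _)).mul (h _))

theorem thetaTriple_mul_left {q : ℂ} (hq : q ≠ 0) (s b c d : ℤ) {z : ℂ} (hz : z ≠ 0) :
    thetaTriple q s b c d (q ^ 49 * z) =
      -(q ^ (49 * s + 7 * (b + c + d)) * (z ^ 3)⁻¹) * thetaTriple q s b c d z := by
  rw [thetaTriple, thetaTriple, theta_mul_mul_left (pow_ne_zero _ hq) (zpow_ne_zero _ hq) hz,
    theta_mul_mul_left (pow_ne_zero _ hq) (zpow_ne_zero _ hq) hz,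
    theta_mul_mul_left (pow_ne_zero _ hq) (zpow_ne_zero _ hq) hz, mul_zpow,
    ← zpow_natCast q 49, ← zpow_mul, show 49 * s + 7 * (b + c + d) =
      ((49 : ℕ) : ℤ) * s + 7 * b + 7 * c + 7 * d by push_cast; ring, zpow_add₀ hq, zpow_add₀ hq,
    zpow_add₀ hq, ← zpow_neg, ← zpow_neg, ← zpow_neg, neg_neg, neg_neg, neg_neg]
  field_simp

theorem thetaTriple_zpow {q : ℂ} (hq : q ≠ 0) {i b c d : ℤ} (h : b + c + d = 3 * (2 * i + 1))
    (r : ℤ) : q ^ appellExp i r * thetaTriple q (-(i + 2)) b c d (q ^ (7 * r)) =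
      q ^ (-tri (-b - 3) - tri (-c - 3) - tri (-d - 3)) *
        (chi q (r - b) * chi q (r - c) * chi q (r - d)) := by
  rw [thetaTriple, ← zpow_add₀ hq, ← zpow_add₀ hq, ← zpow_add₀ hq, ← zpow_mul,
    show -(7 * b) + 7 * r = 7 * (r - b) by ring, show -(7 * c) + 7 * r = 7 * (r - c) by ring,
    show -(7 * d) + 7 * r = 7 * (r - d) by ring, theta_zpow_eq hq, theta_zpow_eq hq,
    theta_zpow_eq hq, show -tri (-b - 3) - tri (-c - 3) - tri (-d - 3) = appellExp i r +
      7 * r * -(i + 2) + -tri (r - b - 3) + -tri (r - c - 3) + -tri (r - d - 3) by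
        have h0 := two_mul_appellExp i r
        have h1 := two_mul_tri (r - b - 3)
        have h2 := two_mul_tri (r - c - 3)
        have h3 := two_mul_tri (r - d - 3)
        have h4 := two_mul_tri (-b - 3)
        have h5 := two_mul_tri (-c - 3)
        have h6 := two_mul_tri (-d - 3)
        apply mul_left_cancel₀ (two_ne_zero (α := ℤ))
        linear_combination h1 + h2 + h3 - h4 - h5 - h6 - h0 - 2 * r * h, zpow_add₀ hq,
    zpow_add₀ hq, zpow_add₀ hq, zpow_add₀ hq]
  ring

theorem rankFunctional_theta_mul_thetaTriple {q : ℝ} (hq : 0 < q) (hq1 : q < 1)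
    (hχ : ∀ k : ℤ, ¬ 7 ∣ k → chi q k ≠ 0) (t : ℂ) {i b c d : ℤ}
    (h : b + c + d = 3 * (2 * i + 1)) :
    rankFunctional q t i (fun z => theta (q ^ 49) z * thetaTriple q (-(i + 2)) b c d z) =
      7 * deriv (theta (q ^ 49)) 1 * (q ^ (-tri (-b - 3) - tri (-c - 3) - tri (-d - 3)) *
      ∑ r ∈ Finset.range 7, t ^ appellExp i r * ((-1) ^ (r : ℤ) *
        (chi q (r - b) * chi q (r - c) * chi q (r - d)))) := by
  have hq0 := ofReal_ne_zero_of_pos hq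
  have hqn := norm_ofReal_lt_one hq hq1
  have hd := ((differentiableAt_theta (pow_ne_zero 49 hq0) (norm_pow_lt_one hqn (by norm_num))
    one_ne_zero).hasDerivAt.fun_mul (differentiableAt_thetaTriple hq0 hqn (-(i + 2)) b c d
      one_ne_zero).hasDerivAt).deriv
  have e : ∀ r : ℕ, t ^ appellExp i r * ((-1) ^ (r : ℤ) * (chi q (r - b) * chi q (r - c) *
      chi q (r - d))) * (q : ℂ) ^ (-tri (-b - 3) - tri (-c - 3) - tri (-d - 3)) =
      t ^ appellExp i r * ((-1) ^ r * q ^ appellExp i r *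
        thetaTriple q (-(i + 2)) b c d (q ^ (7 * (r : ℤ)))) := by
    intro r
    rw [zpow_natCast]
    linear_combination -(t ^ appellExp i r * (-1) ^ r) * thetaTriple_zpow hq0 h r
  rw [rankFunctional, hd, mul_comm ((q : ℂ) ^ (-tri (-b - 3) - tri (-c - 3) - tri (-d - 3))),
    Finset.sum_mul, Finset.sum_congr rfl fun r _ => e r, Finset.sum_range_succ' _ 6,
    Finset.sum_range_succ' _ 6]
  have : ∀ r ∈ Finset.range 6, theta (q ^ 49) ((q : ℂ) ^ (7 * ((r + 1 : ℕ) : ℤ))) *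
      thetaTriple q (-(i + 2)) b c d ((q : ℂ) ^ (7 * ((r + 1 : ℕ) : ℤ))) /
      theta (q ^ 49) ((q : ℂ) ^ (7 * ((r + 1 : ℕ) : ℤ))) =
      thetaTriple q (-(i + 2)) b c d ((q : ℂ) ^ (7 * ((r + 1 : ℕ) : ℤ))) := by
    intro r hr
    have hr := Finset.mem_range.mp hr
    exact mul_div_cancel_left₀ _ (theta_zpow_ne_zero (hχ ((r + 1 : ℕ) : ℤ) (by omega)))
  rw [Finset.sum_congr rfl fun r hr => by rw [this r hr]]
  simp only [Nat.cast_zero, appellExp_zero, mul_zero, zpow_zero, theta_one, div_zero, pow_zero]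
  ring

/-- A monomial times a theta function of quadratic argument. -/
noncomputable def thetaDouble (q : ℂ) (i : ℤ) (z : ℂ) : ℂ :=
  z ^ i * theta (q ^ 49) (q ^ (7 * (2 * (2 * i + 1))) * z ^ 2)

theorem hasDerivAt_thetaDouble {q : ℂ} (hq : q ≠ 0) (hq1 : ‖q‖ < 1) (i : ℤ) {z : ℂ} (hz : z ≠ 0) :
    HasDerivAt (thetaDouble q i) (i * z ^ (i - 1) *
      theta (q ^ 49) (q ^ (7 * (2 * (2 * i + 1))) * z ^ 2) + z ^ i *
        (deriv (theta (q ^ 49)) (q ^ (7 * (2 * (2 * i + 1))) * z ^ 2) *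
          (q ^ (7 * (2 * (2 * i + 1))) * (2 * z)))) z := by
  refine (hasDerivAt_zpow i z (Or.inl hz)).mul (HasDerivAt.comp z (h₂ := theta (q ^ 49)) ?_ ?_)
  · exact (differentiableAt_theta (pow_ne_zero 49 hq) (norm_pow_lt_one hq1 (by norm_num))
      (mul_ne_zero (zpow_ne_zero _ hq) (pow_ne_zero 2 hz))).hasDerivAt
  · simpa using (hasDerivAt_pow 2 z).const_mul (q ^ (7 * (2 * (2 * i + 1))))

theorem thetaDouble_mul_left {q : ℂ} (hq : q ≠ 0) (i : ℤ) {z : ℂ} (hz : z ≠ 0) :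
    thetaDouble q i (q ^ 49 * z) = q ^ (-(7 * (11 + i))) * (z ^ 4)⁻¹ * thetaDouble q i z := by
  rw [thetaDouble, thetaDouble, show q ^ (7 * (2 * (2 * i + 1))) * (q ^ 49 * z) ^ 2 =
    q ^ 49 * (q ^ 49 * (q ^ (7 * (2 * (2 * i + 1))) * z ^ 2)) by ring,
    theta_mul_mul (pow_ne_zero _ hq) (mul_ne_zero (zpow_ne_zero _ hq) (pow_ne_zero 2 hz)), mul_zpow,
    ← zpow_natCast q 49, ← zpow_mul, ← zpow_neg, mul_inv, ← zpow_neg, mul_pow,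
    ← zpow_natCast (q ^ _) 2, ← zpow_mul, show -(7 * (11 + i)) = ((49 : ℕ) : ℤ) * i +
      -((49 : ℕ) : ℤ) + -(7 * (2 * (2 * i + 1))) * ((2 : ℕ) : ℤ) by push_cast; ring,
    zpow_add₀ hq, zpow_add₀ hq]
  field_simp

theorem thetaDouble_zpow {q : ℂ} (hq : q ≠ 0) (i r : ℤ) :
    q ^ appellExp i r * (thetaDouble q i (q ^ (7 * r)) / theta (q ^ 49) (q ^ (7 * r))) =
      q ^ (6 - tri (2 * (2 * i + 1) - 3)) * (chi q (2 * r + 2 * (2 * i + 1)) / chi q r) := by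
  rw [thetaDouble, ← zpow_natCast (_ ^ _) 2, ← zpow_mul, ← zpow_mul, ← zpow_add₀ hq,
    show 7 * (2 * (2 * i + 1)) + 7 * r * ((2 : ℕ) : ℤ) = 7 * (2 * r + 2 * (2 * i + 1)) by
      push_cast; ring, theta_zpow_eq hq, theta_zpow_eq hq,
    show 6 - tri (2 * (2 * i + 1) - 3) = appellExp i r + 7 * r * i +
      -tri (2 * r + 2 * (2 * i + 1) - 3) - -tri (r - 3) by
        have h0 := two_mul_appellExp i r
        have h1 := two_mul_tri (2 * r + 2 * (2 * i + 1) - 3)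
        have h2 := two_mul_tri (r - 3)
        have h3 := two_mul_tri (2 * (2 * i + 1) - 3)
        apply mul_left_cancel₀ (two_ne_zero (α := ℤ))
        linear_combination h1 - h2 - h3 - h0, zpow_sub₀ hq, zpow_add₀ hq, zpow_add₀ hq,
    mul_div_mul_comm]
  ring

theorem rankFunctional_thetaDouble {q : ℝ} (hq : 0 < q) (hq1 : q < 1)
    (hχ : ∀ k : ℤ, ¬ 7 ∣ k → chi q k ≠ 0) (t : ℂ) {i : ℤ} (hi : ¬ 7 ∣ (2 * i + 1)) :
    rankFunctional q t i (thetaDouble q i) =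
      q ^ (6 - tri (2 * (2 * i + 1) - 3)) * deriv (theta (q ^ 49)) 1 *
      (chi q (2 * (2 * i + 1)) * (3 * (chi q (3 * (2 * i + 1)) / chi q (2 * i + 1) ^ 2)
          - 5 * (chi q (2 * i + 1) / chi q (2 * (2 * i + 1)) ^ 2)
          - chi q (2 * (2 * i + 1)) / chi q (3 * (2 * i + 1)) ^ 2) +
        7 * ∑ r ∈ Finset.range 7, t ^ appellExp i r * ((-1) ^ (r : ℤ) *
          (chi q (2 * r + 2 * (2 * i + 1)) / chi q r))) := by
  have hq0 := ofReal_ne_zero_of_pos hq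
  have hqn := norm_ofReal_lt_one hq hq1
  have hδ := chiLogDeriv_two_mul hq hq1 hχ hi ⟨i, rfl⟩
  have hθ := theta_zpow_ne_zero (hχ (2 * (2 * i + 1)) (by omega))
  have hd := (hasDerivAt_thetaDouble hq0 hqn i one_ne_zero).deriv
  simp only [one_zpow, one_pow, mul_one, one_mul] at hd
  have hD := deriv_theta_mul_self hθ
  have e : ∀ r : ℕ, t ^ appellExp i r * ((-1) ^ r * q ^ appellExp i r *
      (thetaDouble q i (q ^ (7 * (r : ℤ))) / theta (q ^ 49) (q ^ (7 * (r : ℤ))))) =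
      q ^ (6 - tri (2 * (2 * i + 1) - 3)) * (t ^ appellExp i r * ((-1) ^ (r : ℤ) *
          (chi q (2 * r + 2 * (2 * i + 1)) / chi q r))) := by
    intro r
    rw [zpow_natCast]
    linear_combination (t ^ appellExp i r * (-1) ^ r) * thetaDouble_zpow hq0 i r
  have hv : thetaDouble q i 1 = theta (q ^ 49) (q ^ (7 * (2 * (2 * i + 1)))) := by
    simp [thetaDouble]
  have hθ' := theta_zpow_eq hq0 (2 * (2 * i + 1))
  rw [rankFunctional, hd, Finset.sum_congr rfl fun r _ => e r, ← Finset.mul_sum, hv]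
  rw [chiLogDeriv] at hδ
  push_cast at hδ
  rw [sub_eq_add_neg 6, zpow_add₀ hq0, zpow_ofNat]
  linear_combination 14 * hD + theta (q ^ 49) (q ^ (7 * (2 * (2 * i + 1)))) * hδ +
    (q ^ 6 * deriv (theta (q ^ 49)) 1 *
      (3 * (chi q (3 * (2 * i + 1)) / chi q (2 * i + 1) ^ 2)
          - 5 * (chi q (2 * i + 1) / chi q (2 * (2 * i + 1)) ^ 2)
          - chi q (2 * (2 * i + 1)) / chi q (3 * (2 * i + 1)) ^ 2)) * hθ'

/-- The seven-dissection of the Euler function, up to a factor. -/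
noncomputable def eulerPoly (X Y Z τ : ℂ) : ℂ := -1 + τ * (Y / X) - τ ^ 4 * (Z / Y) + τ ^ 2 * (X / Z)

/-- The contribution of `thetaDouble` to the dissection of the rank generating function. -/
noncomputable def rankPoly (X Y Z τ : ℂ) : ℂ :=
  3 * (Y * Z / X ^ 2) + 2 * (X / Y) - Y ^ 2 / Z ^ 2 + 7 * τ ^ 3 * (X / Z) - 7 * τ ^ 6 * (Z / X)

theorem zpow_appellExp_mul {t : ℂ} (ht : t ^ 7 = 1) (i : ℤ) {k : ℤ} {x : ℕ}
    (h : 7 ∣ 10 * (x : ℤ) - (3 * k ^ 2 + k)) :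
    t ^ appellExp i (k * (2 * i + 1)) = (t ^ (5 * (2 * i + 1) ^ 2)) ^ x := by
  rw [← zpow_natCast, ← zpow_mul]
  refine zpow_eq_zpow_of_modEq ht (Int.modEq_iff_dvd.mpr ?_)
  obtain ⟨c, hc⟩ := h
  have h1 := two_mul_appellExp i (k * (2 * i + 1))
  have h2 : 2 * (5 * (2 * i + 1) ^ 2 * (x : ℤ) - appellExp i (k * (2 * i + 1))) =
      7 * (c * (2 * i + 1) ^ 2) := by linear_combination -h1 + (2 * i + 1) ^ 2 * hc
  omega

theorem sum_zpow_appellExp_mul {t : ℂ} (ht : t ^ 7 = 1) {i : ℤ} (hi : i = 0 ∨ i = 1 ∨ i = 2)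
    {g : ℤ → ℂ} (hg : ∀ k, g (k + 7) = g k) :
    ∑ r ∈ Finset.range 7, t ^ appellExp i r * g r = g 0 + g (2 * (2 * i + 1)) +
      t ^ (5 * (2 * i + 1) ^ 2) * (g (-(2 * (2 * i + 1))) + g (-(3 * (2 * i + 1)))) +
      (t ^ (5 * (2 * i + 1) ^ 2)) ^ 3 * (g (3 * (2 * i + 1)) + g (-(2 * i + 1))) +
      (t ^ (5 * (2 * i + 1) ^ 2)) ^ 6 * g (2 * i + 1) := by
  rw [sum_range_seven_eq (g := fun r => t ^ appellExp i r * g r) (a := 2 * i + 1)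
    (fun k => by rw [hg, zpow_appellExp_add_seven ht]) (by omega)]
  have e1 := zpow_appellExp_mul ht i (k := 1) (x := 6) (by norm_num)
  have e2 := zpow_appellExp_mul ht i (k := 2) (x := 0) (by norm_num)
  have e3 := zpow_appellExp_mul ht i (k := 3) (x := 3) (by norm_num)
  have e4 := zpow_appellExp_mul ht i (k := -1) (x := 3) (by norm_num)
  have e5 := zpow_appellExp_mul ht i (k := -2) (x := 1) (by norm_num)
  have e6 := zpow_appellExp_mul ht i (k := -3) (x := 1) (by norm_num)
  simp only [neg_mul, one_mul] at e1 e2 e3 e4 e5 e6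
  simp only [e1, e2, e3, e4, e5, e6, appellExp_zero, zpow_zero]
  ring

theorem chi_triple_periodic {q : ℂ} (hq : q ≠ 0) (b c d k : ℤ) :
    (-1) ^ (k + 7) * (chi q (k + 7 - b) * chi q (k + 7 - c) * chi q (k + 7 - d)) =
      (-1) ^ k * (chi q (k - b) * chi q (k - c) * chi q (k - d)) := by
  rw [show k + 7 - b = k - b + 7 by ring, show k + 7 - c = k - c + 7 by ring,
    show k + 7 - d = k - d + 7 by ring, chi_add_seven hq, chi_add_seven hq, chi_add_seven hq,
    zpow_add₀ (by norm_num), show ((-1 : ℂ)) ^ (7 : ℤ) = -1 by norm_num]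
  ring

theorem chi_quotient_periodic {q : ℂ} (hq : q ≠ 0) (b k : ℤ) :
    (-1) ^ (k + 7) * (chi q (2 * (k + 7) + b) / chi q (k + 7)) =
      (-1) ^ k * (chi q (2 * k + b) / chi q k) := by
  rw [show 2 * (k + 7) + b = 2 * k + b + 7 + 7 by ring, chi_add_seven hq, chi_add_seven hq,
    chi_add_seven hq, zpow_add₀ (by norm_num), show ((-1 : ℂ)) ^ (7 : ℤ) = -1 by norm_num, div_neg]
  ring

theorem neg_one_zpow_odd_mul (k i : ℤ) : (-1 : ℂ) ^ (k * (2 * i + 1)) = (-1) ^ k := by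
  rw [show k * (2 * i + 1) = k + 2 * (k * i) by ring, zpow_add₀ (by norm_num), zpow_mul]
  simp

section
variable {q t : ℂ} {i : ℤ}

theorem chi_triple_mul (b c d k : ℤ) :
    (-1) ^ (k * (2 * i + 1)) * (chi q (k * (2 * i + 1) - b * (2 * i + 1)) *
      chi q (k * (2 * i + 1) - c * (2 * i + 1)) * chi q (k * (2 * i + 1) - d * (2 * i + 1))) =
    (-1) ^ k * (chi q ((k - b) * (2 * i + 1)) * chi q ((k - c) * (2 * i + 1)) *
      chi q ((k - d) * (2 * i + 1))) := by
  rw [neg_one_zpow_odd_mul, sub_mul, sub_mul, sub_mul]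

theorem sum_chi_triple (hq : q ≠ 0) (ht : t ^ 7 = 1) (hi : i = 0 ∨ i = 1 ∨ i = 2) (b c d : ℤ) :
    ∑ r ∈ Finset.range 7, t ^ appellExp i r * ((-1) ^ (r : ℤ) * (chi q (r - b * (2 * i + 1)) *
      chi q (r - c * (2 * i + 1)) * chi q (r - d * (2 * i + 1)))) =
    chi q ((0 - b) * (2 * i + 1)) * chi q ((0 - c) * (2 * i + 1)) * chi q ((0 - d) * (2 * i + 1)) +
    chi q ((2 - b) * (2 * i + 1)) * chi q ((2 - c) * (2 * i + 1)) * chi q ((2 - d) * (2 * i + 1)) +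
    t ^ (5 * (2 * i + 1) ^ 2) * (chi q ((-2 - b) * (2 * i + 1)) * chi q ((-2 - c) * (2 * i + 1)) *
      chi q ((-2 - d) * (2 * i + 1)) - chi q ((-3 - b) * (2 * i + 1)) *
        chi q ((-3 - c) * (2 * i + 1)) * chi q ((-3 - d) * (2 * i + 1))) +
    (t ^ (5 * (2 * i + 1) ^ 2)) ^ 3 * (- (chi q ((3 - b) * (2 * i + 1)) *
      chi q ((3 - c) * (2 * i + 1)) * chi q ((3 - d) * (2 * i + 1))) -
      chi q ((-1 - b) * (2 * i + 1)) * chi q ((-1 - c) * (2 * i + 1)) *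
        chi q ((-1 - d) * (2 * i + 1))) -
    (t ^ (5 * (2 * i + 1) ^ 2)) ^ 6 * (chi q ((1 - b) * (2 * i + 1)) *
      chi q ((1 - c) * (2 * i + 1)) * chi q ((1 - d) * (2 * i + 1))) := by
  rw [sum_zpow_appellExp_mul (g := fun k => (-1) ^ k * (chi q (k - b * (2 * i + 1)) *
      chi q (k - c * (2 * i + 1)) * chi q (k - d * (2 * i + 1)))) ht hi
    fun k => chi_triple_periodic hq _ _ _ k]
  have e (k : ℤ) := chi_triple_mul (q := q) (i := i) b c d k
  have e0 := e 0
  have e1 := e 1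
  have e2 := e 2
  have e3 := e 3
  have e4 := e (-1)
  have e5 := e (-2)
  have e6 := e (-3)
  have z3 : (-1 : ℂ) ^ (3 : ℤ) = -1 := by norm_num
  have z2 : (-1 : ℂ) ^ (2 : ℤ) = 1 := by norm_num
  have z3' : (-1 : ℂ) ^ (-3 : ℤ) = -1 := by norm_num
  have z2' : (-1 : ℂ) ^ (-2 : ℤ) = 1 := by norm_num
  have z1' : (-1 : ℂ) ^ (-1 : ℤ) = -1 := by norm_num
  rw [z3] at e3
  rw [z2] at e2
  rw [z1'] at e4
  rw [z2'] at e5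
  rw [z3'] at e6
  rw [zpow_one] at e1
  rw [zpow_zero] at e0
  simp only [neg_mul (1 : ℤ), neg_mul (2 : ℤ), neg_mul (3 : ℤ), one_mul, zero_mul] at e0 e1 e2 e3 e4 e5 e6
  simp only [e0, e1, e2, e3, e4, e5, e6]
  ring

end

section
variable {q : ℂ} {i : ℤ}

theorem chi_neg_mul (hq : q ≠ 0) (k a : ℤ) : chi q (-k * a) = -chi q (k * a) := by
  rw [neg_mul, chi_neg hq]

theorem chi_seven_mul (hq : q ≠ 0) (a : ℤ) : chi q (7 * a) = 0 := by
  rw [← zero_add (7 * a), chi_add_seven_mul hq, chi_zero hq, mul_zero]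

variable {t : ℂ}

theorem sum_chi_triple_euler (hq : q ≠ 0) (hχ : ∀ k : ℤ, ¬ 7 ∣ k → chi q k ≠ 0) (ht : t ^ 7 = 1)
    (hi : i = 0 ∨ i = 1 ∨ i = 2) :
    ∑ r ∈ Finset.range 7, t ^ appellExp i r * ((-1) ^ (r : ℤ) * (chi q (r - 0 * (2 * i + 1)) *
      chi q (r - -1 * (2 * i + 1)) * chi q (r - 4 * (2 * i + 1)))) =
    -(chi q (2 * i + 1) * chi q (2 * (2 * i + 1)) * chi q (3 * (2 * i + 1))) *
      ((t ^ (5 * (2 * i + 1) ^ 2)) ^ 6 * eulerPoly (chi q (2 * i + 1)) (chi q (2 * (2 * i + 1)))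
        (chi q (3 * (2 * i + 1))) (t ^ (5 * (2 * i + 1) ^ 2))) := by
  have ha : Odd (2 * i + 1) := odd_two_mul_add_one i
  have h1 := hχ (2 * i + 1) (by omega)
  have h2 := hχ (2 * (2 * i + 1)) (by omega)
  have h3 := hχ (3 * (2 * i + 1)) (by omega)
  have hτ : (t ^ (5 * (2 * i + 1) ^ 2)) ^ 7 = 1 := by
    rw [← zpow_natCast, zpow_comm, zpow_natCast, ht, one_zpow]
  rw [sum_chi_triple hq ht hi]
  generalize 2 * i + 1 = a at *
  norm_num [chi_neg_mul hq, chi_neg hq, chi_zero hq, chi_mul_four hq ha, chi_mul_five hq ha,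
    chi_mul_six hq ha, chi_seven_mul hq, eulerPoly]
  generalize t ^ (5 * a ^ 2) = τ at *
  generalize chi q a = X at *
  generalize chi q (2 * a) = Y at *
  generalize chi q (3 * a) = Z at *
  field_simp
  linear_combination (τ * X ^ 2 * Y + Y ^ 2 * Z - τ ^ 3 * X * Z ^ 2) * hτ

theorem sum_chi_triple_eq_zero (hq : q ≠ 0) (ht : t ^ 7 = 1) (hi : i = 0 ∨ i = 1 ∨ i = 2) :
    ∑ r ∈ Finset.range 7, t ^ appellExp i r * ((-1) ^ (r : ℤ) * (chi q (r - 0 * (2 * i + 1)) *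
      chi q (r - 1 * (2 * i + 1)) * chi q (r - 2 * (2 * i + 1)))) = 0 := by
  have ha : Odd (2 * i + 1) := odd_two_mul_add_one i
  rw [sum_chi_triple hq ht hi]
  generalize 2 * i + 1 = a at *
  norm_num [chi_neg_mul hq, chi_neg hq, chi_zero hq, chi_mul_four hq ha, chi_mul_five hq ha,
    chi_mul_six hq ha, chi_seven_mul hq]
  ring

theorem sum_chi_triple_eq_zero' (hq : q ≠ 0) (ht : t ^ 7 = 1) (hi : i = 0 ∨ i = 1 ∨ i = 2) :
    ∑ r ∈ Finset.range 7, t ^ appellExp i r * ((-1) ^ (r : ℤ) * (chi q (r - 1 * (2 * i + 1)) *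
      chi q (r - 3 * (2 * i + 1)) * chi q (r - -1 * (2 * i + 1)))) = 0 := by
  have ha : Odd (2 * i + 1) := odd_two_mul_add_one i
  rw [sum_chi_triple hq ht hi]
  generalize 2 * i + 1 = a at *
  norm_num [chi_neg_mul hq, chi_neg hq, chi_zero hq, chi_mul_four hq ha, chi_mul_five hq ha,
    chi_mul_six hq ha, chi_seven_mul hq]
  ring

theorem sum_chi_quotient (hq : q ≠ 0) (hχ : ∀ k : ℤ, ¬ 7 ∣ k → chi q k ≠ 0) (ht : t ^ 7 = 1)
    (hi : i = 0 ∨ i = 1 ∨ i = 2) :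
    ∑ r ∈ Finset.range 7, t ^ appellExp i r * ((-1) ^ (r : ℤ) *
      (chi q (2 * r + 2 * (2 * i + 1)) / chi q r)) =
    chi q (2 * i + 1) / chi q (2 * (2 * i + 1)) +
      (t ^ (5 * (2 * i + 1) ^ 2)) ^ 3 * (chi q (2 * i + 1) / chi q (3 * (2 * i + 1))) -
      (t ^ (5 * (2 * i + 1) ^ 2)) ^ 6 * (chi q (3 * (2 * i + 1)) / chi q (2 * i + 1)) := by
  have ha : Odd (2 * i + 1) := odd_two_mul_add_one i
  have h1 := hχ (2 * i + 1) (by omega)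
  have h2 := hχ (2 * (2 * i + 1)) (by omega)
  have h3 := hχ (3 * (2 * i + 1)) (by omega)
  rw [sum_zpow_appellExp_mul (g := fun k => (-1) ^ k * (chi q (2 * k + 2 * (2 * i + 1)) / chi q k))
    ht hi fun k => chi_quotient_periodic hq _ k]
  have s3 := neg_one_zpow_odd_mul 3 i
  have s2 := neg_one_zpow_odd_mul 2 i
  have s1 := ha.neg_one_zpow (α := ℂ)
  simp only [neg_one_zpow_neg, s1, s2, s3, chi_neg hq]
  rw [show 2 * (0 : ℤ) + 2 * (2 * i + 1) = 2 * (2 * i + 1) by ring,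
    show 2 * (2 * (2 * i + 1)) + 2 * (2 * i + 1) = 6 * (2 * i + 1) by ring,
    show 2 * -(2 * (2 * i + 1)) + 2 * (2 * i + 1) = -(2 * (2 * i + 1)) by ring,
    show 2 * -(3 * (2 * i + 1)) + 2 * (2 * i + 1) = -(4 * (2 * i + 1)) by ring,
    show 2 * (3 * (2 * i + 1)) + 2 * (2 * i + 1) = (2 * i + 1) + 7 * (2 * i + 1) by ring,
    show 2 * -(2 * i + 1) + 2 * (2 * i + 1) = 0 by ring,
    show 2 * (2 * i + 1) + 2 * (2 * i + 1) = 4 * (2 * i + 1) by ring,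
    chi_add_seven_mul_odd hq ha, chi_neg hq, chi_neg hq, chi_mul_four hq ha, chi_mul_six hq ha,
    chi_zero hq, div_zero, neg_div_neg_eq, neg_div_neg_eq, div_self h2, div_self h3,
    show (-1 : ℂ) ^ (3 : ℤ) = -1 by norm_num, show (-1 : ℂ) ^ (2 : ℤ) = 1 by norm_num]
  ring
end

section
variable {q : ℝ} {i : ℤ}

theorem theta_mul_thetaTriple_isQuasiPeriodic (hq : 0 < q) (hq1 : q < 1) {b c d : ℤ}
    (h : b + c + d = 3) : IsQuasiPeriodic (q ^ 49) 4 ((q : ℂ) ^ (7 * (11 + i)))⁻¹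
      (fun z => theta ((q : ℂ) ^ 49) z * thetaTriple q (-(i + 2)) (b * (2 * i + 1))
        (c * (2 * i + 1)) (d * (2 * i + 1)) z) := by
  have hq0 := ofReal_ne_zero_of_pos hq
  have hqn := norm_ofReal_lt_one hq hq1
  refine isQuasiPeriodic_of_forall (by positivity) (fun z hz => ?_) fun z hz => ?_
  · exact (differentiableAt_theta (pow_ne_zero _ hq0) (norm_pow_lt_one hqn (by norm_num)) hz).mul
      (differentiableAt_thetaTriple hq0 hqn _ _ _ _ hz)
  · rw [Complex.ofReal_pow, theta_mul_left (pow_ne_zero _ hq0) hz, thetaTriple_mul_left hq0 _ _ _ _ hz,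
      show 49 * -(i + 2) + 7 * (b * (2 * i + 1) + c * (2 * i + 1) + d * (2 * i + 1)) =
        -(7 * (11 + i)) by linear_combination 7 * (2 * i + 1) * h, zpow_neg, zpow_neg, zpow_natCast]
    field_simp

theorem thetaDouble_isQuasiPeriodic (hq : 0 < q) (hq1 : q < 1) :
    IsQuasiPeriodic (q ^ 49) 4 ((q : ℂ) ^ (7 * (11 + i)))⁻¹ (thetaDouble q i) := by
  have hq0 := ofReal_ne_zero_of_pos hq
  have hqn := norm_ofReal_lt_one hq hq1
  refine isQuasiPeriodic_of_forall (by positivity)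
    (fun z hz => (hasDerivAt_thetaDouble hq0 hqn i hz).differentiableAt) fun z hz => ?_
  rw [Complex.ofReal_pow, thetaDouble_mul_left hq0 i hz, zpow_neg, zpow_neg, zpow_natCast]

/-- The products of three values of `chi` with the exponents of `thetaTriple` are linearly
independent. -/
theorem thetaTriple_independent (hq : 0 < q) (hq1 : q < 1) (hχ : ∀ k : ℤ, ¬ 7 ∣ k → chi q k ≠ 0)
    (hi : i = 0 ∨ i = 1 ∨ i = 2) {c₁ c₂ c₃ : ℂ}
    (h : ∀ z ∈ annulus (q ^ 49),
      c₁ * (theta ((q : ℂ) ^ 49) z * thetaTriple q (-(i + 2)) (0 * (2 * i + 1))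
        (-1 * (2 * i + 1)) (4 * (2 * i + 1)) z) +
      c₂ * (theta ((q : ℂ) ^ 49) z * thetaTriple q (-(i + 2)) (0 * (2 * i + 1))
        (1 * (2 * i + 1)) (2 * (2 * i + 1)) z) +
      c₃ * (theta ((q : ℂ) ^ 49) z * thetaTriple q (-(i + 2)) (1 * (2 * i + 1))
        (3 * (2 * i + 1)) (-1 * (2 * i + 1)) z) = 0) : c₁ = 0 ∧ c₂ = 0 ∧ c₃ = 0 := by
  have hq0 := ofReal_ne_zero_of_pos hq
  have ha : Odd (2 * i + 1) := odd_two_mul_add_one i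
  let C (b c d : ℤ) : ℂ := (q : ℂ) ^ (-tri (-(b * (2 * i + 1)) - 3) - tri (-(c * (2 * i + 1)) - 3)
    - tri (-(d * (2 * i + 1)) - 3))
  have hC (b c d : ℤ) : C b c d ≠ 0 := zpow_ne_zero _ hq0
  let P (b c d k : ℤ) : ℂ := (-1) ^ k * (chi q (k - b * (2 * i + 1)) * chi q (k - c * (2 * i + 1)) *
    chi q (k - d * (2 * i + 1)))
  let H (k : ℤ) : ℂ := c₁ * (C 0 (-1) 4 * P 0 (-1) 4 k) + c₂ * (C 0 1 2 * P 0 1 2 k) +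
    c₃ * (C 1 3 (-1) * P 1 3 (-1) k)
  have hP (b c d : ℤ) : Function.Periodic (P b c d) 7 := fun k => chi_triple_periodic hq0 _ _ _ k
  have hH : Function.Periodic H 7 := fun k => by simp only [H, hP _ _ _ k]
  have hr (r : ℤ) (h0 : 0 < r) (h7 : r < 7) : H r = 0 := by
    have hθ := theta_zpow_ne_zero (hχ r (by omega))
    have hz := h _ (zpow_mem_annulus hq hq1 (k := r) (by omega) h7)
    have e1 := thetaTriple_zpow hq0 (i := i) (b := 0 * (2 * i + 1)) (c := -1 * (2 * i + 1))
      (d := 4 * (2 * i + 1)) (by ring) r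
    have e2 := thetaTriple_zpow hq0 (i := i) (b := 0 * (2 * i + 1)) (c := 1 * (2 * i + 1))
      (d := 2 * (2 * i + 1)) (by ring) r
    have e3 := thetaTriple_zpow hq0 (i := i) (b := 1 * (2 * i + 1)) (c := 3 * (2 * i + 1))
      (d := -1 * (2 * i + 1)) (by ring) r
    apply mul_left_cancel₀ hθ
    simp only [H, C, P]
    linear_combination (q : ℂ) ^ appellExp i r * (-1) ^ r * hz -
      theta ((q : ℂ) ^ 49) (q ^ (7 * r)) * (-1) ^ r * (c₁ * e1 + c₂ * e2 + c₃ * e3)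
  have hk (k : ℤ) (hk : ¬ 7 ∣ k) : H k = 0 := by
    have := (hH.int_mul (k / 7)) (k % 7)
    rw [Int.cast_id, Int.emod_add_ediv_mul] at this
    rw [this]
    exact hr _ (by omega) (by omega)
  have n1 := hχ (2 * i + 1) (by omega)
  have n2 := hχ (2 * (2 * i + 1)) (by omega)
  have n3 := hχ (3 * (2 * i + 1)) (by omega)
  have k1 := hk (1 * (2 * i + 1)) (by omega)
  have k2 := hk (2 * (2 * i + 1)) (by omega)
  have k3 := hk (3 * (2 * i + 1)) (by omega)
  simp only [H, P, chi_triple_mul] at k1 k2 k3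
  generalize 2 * i + 1 = a at *
  have h1 : c₁ = 0 := by
    norm_num [chi_neg_mul hq0, chi_neg hq0, chi_zero hq0, n1, n2, n3, hC] at k1
    exact k1
  have h3 : c₃ = 0 := by
    norm_num [chi_neg_mul hq0, chi_neg hq0, chi_zero hq0, n1, n2, n3, hC, h1] at k2
    exact k2
  have h2 : c₂ = 0 := by
    norm_num [chi_zero hq0, n1, n2, n3, hC, h1, h3] at k3
    exact k3
  exact ⟨h1, h2, h3⟩

theorem exists_rank_dissection (hq : 0 < q) (hq1 : q < 1) (hχ : ∀ k : ℤ, ¬ 7 ∣ k → chi q k ≠ 0)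
    (hθ : deriv (theta ((q : ℂ) ^ 49)) 1 ≠ 0) (hi : i = 0 ∨ i = 1 ∨ i = 2) :
    ∃ α γ : ℂ, ∀ t : ℂ, t ^ 7 = 1 → 3 - i + 7 * ∑ r ∈ Finset.range 7, t ^ appellExp i r *
      ((-1) ^ r * q ^ appellExp i r * appell (q ^ 49) (q ^ (7 * (11 + i))) (q ^ (7 * (r : ℤ)))) =
      α * ((t ^ (5 * (2 * i + 1) ^ 2)) ^ 6 * eulerPoly (chi q (2 * i + 1))
        (chi q (2 * (2 * i + 1))) (chi q (3 * (2 * i + 1))) (t ^ (5 * (2 * i + 1) ^ 2))) +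
      γ * rankPoly (chi q (2 * i + 1)) (chi q (2 * (2 * i + 1))) (chi q (3 * (2 * i + 1)))
        (t ^ (5 * (2 * i + 1) ^ 2)) := by
  have hq0 := ofReal_ne_zero_of_pos hq
  have hqn := norm_ofReal_lt_one hq hq1
  have hp1 := pow_lt_one₀ hq.le hq1 (show 49 ≠ 0 by norm_num)
  have hw : (q : ℂ) ^ (7 * (11 + i)) ≠ 0 := zpow_ne_zero _ hq0
  let F : Fin 5 → ℂ → ℂ := ![appellProd ((q : ℂ) ^ 49) (q ^ (7 * (11 + i))),
    fun z => theta ((q : ℂ) ^ 49) z * thetaTriple q (-(i + 2)) (0 * (2 * i + 1))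
        (-1 * (2 * i + 1)) (4 * (2 * i + 1)) z,
    fun z => theta ((q : ℂ) ^ 49) z * thetaTriple q (-(i + 2)) (0 * (2 * i + 1))
        (1 * (2 * i + 1)) (2 * (2 * i + 1)) z,
    fun z => theta ((q : ℂ) ^ 49) z * thetaTriple q (-(i + 2)) (1 * (2 * i + 1))
        (3 * (2 * i + 1)) (-1 * (2 * i + 1)) z, thetaDouble q i]
  have hF (j : Fin 5) : IsQuasiPeriodic (q ^ 49) 4 ((q : ℂ) ^ (7 * (11 + i)))⁻¹ (F j) := by
    fin_cases j
    · simpa [F] using appellProd_isQuasiPeriodic (p := q ^ 49) (by positivity) hp1 hw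
    · exact theta_mul_thetaTriple_isQuasiPeriodic hq hq1 (by norm_num)
    · exact theta_mul_thetaTriple_isQuasiPeriodic hq hq1 (by norm_num)
    · exact theta_mul_thetaTriple_isQuasiPeriodic hq hq1 (by norm_num)
    · exact thetaDouble_isQuasiPeriodic hq hq1
  obtain ⟨c, hc, h⟩ := exists_linear_relation (p := q ^ 49) (by positivity) hp1 (by norm_num)
    (inv_ne_zero hw) hF
  have h1m := one_mem_annulus (p := q ^ 49) (by positivity) hp1
  have hc0 : c 0 ≠ 0 := by
    intro h0
    have h4 : c 4 = 0 := by
      have := h 1 h1m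
      have hθ := theta_zpow_ne_zero (hχ (2 * (2 * i + 1)) (by omega))
      simpa [Fin.sum_univ_five, F, h0, theta_one, thetaDouble, hθ] using this
    obtain ⟨e1, e2, e3⟩ := thetaTriple_independent hq hq1 hχ hi (c₁ := c 1) (c₂ := c 2) (c₃ := c 3)
      fun z hz => by simpa [Fin.sum_univ_five, h0, h4, F] using h z hz
    apply hc
    funext j
    fin_cases j
    · exact h0
    · exact e1
    · exact e2
    · exact e3
    · exact h4
  have hd (j : Fin 5) : DifferentiableAt ℂ (F j) 1 :=
    (hF j).differentiableOn.differentiableAt ((isOpen_annulus _).mem_nhds h1m)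
  refine ⟨c 1 / c 0 * (7 * q ^ (-tri (-(0 * (2 * i + 1)) - 3) - tri (-(-1 * (2 * i + 1)) - 3)
    - tri (-(4 * (2 * i + 1)) - 3)) * (chi q (2 * i + 1) * chi q (2 * (2 * i + 1)) *
      chi q (3 * (2 * i + 1)))), -(c 4 / c 0 * q ^ (6 - tri (2 * (2 * i + 1) - 3))), fun t ht => ?_⟩
  have key := sum_mul_rankFunctional hq hq1 t i hd h
  simp only [Fin.sum_univ_five] at key
  simp only [F, Matrix.cons_val] at key
  rw [rankFunctional_appellProd hq hq1 hχ t i hw,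
    rankFunctional_theta_mul_thetaTriple hq hq1 hχ t (by ring),
    rankFunctional_theta_mul_thetaTriple hq hq1 hχ t (by ring),
    rankFunctional_theta_mul_thetaTriple hq hq1 hχ t (by ring),
    rankFunctional_thetaDouble hq hq1 hχ t (by omega), sum_chi_triple_euler hq0 hχ ht hi,
    sum_chi_triple_eq_zero hq0 ht hi, sum_chi_triple_eq_zero' hq0 ht hi,
    sum_chi_quotient hq0 hχ ht hi] at key
  have n2 := hχ (2 * (2 * i + 1)) (by omega)
  have hY : chi q (2 * (2 * i + 1)) * (5 * (chi q (2 * i + 1) / chi q (2 * (2 * i + 1)) ^ 2)) =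
    5 * (chi q (2 * i + 1) / chi q (2 * (2 * i + 1))) := by field_simp
  apply mul_left_cancel₀ (mul_ne_zero hc0 hθ)
  have e1 : c 1 = c 0 * (c 1 / c 0) := (mul_div_cancel₀ _ hc0).symm
  have e4 : c 4 = c 0 * (c 4 / c 0) := (mul_div_cancel₀ _ hc0).symm
  rw [e1, e4] at key
  generalize c 1 / c 0 = u at *
  generalize c 4 / c 0 = v at *
  rw [rankPoly]
  linear_combination key + (c 0 * v * q ^ (6 - tri (2 * (2 * i + 1) - 3)) * deriv (theta (q ^ 49)) 1) * hY
end

theorem hasSum_int_of_residues {f : ℤ → ℂ} {g : ℕ → ℂ}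
    (h : ∀ r : ℕ, r < 7 → HasSum (fun m : ℤ => f (7 * m + r)) (g r)) :
    HasSum f (∑ r ∈ Finset.range 7, g r) := by
  have hr : ∀ r ∈ Finset.range 7, HasSum (fun n : ℤ => if n % 7 = r then f n else 0) (g r) := by
    intro r hr
    have hr7 := Finset.mem_range.mp hr
    have hinj : Function.Injective fun m : ℤ => 7 * m + (r : ℤ) := fun m n h => by
      simpa using h
    refine (hinj.hasSum_iff fun n hn => if_neg fun h => hn ⟨n / 7, ?_⟩).mp ?_
    · rw [← h]
      exact Int.mul_ediv_add_emod n 7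
    · exact HasSum.congr_fun (h r hr7) fun m => if_pos (by dsimp only; omega)
  refine HasSum.congr_fun (hasSum_sum hr) fun n => ?_
  have h0 := Int.emod_nonneg n (show (7 : ℤ) ≠ 0 by norm_num)
  have h7 := Int.emod_lt_of_pos n (show (0 : ℤ) < 7 by norm_num)
  rw [Finset.sum_eq_single_of_mem (n % 7).toNat (Finset.mem_range.mpr (by omega)),
    if_pos (by omega)]
  intro r _ hne
  exact if_neg (by omega)

theorem hasSum_appell {p : ℝ} (hp : 0 < p) (hp1 : p < 1) {w z : ℂ} (hw : w ≠ 0)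
    (hz : z ∈ annulus p) : HasSum (fun m : ℤ => thetaTerm ((p : ℂ) ^ 3) (w * z ^ 3) m *
      (1 - z * (p : ℂ) ^ m)⁻¹) (appell p w z) := by
  have h : HasSum (fun m : ℤ => if m = 0 then (1 - z)⁻¹ else 0) ((1 - z)⁻¹) := by
    simpa using hasSum_ite_eq (0 : ℤ) ((1 - z)⁻¹)
  rw [appell_eq_add hp hp1 hw hz]
  refine HasSum.congr_fun (h.add (summable_appellReg hp hp1 hw hz).hasSum) fun m => ?_
  split_ifs with hm
  · subst hm
    simp [thetaTerm, tri]
  · simp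

/-- The bilateral series `∑ (-1)ⁿ x ^ (n (3 n + 2 i + 1) / 2) / (1 - x ^ (7 n))`, with `n ≠ 0`. -/
noncomputable def rankSeries (i : ℤ) (x : ℂ) : ℂ :=
  ∑' n : ℤ, (-1) ^ n * x ^ appellExp i n * (1 - x ^ (7 * n))⁻¹

theorem appellExp_seven_mul_add (i m r : ℤ) :
    appellExp i (7 * m + r) = appellExp i r + 49 * 3 * tri m + 7 * (11 + i + 3 * r) * m := by
  have h1 := two_mul_appellExp i (7 * m + r)
  have h2 := two_mul_appellExp i r
  have h3 := two_mul_tri m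
  linarith

theorem neg_one_zpow_seven_mul_add (m r : ℤ) : (-1 : ℂ) ^ (7 * m + r) = (-1) ^ m * (-1) ^ r := by
  rw [zpow_add₀ (by norm_num), zpow_mul]
  norm_num

theorem zpow_appellExp_seven_mul_add {q t : ℂ} (hq : q ≠ 0) (ht : t ^ 7 = 1) (i m r : ℤ) :
    (-1) ^ (7 * m + r) * (t * q) ^ appellExp i (7 * m + r) =
      t ^ appellExp i r * ((-1) ^ r * q ^ appellExp i r) *
        thetaTerm ((q ^ 49) ^ 3) (q ^ (7 * (11 + i)) * (q ^ (7 * r)) ^ 3) m := by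
  rw [neg_one_zpow_seven_mul_add, mul_zpow, thetaTerm,
    zpow_eq_zpow_of_modEq ht (n := appellExp i r), appellExp_seven_mul_add, zpow_add₀ hq,
    zpow_add₀ hq, ← pow_mul, ← zpow_natCast q (49 * 3), ← zpow_natCast (q ^ (7 * r)), ← zpow_mul,
    ← zpow_mul, ← zpow_add₀ hq (7 * (11 + i)), show 7 * (11 + i) + 7 * r * ((3 : ℕ) : ℤ) = 7 * (11 + i + 3 * r) by push_cast; ring, zpow_mul q (7 * _) m]
  · push_cast
    ring
  · rw [appellExp_seven_mul_add]
    refine (Int.modEq_iff_dvd.mpr ⟨-(7 * 3 * tri m + (11 + i + 3 * r) * m), ?_⟩)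
    ring

theorem rankSeries_mul_root {q : ℝ} (hq : 0 < q) (hq1 : q < 1) {t : ℂ} (ht : t ^ 7 = 1) (i : ℤ) :
    rankSeries i (t * q) = ∑ r ∈ Finset.range 7, t ^ appellExp i r *
      ((-1) ^ r * q ^ appellExp i r * appell (q ^ 49) (q ^ (7 * (11 + i))) (q ^ (7 * (r : ℤ)))) := by
  have hq0 := ofReal_ne_zero_of_pos hq
  refine (hasSum_int_of_residues fun r hr => ?_).tsum_eq
  have h := (hasSum_appell (p := q ^ 49) (by positivity) (pow_lt_one₀ hq.le hq1 (by norm_num))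
    (w := (q : ℂ) ^ (7 * (11 + i))) (zpow_ne_zero _ hq0)
    (zpow_mem_annulus hq hq1 (k := r) (by omega) (by omega))).mul_left
    (t ^ appellExp i r * ((-1) ^ r * (q : ℂ) ^ appellExp i r))
  rw [Complex.ofReal_pow] at h
  rw [← mul_assoc]
  refine HasSum.congr_fun h fun m => ?_
  rw [zpow_appellExp_seven_mul_add hq0 ht, zpow_natCast, mul_zpow, zpow_mul t 7,
    show t ^ (7 : ℤ) = 1 by exact_mod_cast ht, one_zpow, one_mul, ← zpow_natCast (q : ℂ) 49,
    ← zpow_mul _ _ m, ← zpow_add₀ hq0, mul_assoc, show 7 * (7 * m + (r : ℤ)) =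
      7 * r + ((49 : ℕ) : ℤ) * m by push_cast; ring]

/-- The pentagonal number series `∑ (-1)ⁿ x ^ (n (3 n + 1) / 2)`. -/
noncomputable def eulerSeries (x : ℂ) : ℂ := ∑' n : ℤ, (-1) ^ n * x ^ appellExp 0 n

theorem eulerSeries_mul_root {q t : ℂ} (hq : q ≠ 0) (hq1 : ‖q‖ < 1) (ht : t ^ 7 = 1) :
    eulerSeries (t * q) = ∑ r ∈ Finset.range 7, t ^ appellExp 0 ((r : ℤ) - 2) *
      ((-1) ^ ((r : ℤ) - 2) * q ^ appellExp 0 ((r : ℤ) - 2)) *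
        cubicTheta (q ^ 49) (q ^ (7 * ((r : ℤ) - 3))) := by
  rw [eulerSeries, ← (Equiv.subRight (2 : ℤ)).tsum_eq]
  refine (hasSum_int_of_residues fun r _ => ?_).tsum_eq
  have hs := summable_thetaTerm (p := (q ^ 49) ^ 3) (z := (q ^ 49) ^ 2 * (q ^ (7 * ((r : ℤ) - 3))) ^ 3)
    (by positivity) (by rw [← pow_mul]; exact norm_pow_lt_one hq1 (by norm_num)) (by positivity)
  refine (hs.hasSum.mul_left _).congr_fun fun m => ?_
  rw [Equiv.subRight_apply, add_sub_assoc, zpow_appellExp_seven_mul_add hq ht]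
  congr 2
  rw [← pow_mul, ← zpow_natCast q, ← zpow_natCast (q ^ _) 3, ← zpow_natCast (q ^ _) 3, ← zpow_mul,
    ← zpow_mul, ← zpow_add₀ hq, ← zpow_add₀ hq]
  congr 1
  push_cast
  ring

theorem cubicTheta_pair {q : ℝ} (hq : 0 < q) (hq1 : q < 1) (hχ : ∀ k : ℤ, ¬ 7 ∣ k → chi q k ≠ 0)
    {ω : ℂ} (hω : ω ^ 2 + ω + 1 = 0) (hθ : theta ((q : ℂ) ^ 49) ω ≠ 0) {s : ℤ} (hs : 0 < s)
    (hs' : s < 4) :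
    (q : ℂ) ^ appellExp 0 (1 - s) * cubicTheta (q ^ 49) (q ^ (7 * -s)) +
      q ^ appellExp 0 (1 + s) * cubicTheta (q ^ 49) (q ^ (7 * s)) =
      q ^ 2 * cubicTheta (q ^ 49) 1 * (chi q (2 * s) / chi q s) := by
  have hq0 := ofReal_ne_zero_of_pos hq
  have h := quintuple (p := q ^ 49) (by positivity) (pow_lt_one₀ hq.le hq1 (by norm_num)) hω
    (by rwa [Complex.ofReal_pow]) (zpow_mem_annulus hq hq1 (k := -s) (by omega) (by omega))
  have n1 := hχ s (by omega)
  have hsq : ((q : ℂ) ^ (7 * -s)) ^ 2 = q ^ (7 * (-(2 * s))) := by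
    rw [← zpow_natCast, ← zpow_mul]
    congr 1
    push_cast
    ring
  rw [Complex.ofReal_pow, oddTheta, hsq, theta_zpow_eq hq0, theta_zpow_eq hq0, chi_neg hq0,
    chi_neg hq0, ← zpow_neg, show -(7 * -s) = 7 * s by ring] at h
  have e1 : appellExp 0 (1 + s) = appellExp 0 (1 - s) + 7 * s := by
    have h1 := two_mul_appellExp 0 (1 + s)
    have h2 := two_mul_appellExp 0 (1 - s)
    linarith
  have e2 : appellExp 0 (1 - s) + 7 * s + -tri (-(2 * s) - 3) = 2 + -tri (-s - 3) := by
    have h1 := two_mul_tri (-(2 * s) - 3)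
    have h2 := two_mul_appellExp 0 (1 - s)
    have h3 := two_mul_tri (-s - 3)
    linarith
  have e3 : (q : ℂ) ^ appellExp 0 (1 - s) * q ^ (7 * s) * q ^ (-tri (-(2 * s) - 3)) =
      q ^ 2 * q ^ (-tri (-s - 3)) := by
    rw [← zpow_add₀ hq0, ← zpow_add₀ hq0, e2, zpow_add₀ hq0]
    norm_cast
  rw [e1, zpow_add₀ hq0]
  have hne : (q : ℂ) ^ (-tri (-s - 3)) * -chi q s ≠ 0 :=
    mul_ne_zero (zpow_ne_zero _ hq0) (neg_ne_zero.mpr n1)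
  apply mul_right_cancel₀ hne
  have e4 : chi q (2 * s) / chi q s * chi q s = chi q (2 * s) := div_mul_cancel₀ _ n1
  linear_combination (q : ℂ) ^ appellExp 0 (1 - s) * h - chi q (2 * s) *
    cubicTheta (q ^ 49) 1 * e3 + q ^ 2 * cubicTheta (q ^ 49) 1 * q ^ (-tri (-s - 3)) * e4

theorem eulerSeries_mul_root_eq {q : ℝ} (hq : 0 < q) (hq1 : q < 1)
    (hχ : ∀ k : ℤ, ¬ 7 ∣ k → chi q k ≠ 0) {ω : ℂ} (hω : ω ^ 2 + ω + 1 = 0)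
    (hθ : theta ((q : ℂ) ^ 49) ω ≠ 0) {t : ℂ} (ht : t ^ 7 = 1) :
    eulerSeries (t * q) = q ^ 2 * cubicTheta (q ^ 49) 1 *
      (t ^ 2 * eulerPoly (chi q 1) (chi q 2) (chi q 3) (t ^ 5)) := by
  have hq0 := ofReal_ne_zero_of_pos hq
  have c1 := cubicTheta_pair hq hq1 hχ hω hθ (s := 1) (by norm_num) (by norm_num)
  have c2 := cubicTheta_pair hq hq1 hχ hω hθ (s := 2) (by norm_num) (by norm_num)
  have c3 := cubicTheta_pair hq hq1 hχ hω hθ (s := 3) (by norm_num) (by norm_num)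
  have e4 : chi q 4 = chi q 3 := chi_mul_four hq0 (a := 1) odd_one
  have e6 : chi q 6 = chi q 1 := chi_mul_six hq0 (a := 1) odd_one
  rw [eulerSeries_mul_root hq0 (norm_ofReal_lt_one hq hq1) ht]
  have z3 : (-1 : ℂ) ^ (3 : ℤ) = -1 := by norm_num
  have z2 : (-1 : ℂ) ^ (2 : ℤ) = 1 := by norm_num
  have z4 : (-1 : ℂ) ^ (4 : ℤ) = 1 := by norm_num
  have z2' : (-1 : ℂ) ^ (-2 : ℤ) = 1 := by norm_num
  have z1' : (-1 : ℂ) ^ (-1 : ℤ) = -1 := by norm_num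
  have ap : appellExp 0 (-2) = 5 ∧ appellExp 0 (-1) = 1 ∧ appellExp 0 0 = 0 ∧ appellExp 0 1 = 2 ∧
    appellExp 0 2 = 7 ∧ appellExp 0 3 = 15 ∧ appellExp 0 4 = 26 := by decide
  obtain ⟨a1, a2, a3, a4, a5, a6, a7⟩ := ap
  simp only [Finset.sum_range_succ, Finset.sum_range_zero]
  norm_num [z3, z2, z4, z2', z1', a1, a2, a3, a4, a5, a6, a7, e4, e6] at c1 c2 c3 ⊢
  rw [eulerPoly]
  have h12 : t ^ 12 = t ^ 5 := by linear_combination t ^ 5 * ht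
  have h15 : t ^ 15 = t := by linear_combination (t ^ 8 + t) * ht
  have h22 : t ^ 22 = t := by linear_combination (t ^ 15 + t ^ 8 + t) * ht
  have h26 : t ^ 26 = t ^ 5 := by linear_combination (t ^ 19 + t ^ 12 + t ^ 5) * ht
  rw [h15, h26, ht]
  linear_combination c1 - t * c2 + t ^ 5 * c3 - q ^ 2 * cubicTheta (q ^ 49) 1 *
    (chi q 2 / chi q 1 * ht - chi q 3 / chi q 2 * h22 + chi q 1 / chi q 3 * h12)

theorem eulerPoly_chi_mul {q t : ℂ} (hq : q ≠ 0) (ht : t ^ 7 = 1) {i : ℤ}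
    (hi : i = 0 ∨ i = 1 ∨ i = 2) :
    eulerPoly (chi q (2 * i + 1)) (chi q (2 * (2 * i + 1))) (chi q (3 * (2 * i + 1)))
      (t ^ (5 * (2 * i + 1) ^ 2)) = eulerPoly (chi q 1) (chi q 2) (chi q 3) (t ^ 5) := by
  have e5 : chi q 5 = chi q 2 := chi_mul_five hq (a := 1) odd_one
  have e6 : chi q 6 = chi q 1 := chi_mul_six hq (a := 1) odd_one
  have e9 : chi q 9 = -chi q 2 := chi_add_seven hq 2
  have e10 : chi q 10 = -chi q 3 := chi_add_seven hq 3
  have e15 : chi q 15 = chi q 1 := by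
    rw [← neg_neg (chi q 1), ← chi_add_seven hq 1, ← chi_add_seven hq]
    norm_num
  rcases hi with rfl | rfl | rfl
  · norm_num
  · have : t ^ (45 : ℤ) = t ^ 3 := zpow_eq_zpow_of_modEq ht (n := (3 : ℕ)) (by decide)
    norm_num [e6, e9, this, eulerPoly]
    linear_combination (t ^ 5 * (chi q 2 / chi q 1) + t ^ 6 * (t ^ 7 + 1) * (chi q 3 / chi q 2) -
      t ^ 3 * (chi q 1 / chi q 3)) * ht
  · have : t ^ (125 : ℤ) = t ^ 6 := zpow_eq_zpow_of_modEq ht (n := (6 : ℕ)) (by decide)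
    norm_num [e5, e10, e15, this, eulerPoly]
    linear_combination (t ^ 5 * (chi q 2 / chi q 1) + t ^ 6 * (t ^ 7 + 1) * (chi q 3 / chi q 2) +
      t ^ 10 * (t ^ 7 + 1) * (chi q 1 / chi q 3)) * ht

/-- The circulant determinant of `-1 + a τ + c τ ^ 2 - b τ ^ 4` modulo `τ ^ 7 - 1`, for
`a * b * c = 1`. -/
def eulerDet (a b c : ℂ) : ℂ :=
  a ^ 7 + 7 * a ^ 5 * c + 14 * a ^ 3 * c ^ 2 - 14 * a ^ 2 * b ^ 3 - 7 * a * b ^ 5 - b ^ 7 +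
    14 * b ^ 2 * c ^ 3 - 7 * b * c ^ 5 + c ^ 7 - 8

/-- The coefficients of the adjugate of `-1 + a τ + c τ ^ 2 - b τ ^ 4` modulo `τ ^ 7 - 1`, for
`a * b * c = 1`. -/
def eulerAdj (a b c : ℂ) : Fin 7 → ℂ :=
  ![-a ^ 5 * c + 3 * a ^ 3 * b - 4 * a ^ 3 * c ^ 2 + 4 * a ^ 2 * b ^ 3 + a * b ^ 5 - 3 * a * c ^ 3 +
      3 * b ^ 3 * c - 4 * b ^ 2 * c ^ 3 + b * c ^ 5 + 8,
    2 * a ^ 4 * b + a ^ 4 * c ^ 2 + a ^ 3 * b ^ 3 + 3 * a ^ 2 * c ^ 3 + 3 * a + b ^ 5 * c +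
      2 * b ^ 2 - 6 * b * c ^ 2 + c ^ 4,
    a ^ 5 * b - a ^ 3 * c ^ 3 + 2 * a ^ 2 + 6 * a * b ^ 2 - 2 * a * c ^ 4 + b ^ 4 -
      3 * b ^ 3 * c ^ 2 + b ^ 2 * c ^ 4 + 3 * c,
    -a ^ 3 + 6 * a ^ 2 * b ^ 2 + a ^ 2 * c ^ 4 + 5 * a * b ^ 4 + b ^ 6 - b ^ 2 * c -
      4 * b * c ^ 3 + c ^ 5,
    a ^ 4 + 3 * a ^ 3 * b ^ 2 + a ^ 2 * b ^ 4 + 6 * a ^ 2 * c - a * c ^ 5 - 2 * b ^ 4 * c +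
      b ^ 3 * c ^ 3 - 3 * b + 2 * c ^ 2,
    a ^ 5 + a ^ 4 * b ^ 2 + 4 * a ^ 3 * c - a * c ^ 2 + b ^ 3 + 6 * b ^ 2 * c ^ 2 - 5 * b * c ^ 4 +
      c ^ 6,
    a ^ 6 + 5 * a ^ 4 * c + a ^ 2 * b + 6 * a ^ 2 * c ^ 2 - 4 * a * b ^ 3 - b ^ 5 + b ^ 4 * c ^ 2 -
      c ^ 3]

theorem eulerDet_rotate (a b c : ℂ) : eulerDet c (-a) (-b) = eulerDet a b c := by
  simp only [eulerDet]
  ring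

set_option maxHeartbeats 1000000 in
-- the identity is a combination of `h` and `ht` with large coefficients
theorem sum_eulerAdj_mul {a b c τ : ℂ} (h : a * b * c = 1) (ht : τ ^ 7 = 1) :
    (∑ k, eulerAdj a b c k * τ ^ (k : ℕ)) * (-1 + τ * a - τ ^ 4 * b + τ ^ 2 * c) =
      eulerDet a b c := by
  simp only [Fin.sum_univ_seven, eulerAdj, eulerDet, Matrix.cons_val]
  norm_num
  grind

set_option maxHeartbeats 1000000 in
-- the identity is a combination of `h` and `hK` with large coefficients
theorem eulerAdj_klein {a b c : ℂ} (h : a * b * c = 1) (hK : b ^ 3 * c + b ^ 2 * c ^ 3 = 1) :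
    eulerAdj a b c 0 * (3 * (a ^ 2 * b) + 2 * (b * c) - a ^ 2 * c ^ 2) +
      eulerAdj a b c 4 * (7 * c) - eulerAdj a b c 1 * (7 * (a * b)) = 0 := by
  have hb : b * c ≠ 0 := fun h0 => by simp [mul_assoc, h0] at h
  have ha : a = b ^ 2 + b * c ^ 2 := mul_right_cancel₀ hb (by linear_combination h - hK)
  subst ha
  simp only [eulerAdj, Matrix.cons_val]
  grind

theorem sum_pow_primitiveRoot {ξ : ℂ} (hξ : IsPrimitiveRoot ξ 7) (k : ℕ) :
    ∑ j ∈ Finset.range 7, (ξ ^ j) ^ k = if 7 ∣ k then 7 else 0 := by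
  simp only [← pow_mul, fun j => mul_comm j k]
  simp only [pow_mul]
  split_ifs with h
  · simp [(hξ.pow_eq_one_iff_dvd k).mpr h]
  · have h1 : ξ ^ k ≠ 1 := fun h1 => h ((hξ.pow_eq_one_iff_dvd k).mp h1)
    rw [geom_sum_eq h1, ← pow_mul, mul_comm, pow_mul, hξ.pow_eq_one]
    simp

theorem eulerPoly_ne_zero {X Y Z : ℂ} (hX : X ≠ 0) (hY : Y ≠ 0) (hZ : Z ≠ 0)
    (hdet : eulerDet (Y / X) (Z / Y) (X / Z) ≠ 0) {τ : ℂ} (ht : τ ^ 7 = 1) :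
    eulerPoly X Y Z τ ≠ 0 := by
  intro h
  have := sum_eulerAdj_mul (a := Y / X) (b := Z / Y) (c := X / Z) (by field_simp) ht
  rw [eulerPoly] at h
  rw [h, mul_zero] at this
  exact hdet this.symm

theorem sum_rankPoly_div_eulerPoly {X Y Z : ℂ} (hX : X ≠ 0) (hY : Y ≠ 0) (hZ : Z ≠ 0)
    (hdet : eulerDet (Y / X) (Z / Y) (X / Z) ≠ 0)
    (hK : Z ^ 3 * X - Y ^ 3 * Z + X ^ 3 * Y = 0) {ξ : ℂ}
    (hξ : IsPrimitiveRoot ξ 7) :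
    ∑ j ∈ Finset.range 7, rankPoly X Y Z (ξ ^ j) / eulerPoly X Y Z (ξ ^ j) = 0 := by
  have habc : Y / X * (Z / Y) * (X / Z) = 1 := by field_simp
  set g := eulerAdj (Y / X) (Z / Y) (X / Z) with hg
  have hterm (j : ℕ) : rankPoly X Y Z (ξ ^ j) / eulerPoly X Y Z (ξ ^ j) =
      (eulerDet (Y / X) (Z / Y) (X / Z))⁻¹ *
        ((∑ k, g k * (ξ ^ j) ^ (k : ℕ)) * rankPoly X Y Z (ξ ^ j)) := by
    have ht : (ξ ^ j) ^ 7 = 1 := by rw [pow_right_comm, hξ.pow_eq_one, one_pow]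
    have hE := eulerPoly_ne_zero hX hY hZ hdet ht
    have := sum_eulerAdj_mul habc ht
    rw [← hg, ← eulerPoly] at this
    rw [div_eq_iff hE, mul_assoc, mul_right_comm, this, inv_mul_cancel_left₀ hdet]
  have hK' := eulerAdj_klein habc (by field_simp; linear_combination hK)
  rw [← hg] at hK'
  have hsum (j : ℕ) : (∑ k, g k * (ξ ^ j) ^ (k : ℕ)) * rankPoly X Y Z (ξ ^ j) =
      ∑ k, g k * ((3 * (Y * Z / X ^ 2) + 2 * (X / Y) - Y ^ 2 / Z ^ 2) * (ξ ^ j) ^ (k : ℕ) +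
        7 * (X / Z) * (ξ ^ j) ^ (k + 3 : ℕ) - 7 * (Z / X) * (ξ ^ j) ^ (k + 6 : ℕ)) := by
    rw [Finset.sum_mul]
    refine Finset.sum_congr rfl fun k _ => ?_
    rw [rankPoly]
    ring
  simp only [hterm, ← Finset.mul_sum, hsum]
  rw [Finset.sum_comm]
  simp only [← Finset.mul_sum, Finset.sum_sub_distrib, Finset.sum_add_distrib,
    sum_pow_primitiveRoot hξ, Fin.sum_univ_seven]
  norm_num
  right
  have e1 : Y * Z / X ^ 2 = (Y / X) ^ 2 * (Z / Y) := by field_simp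
  have e2 : X / Y = Z / Y * (X / Z) := by field_simp
  have e3 : Y ^ 2 / Z ^ 2 = (Y / X) ^ 2 * (X / Z) ^ 2 := by field_simp
  have e4 : Z / X = Y / X * (Z / Y) := by field_simp
  rw [e1, e2, e3, e4]
  linear_combination 7 * hK'

theorem appellExp_succ (i k : ℕ) :
    appellExp i ((k : ℤ) + 1) = (((k + 1) * (i + 1) + 3 * (k + 1).choose 2 + (k + 1) : ℕ) : ℤ) := by
  have h1 := two_mul_appellExp i ((k : ℤ) + 1)
  have h2 : ((k + 1).choose 2 : ℤ) * 2 = (k + 1) * k := by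
    rw [Nat.choose_two_right, Nat.add_sub_cancel]
    exact_mod_cast Nat.div_mul_cancel (even_iff_two_dvd.mp (by
      simpa [mul_comm] using Nat.even_mul_succ_self k))
  push_cast
  linarith

theorem appellExp_neg_succ (i k : ℕ) :
    appellExp i (-((k : ℤ) + 1)) + (k + 1) * i = ((3 * (k + 1).choose 2 + (k + 1) : ℕ) : ℤ) := by
  have h1 := two_mul_appellExp i (-((k : ℤ) + 1))
  have h2 : ((k + 1).choose 2 : ℤ) * 2 = (k + 1) * k := by
    rw [Nat.choose_two_right, Nat.add_sub_cancel]
    exact_mod_cast Nat.div_mul_cancel (even_iff_two_dvd.mp (by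
      simpa [mul_comm] using Nat.even_mul_succ_self k))
  push_cast
  linarith

theorem eulerSeries_eq {x : ℂ} (hx1 : ‖x‖ < 1) :
    eulerSeries x = 1 - ∑' k, rankTerm 1 x k - ∑' k, rankTerm 0 x k := by
  have h1 : HasSum (fun n : ℕ => (-1 : ℂ) ^ (n : ℤ) * x ^ appellExp 0 n)
      (1 - ∑' k, rankTerm 1 x k) := by
    rw [← hasSum_nat_add_iff' 1, show 1 - ∑' k, rankTerm 1 x k - ∑ n ∈ Finset.range 1,
      (-1 : ℂ) ^ (n : ℤ) * x ^ appellExp 0 n = -∑' k, rankTerm 1 x k by simp [appellExp_zero]]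
    refine ((summable_rankTerm 1 hx1).hasSum.neg).congr_fun fun k => ?_
    have := appellExp_succ 0 k
    push_cast at this ⊢
    rw [this, rankTerm, ← zpow_natCast x, zpow_add₀ (by norm_num), zpow_natCast]
    push_cast
    ring
  have h2 : HasSum (fun n : ℕ => (-1 : ℂ) ^ (-(n + 1 : ℤ)) * x ^ appellExp 0 (-(n + 1)))
      (-∑' k, rankTerm 0 x k) := by
    refine ((summable_rankTerm 0 hx1).hasSum.neg).congr_fun fun k => ?_
    have := appellExp_neg_succ 0 k
    push_cast at this
    rw [mul_zero, add_zero] at this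
    rw [this, rankTerm, ← zpow_natCast x, neg_one_zpow_neg, zpow_add₀ (by norm_num), zpow_natCast]
    push_cast
    ring_nf
  rw [eulerSeries, (HasSum.of_nat_of_neg_add_one
    (f := fun n : ℤ => (-1 : ℂ) ^ n * x ^ appellExp 0 n) h1 h2).tsum_eq]
  ring

theorem partitionGF_mul_eulerSeries {x : ℂ} (hx1 : ‖x‖ < 1 / 4) :
    partitionGF x * eulerSeries x = 1 := by
  rw [eulerSeries_eq (by linarith), partitionGF_mul_one_sub hx1]

theorem one_sub_pow_ne_zero {x : ℂ} (hx1 : ‖x‖ < 1) {m : ℕ} (hm : m ≠ 0) : 1 - x ^ m ≠ 0 := by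
  intro h
  have h1 := pow_lt_one₀ (norm_nonneg x) hx1 hm
  rw [← norm_pow, ← sub_eq_zero.mp h, norm_one] at h1
  exact lt_irrefl _ h1

theorem summable_lambertSeries (c : ℕ) {x : ℂ} (hx1 : ‖x‖ < 1) :
    Summable fun k => rankTerm c x k / (1 - x ^ (7 * (k + 1))) := by
  refine Summable.of_norm_bounded (g := fun k => ‖rankTerm c x k‖ * (1 - ‖x‖)⁻¹)
    ((summable_rankTerm c hx1).norm.mul_right _) fun k => ?_
  rw [norm_div, div_eq_mul_inv]
  have h : 0 < 1 - ‖x‖ := by linarith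
  gcongr
  have h1 : ‖x ^ (7 * (k + 1))‖ ≤ ‖x‖ := by
    rw [norm_pow]
    exact pow_le_of_le_one (norm_nonneg x) hx1.le (by omega)
  have := norm_sub_norm_le 1 (x ^ (7 * (k + 1)))
  rw [norm_one] at this
  linarith

theorem rankSeries_eq {x : ℂ} (hx : x ≠ 0) (hx1 : ‖x‖ < 1) {i : ℕ} (hi : i ≤ 7) :
    rankSeries i x = lambertSeries (7 - i) x - lambertSeries (i + 1) x := by
  have h1 : HasSum (fun n : ℕ => (-1 : ℂ) ^ (n : ℤ) * x ^ appellExp i n * (1 - x ^ (7 * (n : ℤ)))⁻¹)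
      (-lambertSeries (i + 1) x) := by
    rw [← hasSum_nat_add_iff' 1, show -lambertSeries (i + 1) x - ∑ n ∈ Finset.range 1,
      (-1 : ℂ) ^ (n : ℤ) * x ^ appellExp i n * (1 - x ^ (7 * (n : ℤ)))⁻¹ =
        -lambertSeries (i + 1) x by simp]
    refine ((summable_lambertSeries (i + 1) hx1).hasSum.neg).congr_fun fun k => ?_
    have := appellExp_succ i k
    push_cast at this ⊢
    rw [this, rankTerm, ← zpow_natCast x, ← zpow_natCast x, zpow_add₀ (by norm_num) (k : ℤ),
      zpow_natCast, div_eq_mul_inv]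
    push_cast
    ring
  have h2 : HasSum (fun n : ℕ => (-1 : ℂ) ^ (-(n + 1 : ℤ)) * x ^ appellExp i (-(n + 1)) *
      (1 - x ^ (7 * (-(n + 1) : ℤ)))⁻¹) (lambertSeries (7 - i) x) := by
    refine ((summable_lambertSeries (7 - i) hx1).hasSum).congr_fun fun k => ?_
    have h3 := appellExp_neg_succ i k
    have h4 : appellExp i (-((k : ℤ) + 1)) + (7 * (k + 1) : ℕ) =
        (((k + 1) * (7 - i) + 3 * (k + 1).choose 2 + (k + 1) : ℕ) : ℤ) := by
      push_cast [hi] at h3 ⊢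
      linear_combination h3
    have h5 : (1 - x ^ (7 * (-(k + 1) : ℤ)))⁻¹ =
        -(x ^ ((7 * (k + 1) : ℕ) : ℤ) / (1 - x ^ (7 * (k + 1)))) := by
      have h6 := one_sub_pow_ne_zero hx1 (m := 7 * (k + 1)) (by omega)
      have h7 : x ^ (7 * (-(k + 1) : ℤ)) = (x ^ (7 * (k + 1)))⁻¹ := by
        rw [← zpow_natCast, ← zpow_neg]
        push_cast
        ring_nf
      rw [h7, zpow_natCast]
      have h8 : x ^ (7 * (k + 1)) ≠ 0 := pow_ne_zero _ hx
      have h9 : x ^ (7 * (k + 1)) - 1 ≠ 0 := fun h => h6 (by linear_combination -h)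
      rw [show 1 - (x ^ (7 * (k + 1)))⁻¹ = (x ^ (7 * (k + 1)) - 1) / x ^ (7 * (k + 1)) by
        field_simp, inv_div, ← div_neg, neg_sub]
    rw [h5, rankTerm, ← zpow_natCast x ((k + 1) * (7 - i) + _ + _), ← h4, zpow_add₀ hx,
      neg_one_zpow_neg, zpow_add₀ (by norm_num), zpow_natCast (-1 : ℂ)]
    ring
  rw [rankSeries, (HasSum.of_nat_of_neg_add_one (f := fun n : ℤ =>
    (-1 : ℂ) ^ n * x ^ appellExp i n * (1 - x ^ (7 * n))⁻¹) h1 h2).tsum_eq]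
  ring

/-- The defect of equidistribution between the ranks counted by `sumRankGe (i + 1)` and
`sumRankGe (7 - i)`. -/
def rankDefect (i n : ℕ) : ℤ :=
  (3 - i) * Fintype.card (Nat.Partition n) - 7 * (sumRankGe (i + 1) n - sumRankGe (7 - i) n)

theorem hasSum_rankDefect {i : ℕ} (hi : i < 3) {x : ℂ} (hx : x ≠ 0) (hx1 : ‖x‖ < 1 / 4) :
    HasSum (fun n => (rankDefect i n : ℂ) * x ^ n)
      (partitionGF x * (3 - i + 7 * rankSeries i x)) := by
  have h := ((summable_partitionGF hx1).hasSum.mul_left (3 - i : ℂ)).sub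
    (((hasSum_sumRankGe (c := i + 1) (by omega) hx1).sub
      (hasSum_sumRankGe (c := 7 - i) (by omega) hx1)).mul_left 7)
  rw [← partitionGF] at h
  rw [rankSeries_eq hx (by linarith) (by omega), show partitionGF x *
    (3 - i + 7 * (lambertSeries (7 - i) x - lambertSeries (i + 1) x)) = (3 - i) * partitionGF x -
      7 * (partitionGF x * lambertSeries (i + 1) x - partitionGF x * lambertSeries (7 - i) x) by
    ring]
  refine (h).congr_fun fun n => ?_
  rw [rankDefect]
  push_cast
  ring

theorem tsum_rankDefect_eq_zero {q : ℝ} (hq : 0 < q) (hq1 : q < 1 / 4)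
    (hχ : ∀ k : ℤ, ¬ 7 ∣ k → chi q k ≠ 0) (hθ' : deriv (theta ((q : ℂ) ^ 49)) 1 ≠ 0) {ω : ℂ}
    (hω : ω ^ 2 + ω + 1 = 0) (hθ : theta ((q : ℂ) ^ 49) ω ≠ 0)
    (hdet : eulerDet (chi q 2 / chi q 1) (chi q 3 / chi q 2) (chi q 1 / chi q 3) ≠ 0)
    {i : ℕ} (hi : i < 3) :
    HasSum (fun n => if 7 ∣ n + 2 then (rankDefect i n : ℂ) * (q : ℂ) ^ n else 0) 0 := by
  have hq0 := ofReal_ne_zero_of_pos hq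
  have hi' : (i : ℤ) = 0 ∨ (i : ℤ) = 1 ∨ (i : ℤ) = 2 := by omega
  have hodd : ¬ (7 : ℤ) ∣ 2 * i + 1 ∧ ¬ (7 : ℤ) ∣ 2 * (2 * i + 1) ∧ ¬ (7 : ℤ) ∣ 3 * (2 * i + 1) := by
    omega
  set X := chi q (2 * i + 1) with hX
  set Y := chi q (2 * (2 * i + 1)) with hY
  set Z := chi q (3 * (2 * i + 1)) with hZ
  have hX0 : X ≠ 0 := hχ _ hodd.1
  have hY0 : Y ≠ 0 := hχ _ hodd.2.1
  have hZ0 : Z ≠ 0 := hχ _ hodd.2.2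
  have hdet' : eulerDet (Y / X) (Z / Y) (X / Z) ≠ 0 := by
    have e5 : chi q 5 = chi q 2 := chi_mul_five hq0 (a := 1) odd_one
    have e6 : chi q 6 = chi q 1 := chi_mul_six hq0 (a := 1) odd_one
    have e9 : chi q 9 = -chi q 2 := chi_add_seven hq0 2
    have e10 : chi q 10 = -chi q 3 := chi_add_seven hq0 3
    have e15 : chi q 15 = chi q 1 := by
      rw [← neg_neg (chi q 1), ← chi_add_seven hq0 1, ← chi_add_seven hq0]
      norm_num
    rcases hi' with h | h | h
    · simp only [hX, hY, hZ, h]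
      norm_num [hdet]
    · rw [← eulerDet_rotate] at hdet
      simp only [hX, hY, hZ, h]
      norm_num [e6, e9]
      simpa [neg_div, div_neg] using hdet
    · rw [← eulerDet_rotate, ← eulerDet_rotate] at hdet
      simp only [hX, hY, hZ, h]
      norm_num [e5, e10, e15]
      simpa [neg_div, div_neg] using hdet
  have hK : Z ^ 3 * X - Y ^ 3 * Z + X ^ 3 * Y = 0 :=
    chi_klein_mul hq (by linarith) hχ (by omega)
  obtain ⟨α, γ, hαγ⟩ := exists_rank_dissection hq (by linarith) hχ hθ' hi'
  set K := (q : ℂ) ^ 2 * cubicTheta (q ^ 49) 1 with hKdef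
  set ζ := Complex.exp (2 * Real.pi * Complex.I / (7 : ℕ)) with hζdef
  have hζ : IsPrimitiveRoot ζ 7 := Complex.isPrimitiveRoot_exp 7 (by norm_num)
  set ξ := ζ ^ (5 * (2 * (i : ℤ) + 1) ^ 2) with hξdef
  have hξ : IsPrimitiveRoot ξ 7 := hζ.zpow_of_gcd_eq_one _ (by
    rcases hi' with h | h | h <;> rw [h] <;> decide)
  have ht (j : ℕ) : (ζ ^ j) ^ 7 = 1 := by rw [pow_right_comm, hζ.pow_eq_one, one_pow]
  have hτ (j : ℕ) : (ζ ^ j) ^ (5 * (2 * (i : ℤ) + 1) ^ 2) = ξ ^ j := by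
    rw [hξdef, ← zpow_natCast, ← zpow_natCast, zpow_comm]
  have hx0 (j : ℕ) : ζ ^ j * q ≠ 0 := mul_ne_zero (pow_ne_zero _ (hζ.ne_zero (by norm_num))) hq0
  have hx1 (j : ℕ) : ‖ζ ^ j * q‖ < 1 / 4 := by
    rw [norm_mul, norm_pow, hζ.norm'_eq_one (by norm_num), one_pow, one_mul, Complex.norm_real,
      Real.norm_of_nonneg hq.le]
    exact hq1
  have hR (j : ℕ) : K * ((ζ ^ j) ^ 2 * (partitionGF (ζ ^ j * q) *
      (3 - i + 7 * rankSeries i (ζ ^ j * q)))) =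
      α * (ξ ^ j) ^ 6 + γ * (rankPoly X Y Z (ξ ^ j) / eulerPoly X Y Z (ξ ^ j)) := by
    have h1 := partitionGF_mul_eulerSeries (hx1 j)
    rw [eulerSeries_mul_root_eq hq (by linarith) hχ hω hθ (ht j), ← eulerPoly_chi_mul hq0 (ht j) hi',
      ← hX, ← hY, ← hZ, hτ, ← hKdef] at h1
    have h2 := hαγ _ (ht j)
    rw [← rankSeries_mul_root hq (by linarith) (ht j), hτ, Int.cast_natCast] at h2
    have hE := eulerPoly_ne_zero hX0 hY0 hZ0 hdet' (τ := ξ ^ j)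
      (by rw [pow_right_comm, hξ.pow_eq_one, one_pow])
    rw [h2]
    field_simp
    linear_combination (α * (ξ ^ j) ^ 6 * eulerPoly X Y Z (ξ ^ j) + γ * rankPoly X Y Z (ξ ^ j)) * h1
  have hK0 : K ≠ 0 := by
    intro h
    have h1 := partitionGF_mul_eulerSeries (hx1 0)
    rw [eulerSeries_mul_root_eq hq (by linarith) hχ hω hθ (ht 0), ← hKdef, h] at h1
    simp at h1
  have hsum : ∑ j ∈ Finset.range 7, (ζ ^ j) ^ 2 * (partitionGF (ζ ^ j * q) *
      (3 - i + 7 * rankSeries i (ζ ^ j * q))) = 0 := by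
    refine (mul_eq_zero_iff_left hK0).mp ?_
    rw [Finset.mul_sum, Finset.sum_congr rfl fun j _ => hR j, Finset.sum_add_distrib,
      ← Finset.mul_sum, ← Finset.mul_sum, sum_pow_primitiveRoot hξ,
      sum_rankPoly_div_eulerPoly hX0 hY0 hZ0 hdet' hK hξ]
    norm_num
  have h := hasSum_sum fun j (_ : j ∈ Finset.range 7) =>
    ((hasSum_rankDefect hi (hx0 j) (hx1 j)).mul_left ((ζ ^ j) ^ 2)).mul_left (7⁻¹ : ℂ)
  rw [← Finset.mul_sum, hsum, mul_zero] at h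
  refine h.congr_fun fun n => ?_
  have h1 (j : ℕ) : 7⁻¹ * ((ζ ^ j) ^ 2 * ((rankDefect i n : ℂ) * (ζ ^ j * q) ^ n)) =
      7⁻¹ * (rankDefect i n * (q : ℂ) ^ n) * (ζ ^ j) ^ (n + 2) := by ring
  simp only [h1, ← Finset.mul_sum, sum_pow_primitiveRoot hζ]
  split_ifs <;> ring

open Filter Topology

theorem tendsto_tsum_mul_zpow {c : ℤ → ℂ} {e : ℤ → ℤ} (he : ∀ n, 0 ≤ e n)
    (hs : Summable fun n => ‖c n‖ * (1 / 2 : ℝ) ^ e n) :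
    Tendsto (fun q : ℝ => ∑' n, c n * (q : ℂ) ^ e n) (𝓝[>] 0) (𝓝 (∑' n, c n * 0 ^ e n)) := by
  refine tendsto_tsum_of_dominated_convergence hs (fun n => ?_) ?_
  · refine Tendsto.const_mul _ ?_
    obtain ⟨m, hm⟩ := Int.eq_ofNat_of_zero_le (he n)
    simp only [hm, zpow_natCast]
    have : Continuous fun q : ℝ => (q : ℂ) ^ m := by fun_prop
    simpa using (this.tendsto 0).mono_left nhdsWithin_le_nhds
  · filter_upwards [Ioo_mem_nhdsGT (show (0 : ℝ) < 1 / 2 by norm_num)] with q hq n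
    rw [norm_mul, norm_zpow, Complex.norm_real, Real.norm_of_nonneg hq.1.le]
    gcongr
    exact zpow_le_zpow_left₀ (he n) hq.1.le hq.2.le

theorem exponent_pos {r n : ℤ} (hr : 0 < r) (hr7 : r < 7) (hn : n ≠ 0) :
    0 < 49 * tri n + 7 * r * n := by
  have h := two_mul_tri n
  rcases lt_or_gt_of_ne hn with h0 | h0
  · nlinarith [mul_pos_of_neg_of_neg h0 (show 7 * n - 7 + 2 * r < 0 by omega)]
  · nlinarith [mul_pos h0 (show 0 < 7 * n - 7 + 2 * r by omega)]

theorem tri_pos {n : ℤ} (h0 : n ≠ 0) (h1 : n ≠ 1) : 0 < tri n := by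
  have h := two_mul_tri n
  rcases lt_or_gt_of_ne h0 with h0 | h0
  · nlinarith
  · nlinarith [mul_pos h0 (show 0 < n - 1 by omega)]

theorem tri_nonneg (n : ℤ) : 0 ≤ tri n := by
  by_cases h0 : n = 0
  · simp [h0, tri]
  by_cases h1 : n = 1
  · simp [h1, tri]
  exact (tri_pos h0 h1).le

theorem tendsto_theta_zpow {r : ℤ} (hr : 0 < r) (hr7 : r < 7) :
    Tendsto (fun q : ℝ => theta ((q : ℂ) ^ 49) (q ^ (7 * r))) (𝓝[>] 0) (𝓝 1) := by
  have h := tendsto_tsum_mul_zpow (c := fun n => (-1) ^ n) (e := fun n => 49 * tri n + 7 * r * n)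
    (fun n => by
      rcases eq_or_ne n 0 with rfl | hn
      · simp [tri]
      · exact (exponent_pos hr hr7 hn).le) (by
      refine (summable_zpow_tri (ρ := (1 / 2) ^ 49) (r := (1 / 2) ^ (7 * r)) (by positivity)
        (by norm_num) (by positivity)).congr fun n => ?_
      rw [norm_zpow, norm_neg, norm_one, one_zpow, one_mul, zpow_add₀ (by norm_num), zpow_mul _ 49,
        zpow_mul _ (7 * r)]
      norm_cast)
  rw [tsum_eq_single 0 fun n hn => by rw [zero_zpow _ (exponent_pos hr hr7 hn).ne', mul_zero]] at h
  simp only [tri, zero_mul, mul_zero, add_zero, zpow_zero, mul_one, Int.zero_ediv] at h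
  refine h.congr' ?_
  filter_upwards [self_mem_nhdsWithin] with q hq
  have hq0 := ofReal_ne_zero_of_pos hq
  refine tsum_congr fun n => ?_
  rw [thetaTerm, zpow_add₀ hq0, zpow_mul, zpow_mul _ (7 * r), ← mul_assoc]
  norm_cast

theorem tendsto_theta {w : ℂ} (hw : ‖w‖ = 1) :
    Tendsto (fun q : ℝ => theta ((q : ℂ) ^ 49) w) (𝓝[>] 0) (𝓝 (1 - w)) := by
  have h := tendsto_tsum_mul_zpow (c := fun n => (-1) ^ n * w ^ n) (e := fun n => 49 * tri n)
    (fun n => by have := tri_nonneg n; omega) (by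
      refine (summable_zpow_tri (ρ := (1 / 2) ^ 49) (r := 1) (by positivity)
        (by norm_num) (by positivity)).congr fun n => ?_
      rw [norm_mul, norm_zpow, norm_zpow, norm_neg, norm_one, one_zpow, one_mul, hw, one_zpow,
        one_mul, zpow_mul, mul_one]
      norm_cast)
  rw [tsum_eq_sum (s := {0, 1}) fun n hn => by
    simp only [Finset.mem_insert, Finset.mem_singleton, not_or] at hn
    have := tri_pos hn.1 hn.2
    rw [zero_zpow _ (by omega), mul_zero]] at h
  have e : ∑ n ∈ ({0, 1} : Finset ℤ), (-1) ^ n * w ^ n * 0 ^ (49 * tri n) = 1 - w := by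
    simp [tri, sub_eq_add_neg]
  rw [e] at h
  refine h.congr fun q => tsum_congr fun n => ?_
  rw [thetaTerm, zpow_mul]
  norm_cast
  ring

theorem hasSum_deriv_theta_one {p : ℂ} (hp : p ≠ 0) (hp1 : ‖p‖ < 1) :
    HasSum (fun n : ℤ => (-1) ^ n * p ^ tri n * n) (deriv (theta p) 1) := by
  have hρ := norm_pos_iff.mpr hp
  have h := Complex.hasSum_deriv_of_summable_norm (F := fun n z => thetaTerm p z n) (z := 1)
    (U := {z | 1 / 2 < ‖z‖ ∧ ‖z‖ < 2})
    ((summable_zpow_tri hρ hp1 one_half_pos).add (summable_zpow_tri hρ hp1 two_pos))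
    (fun n z hz => ?_) ?_ (fun n z hz => ?_) (by norm_num)
  · refine h.congr_fun fun n => ?_
    simp [thetaTerm]
  · have : z ≠ 0 := norm_pos_iff.mp (one_half_pos.trans hz.1)
    simp only [thetaTerm]
    exact ((differentiableAt_zpow.mpr (Or.inl this)).const_mul _).differentiableWithinAt
  · exact (isOpen_lt continuous_const continuous_norm).inter
      (isOpen_lt continuous_norm continuous_const)
  · have h0 : 0 < ‖z‖ := one_half_pos.trans hz.1
    rw [norm_thetaTerm, ← mul_add]
    gcongr
    have e1 : (0 : ℝ) ≤ (1 / 2) ^ n := by positivity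
    have e2 : (0 : ℝ) ≤ 2 ^ n := by positivity
    rcases le_total 0 n with hn | hn
    · have := zpow_le_zpow_left₀ hn h0.le hz.2.le
      linarith
    · have : ‖z‖ ^ n ≤ (1 / 2) ^ n := by
        obtain ⟨m, rfl⟩ : ∃ m, n = -m := ⟨-n, by ring⟩
        rw [zpow_neg, zpow_neg]
        exact inv_anti₀ (by positivity) (zpow_le_zpow_left₀ (by omega) one_half_pos.le hz.1.le)
      linarith

theorem abs_le_two_zpow_add (n : ℤ) : |(n : ℝ)| ≤ 2 ^ n + (1 / 2) ^ n := by
  have key (m : ℕ) : (m : ℝ) ≤ 2 ^ m := by exact_mod_cast Nat.lt_two_pow_self.le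
  obtain ⟨m, rfl | rfl⟩ := n.eq_nat_or_neg
  · have := key m
    have : (0 : ℝ) ≤ (1 / 2) ^ (m : ℤ) := by positivity
    simp only [Int.cast_natCast, Nat.abs_cast, zpow_natCast] at *
    linarith
  · have := key m
    have : (0 : ℝ) ≤ (1 / 2) ^ (m : ℤ) := by positivity
    simp only [Int.cast_neg, Int.cast_natCast, abs_neg, Nat.abs_cast, zpow_neg, zpow_natCast,
      one_div, inv_pow, inv_inv] at *
    linarith

theorem tendsto_deriv_theta_one :
    Tendsto (fun q : ℝ => deriv (theta ((q : ℂ) ^ 49)) 1) (𝓝[>] 0) (𝓝 (-1)) := by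
  have h := tendsto_tsum_mul_zpow (c := fun n => (-1) ^ n * n) (e := fun n => 49 * tri n)
    (fun n => by have := tri_nonneg n; omega) (by
      refine Summable.of_nonneg_of_le (fun n => by positivity) (fun n => ?_)
        ((summable_zpow_tri (ρ := (1 / 2) ^ 49) (r := 2) (by positivity) (by norm_num) two_pos).add
          (summable_zpow_tri (ρ := (1 / 2) ^ 49) (r := 1 / 2) (by positivity) (by norm_num)
            one_half_pos))
      rw [norm_mul, norm_zpow, norm_neg, norm_one, one_zpow, one_mul, Complex.norm_intCast,
        zpow_mul, ← mul_add, mul_comm]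
      norm_cast
      gcongr
      exact_mod_cast abs_le_two_zpow_add n)
  rw [tsum_eq_single 1 fun n hn => by
    rcases eq_or_ne n 0 with rfl | h0
    · simp
    · have := tri_pos h0 hn
      rw [zero_zpow _ (by omega), mul_zero]] at h
  have e : (-1 : ℂ) ^ (1 : ℤ) * ((1 : ℤ) : ℂ) * 0 ^ (49 * tri 1) = -1 := by simp [tri]
  rw [e] at h
  refine h.congr' ?_
  filter_upwards [Ioo_mem_nhdsGT (show (0 : ℝ) < 1 by norm_num)] with q hq
  rw [← (hasSum_deriv_theta_one (pow_ne_zero 49 (ofReal_ne_zero_of_pos hq.1)) (by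
    rw [norm_pow]
    exact pow_lt_one₀ (norm_nonneg _) (norm_ofReal_lt_one hq.1 hq.2) (by norm_num))).tsum_eq]
  refine tsum_congr fun n => ?_
  rw [zpow_mul]
  norm_cast
  ring

theorem chi_ne_zero_of_residues {q : ℂ} (hq : q ≠ 0)
    (h : ∀ r ∈ Finset.Ioo (0 : ℤ) 7, theta (q ^ 49) (q ^ (7 * r)) ≠ 0) {k : ℤ} (hk : ¬ 7 ∣ k) :
    chi q k ≠ 0 := by
  rw [← Int.emod_add_mul_ediv k 7, chi_add_seven_mul hq]
  exact mul_ne_zero (zpow_ne_zero _ (by norm_num))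
    (mul_ne_zero (zpow_ne_zero _ hq) (h _ (by rw [Finset.mem_Ioo]; omega)))

theorem eventually_eulerDet_ne_zero : ∀ᶠ q : ℝ in 𝓝[>] 0,
    eulerDet (chi q 2 / chi q 1) (chi q 3 / chi q 2) (chi q 1 / chi q 3) ≠ 0 := by
  let f (q x y z : ℂ) : ℂ := (y / x) ^ 7 + 7 * (y / x) ^ 5 * (x / z) * q ^ 7 +
    14 * (y / x) ^ 3 * (x / z) ^ 2 * q ^ 14 - 14 * (y / x) ^ 2 * (z / y) ^ 3 * q ^ 7 -
    7 * (y / x) * (z / y) ^ 5 * q ^ 7 - (z / y) ^ 7 * q ^ 7 + 14 * (z / y) ^ 2 * (x / z) ^ 3 * q ^ 21 -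
    7 * (z / y) * (x / z) ^ 5 * q ^ 28 + (x / z) ^ 7 * q ^ 35 - 8 * q ^ 14
  have hq : Tendsto (fun q : ℝ => (q : ℂ)) (𝓝[>] 0) (𝓝 0) := by
    simpa using (Complex.continuous_ofReal.tendsto 0).mono_left nhdsWithin_le_nhds
  have h1 := tendsto_theta_zpow (r := 1) (by norm_num) (by norm_num)
  have h2 := tendsto_theta_zpow (r := 2) (by norm_num) (by norm_num)
  have h3 := tendsto_theta_zpow (r := 3) (by norm_num) (by norm_num)
  have hf : ContinuousAt (fun v : ℂ × ℂ × ℂ × ℂ => f v.1 v.2.1 v.2.2.1 v.2.2.2) (0, 1, 1, 1) := by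
    simp only [f]
    fun_prop (disch := norm_num)
  have h := hf.tendsto.comp (hq.prodMk_nhds (h1.prodMk_nhds (h2.prodMk_nhds h3)))
  filter_upwards [h.eventually_ne (show _ ≠ (0 : ℂ) by norm_num [f]), self_mem_nhdsWithin,
    h1.eventually_ne one_ne_zero, h2.eventually_ne one_ne_zero, h3.eventually_ne one_ne_zero]
    with q hne hq n1 n2 n3 h0
  have hq0 := ofReal_ne_zero_of_pos hq
  apply hne
  have t1 : tri (1 - 3) = 3 := by decide
  have t2 : tri (2 - 3) = 1 := by decide
  have t3 : tri (3 - 3) = 0 := by decide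
  simp only [chi, t1, t2, t3, zpow_zero, one_mul, zpow_one] at h0
  simp only [Function.comp_apply, f]
  generalize theta ((q : ℂ) ^ 49) (q ^ (7 * (1 : ℤ))) = x at *
  generalize theta ((q : ℂ) ^ 49) (q ^ (7 * (2 : ℤ))) = y at *
  generalize theta ((q : ℂ) ^ 49) (q ^ (7 * (3 : ℤ))) = z at *
  have e1 : (q : ℂ) * y / (q ^ (3 : ℤ) * x) = y / x / q ^ 2 := by
    rw [zpow_ofNat]
    field_simp
  have e2 : z / ((q : ℂ) * y) = z / y / q := by field_simp
  have e3 : (q : ℂ) ^ (3 : ℤ) * x / z = x / z * q ^ 3 := by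
    rw [zpow_ofNat]
    field_simp
  rw [e1, e2, e3, eulerDet] at h0
  generalize y / x = a at *
  generalize z / y = b at *
  generalize x / z = c at *
  field_simp at h0
  linear_combination h0

theorem eventually_rankDefect_eq_zero {i : ℕ} (hi : i < 3) : ∀ᶠ q : ℝ in 𝓝[>] 0,
    HasSum (fun n => if 7 ∣ n + 2 then (rankDefect i n : ℂ) * (q : ℂ) ^ n else 0) 0 := by
  have hω := Complex.isPrimitiveRoot_exp 3 (by norm_num)
  set ω := Complex.exp (2 * Real.pi * Complex.I / (3 : ℕ))
  have hω' : ω ^ 2 + ω + 1 = 0 := by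
    have := hω.geom_sum_eq_zero (by norm_num)
    simp only [Finset.sum_range_succ, Finset.sum_range_zero] at this
    linear_combination this
  have hθ := (tendsto_theta (hω.norm'_eq_one (by norm_num))).eventually_ne
    (sub_ne_zero.mpr (hω.ne_one (by norm_num)).symm)
  have hχ : ∀ᶠ q : ℝ in 𝓝[>] 0, ∀ r ∈ Finset.Ioo (0 : ℤ) 7,
      theta ((q : ℂ) ^ 49) (q ^ (7 * r)) ≠ 0 := by
    rw [eventually_all_finset]
    intro r hr
    rw [Finset.mem_Ioo] at hr
    exact (tendsto_theta_zpow hr.1 hr.2).eventually_ne one_ne_zero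
  filter_upwards [hθ, hχ, eventually_eulerDet_ne_zero,
    tendsto_deriv_theta_one.eventually_ne (neg_ne_zero.mpr one_ne_zero),
    Ioo_mem_nhdsGT (show (0 : ℝ) < 1 / 4 by norm_num)] with q h1 h2 h3 h4 hq
  exact tsum_rankDefect_eq_zero hq.1 hq.2
    (fun k hk => chi_ne_zero_of_residues (ofReal_ne_zero_of_pos hq.1) h2 hk) h4 hω' h1 h3 hi

open Filter Topology

theorem coeff_eq_zero_of_eventually_hasSum {b : ℕ → ℂ}
    (h : ∀ᶠ q : ℝ in 𝓝[>] 0, HasSum (fun n => b n * (q : ℂ) ^ n) 0) (n : ℕ) : b n = 0 := by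
  induction n using Nat.strong_induction_on with
  | _ n ih =>
    have h' : ∀ᶠ q : ℝ in 𝓝[>] 0, HasSum (fun k => b (k + n) * (q : ℂ) ^ k) 0 := by
      filter_upwards [h, self_mem_nhdsWithin] with q hs hq
      have hq0 := pow_ne_zero n (ofReal_ne_zero_of_pos hq)
      rw [← hasSum_nat_add_iff' n, Finset.sum_eq_zero fun m hm => by
        rw [ih m (Finset.mem_range.mp hm), zero_mul], sub_zero] at hs
      have := hs.mul_right ((q : ℂ) ^ n)⁻¹
      rw [zero_mul] at this
      refine this.congr_fun fun k => ?_
      rw [pow_add]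
      field_simp
    obtain ⟨ρ, hs, hρ⟩ := (h'.and self_mem_nhdsWithin).exists
    have hlim : Tendsto (fun q : ℝ => ∑' k, b (k + n) * (q : ℂ) ^ k) (𝓝[>] 0)
        (𝓝 (∑' k, b (k + n) * 0 ^ k)) := by
      refine tendsto_tsum_of_dominated_convergence hs.summable.norm (fun k => ?_) ?_
      · have : Continuous fun q : ℝ => b (k + n) * (q : ℂ) ^ k := by fun_prop
        simpa using (this.tendsto 0).mono_left nhdsWithin_le_nhds
      · filter_upwards [Ioo_mem_nhdsGT hρ] with q hq k
        rw [norm_mul, norm_mul, norm_pow, norm_pow, Complex.norm_real, Complex.norm_real,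
          Real.norm_of_nonneg hq.1.le, Real.norm_of_nonneg (le_of_lt hρ)]
        gcongr
        · exact hq.1.le
        · exact hq.2.le
    rw [tsum_eq_single 0 fun k hk => by rw [zero_pow hk, mul_zero], zero_add, pow_zero,
      mul_one] at hlim
    exact tendsto_nhds_unique hlim
      (tendsto_const_nhds.congr' (h'.mono fun q hq => hq.tsum_eq.symm))

theorem rankDefect_eq_zero {i : ℕ} (hi : i < 3) (n : ℕ) : rankDefect i (7 * n + 5) = 0 := by
  have h := coeff_eq_zero_of_eventually_hasSum
    (b := fun n => if 7 ∣ n + 2 then (rankDefect i n : ℂ) else 0)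
    ((eventually_rankDefect_eq_zero hi).mono fun q hq => hq.congr_fun fun n => by
      split_ifs <;> simp) (7 * n + 5)
  rw [if_pos (by omega)] at h
  exact_mod_cast h

end RankSeven

/-- Dyson's conjecture mod 7 (Atkin–Swinnerton-Dyer): for `0 ≤ k ≤ 6`,
`N(k,7,7n+5) = p(7n+5)/7`, where `N(k,t,m)` counts partitions of `m` whose rank is
congruent to `k` modulo `t`. -/
theorem rank_equidistribution_mod_seven (n : ℕ) (k : ℤ) (hk₀ : 0 ≤ k) (hk₁ : k ≤ 6) :
    (Nat.card {π : Nat.Partition (7 * n + 5) // π.rank ≡ k [ZMOD 7]} : ℚ) =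
      (Nat.card (Nat.Partition (7 * n + 5)) : ℚ) / 7 := by
  have h : ∀ i : ℕ, i < 3 → (3 - i : ℤ) * Fintype.card (Nat.Partition (7 * n + 5)) =
      7 * (RankSeven.sumRankGe (i + 1) (7 * n + 5) - RankSeven.sumRankGe (7 - i) (7 * n + 5)) :=
    fun i hi => sub_eq_zero.mp (RankSeven.rankDefect_eq_zero hi n)
  lift k to ℕ using hk₀
  rw [Nat.card_eq_fintype_card, Nat.card_eq_fintype_card, Fintype.card_subtype,
    ← RankSeven.card_rank_modEq_of_sumRankGe h (by omega : k < 7)]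
  push_cast
  ring
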